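/- arXiv:1409.4150 — 5 statements merged into one kernel-verified Lean document; each statement's English description precedes it below -/
import Mathlib

section
/- Grand bundling is optimal for shifted uniform items: For every integer n ≥ 1 there exists c₀ ≥ 0 such that for all c ≥ c₀ the following holds on the type space X = [c, c+1]ⁿ: there exists a price p such that for every IC and IR mechanism (𝒫, 𝒯) on X with 𝒯 Lebesgue-integrable, ∫_X 𝒯(x) dx ≤ ∫_X 𝒯_p(x) dx, where (𝒫_p, 𝒯_p) is the grand-bundling mechanism at price p. That is, a take-it-or-leave-it offer of the grand bundle maximizes expected revenue when the n item values are independent and uniform on [c, c+1]. -/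
open MeasureTheory Set

/-- The box `∏ i, [a i, b i]` in `ℝⁿ`. -/
def box {n : ℕ} (a b : Fin n → ℝ) : Set (Fin n → ℝ) := {x | ∀ i, x i ∈ Set.Icc (a i) (b i)}

/-- Dot product on `Fin n → ℝ`. -/
noncomputable def dotp {n : ℕ} (p x : Fin n → ℝ) : ℝ := ∑ i, p i * x i

/-!
Write types as `c + y` with `y` in the unit cube. Integration by parts in each coordinate makes the
revenue a linear functional of the indirect utility `u`, so bundling at an excess price `p` has to
beat every competing `u` there. For `n ≥ 2` and large `c` a small `p` satisfies the first-order
condition that the excluded types have mass `1 / n` in every direction. Incentive compatibility says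
that `f = total - p - u` is increasing, and the revenue difference is at least the sum over `i` of
the mean of `c * gain i + (exclusionWeight i - 1 / n) * f|_{y i = 1}`, where `gain i` is the
increase of `f` along lines in direction `i`. By the first-order condition the second summand
compares two averages of `f` over an upper face with the same total weight. Redrawing the
coordinates one at a time turns one average into the other, at a cost controlled by the gains and
small enough, since `p` is small, to be absorbed by the factor `c` of the first summand.
-/

section Development

open Function
open scoped unitInterval Topology

/-- Bounded measurable real functions. Unlike integrability or `MemLp · ∞`, this is preserved by
products and by composition with every measurable map, such as the projection onto a null face of
a cube. -/
structure BoundedMeasurable {Ω : Type*} [MeasurableSpace Ω] (g : Ω → ℝ) : Prop where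
  measurable : Measurable g
  bounded : ∃ K, ∀ x, |g x| ≤ K

namespace BoundedMeasurable

variable {Ω Ω' : Type*} [MeasurableSpace Ω] [MeasurableSpace Ω'] {g h : Ω → ℝ}

lemma of_mem_Icc (hg : Measurable g) {a b : ℝ} (hab : ∀ x, g x ∈ Icc a b) :
    BoundedMeasurable g :=
  ⟨hg, max |a| |b|, fun x => abs_le_max_abs_abs (hab x).1 (hab x).2⟩

lemma const (k : ℝ) : BoundedMeasurable fun _ : Ω => k :=
  ⟨measurable_const, |k|, fun _ => le_rfl⟩

lemma comp (hg : BoundedMeasurable g) {φ : Ω' → Ω} (hφ : Measurable φ) :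
    BoundedMeasurable fun x => g (φ x) :=
  ⟨hg.measurable.comp hφ, hg.bounded.imp fun _ hK x => hK (φ x)⟩

lemma add (hg : BoundedMeasurable g) (hh : BoundedMeasurable h) :
    BoundedMeasurable fun x => g x + h x := by
  obtain ⟨K, hK⟩ := hg.bounded
  obtain ⟨M, hM⟩ := hh.bounded
  exact ⟨hg.measurable.add hh.measurable, K + M,
    fun x => (abs_add_le _ _).trans (add_le_add (hK x) (hM x))⟩

lemma mul (hg : BoundedMeasurable g) (hh : BoundedMeasurable h) :
    BoundedMeasurable fun x => g x * h x := by
  obtain ⟨K, hK⟩ := hg.bounded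
  obtain ⟨M, hM⟩ := hh.bounded
  refine ⟨hg.measurable.mul hh.measurable, K * M, fun x => ?_⟩
  rw [abs_mul]
  exact mul_le_mul (hK x) (hM x) (abs_nonneg _) ((abs_nonneg _).trans (hK x))

lemma const_mul (k : ℝ) (hg : BoundedMeasurable g) : BoundedMeasurable fun x => k * g x :=
  (const k).mul hg

lemma sub (hg : BoundedMeasurable g) (hh : BoundedMeasurable h) :
    BoundedMeasurable fun x => g x - h x := by
  simpa only [neg_one_mul, ← sub_eq_add_neg] using hg.add (hh.const_mul (-1))

lemma ite {P : Ω → Prop} [DecidablePred P] (hP : MeasurableSet {x | P x})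
    (hg : BoundedMeasurable g) (hh : BoundedMeasurable h) :
    BoundedMeasurable fun x => if P x then g x else h x := by
  obtain ⟨K, hK⟩ := hg.bounded
  obtain ⟨M, hM⟩ := hh.bounded
  refine ⟨hg.measurable.ite hP hh.measurable, max K M, fun x => ?_⟩
  split_ifs
  · exact le_max_of_le_left (hK x)
  · exact le_max_of_le_right (hM x)

lemma sum {κ : Type*} (s : Finset κ) {G : κ → Ω → ℝ} (hG : ∀ k, BoundedMeasurable (G k)) :
    BoundedMeasurable fun x => ∑ k ∈ s, G k x := by
  classical
  induction s using Finset.induction_on with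
  | empty => simpa only [Finset.sum_empty] using const 0
  | insert k s hk ih => simpa only [Finset.sum_insert hk] using (hG k).add ih

lemma integrable (hg : BoundedMeasurable g) (μ : Measure Ω) [IsFiniteMeasure μ] :
    Integrable g μ := by
  obtain ⟨K, hK⟩ := hg.bounded
  exact .of_bound hg.measurable.aestronglyMeasurable K (.of_forall hK)

end BoundedMeasurable

section ProductSpace

variable {ι : Type*}

section Update

variable [Fintype ι] [DecidableEq ι] {X : ι → Type*} [∀ i, MeasureSpace (X i)]
  [∀ i, IsProbabilityMeasure (volume : Measure (X i))]

lemma measurePreserving_update (i : ι) :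
    MeasurePreserving fun q : (∀ j, X j) × X i => update q.1 i q.2 := by
  refine ⟨measurable_update', (Measure.pi_eq fun s hs => ?_).symm⟩
  have hpre : (fun q : (∀ j, X j) × X i => update q.1 i q.2) ⁻¹' univ.pi s
      = univ.pi (update s i univ) ×ˢ s i := by
    ext q
    simp only [mem_preimage, mem_univ_pi, mem_prod]
    rw [forall_update_iff q.1 fun j x => x ∈ s j,
      forall_update_iff s fun j (t : Set (X j)) => q.1 j ∈ t]
    simp only [mem_univ, true_and, and_comm]
  rw [Measure.map_apply measurable_update' (.univ_pi hs), hpre, Measure.volume_eq_prod,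
    Measure.prod_prod, volume_pi_pi, ← Finset.mul_prod_erase _ _ (Finset.mem_univ i), update_self,
    measure_univ, one_mul, ← Finset.prod_erase_mul _ _ (Finset.mem_univ i)]
  congr 1
  exact Finset.prod_congr rfl fun j hj => by rw [update_of_ne (Finset.ne_of_mem_erase hj)]

lemma integral_eq_integral_integral_update (i : ι) {G : (∀ j, X j) → ℝ} (hG : Integrable G) :
    ∫ y, G y = ∫ y, ∫ t, G (update y i t) := by
  have hmp := measurePreserving_update (X := X) i
  calc ∫ y, G y = ∫ q : (∀ j, X j) × X i, G (update q.1 i q.2) := by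
        rw [← integral_map hmp.aemeasurable (by rw [hmp.map_eq]; exact hG.aestronglyMeasurable),
          hmp.map_eq]
    _ = ∫ y, ∫ t, G (update y i t) := integral_prod _ (hmp.integrable_comp_of_integrable hG)

lemma ae_ne_of_injective_update {β : Type*} [MeasurableSpace β] [MeasurableSingletonClass β]
    {g : (∀ j, X j) → β} (hg : Measurable g) (i : ι)
    [NullSingletonClass (volume : Measure (X i))]
    (hinj : ∀ y, Injective fun t => g (update y i t)) (b : β) : ∀ᵐ y, g y ≠ b := by
  have hmp := measurePreserving_update (X := X) i
  have hs : MeasurableSet {y | g y = b} := hg (measurableSet_singleton b)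
  have hslice : ∀ y : ∀ j, X j, volume {t | g (update y i t) = b} = 0 := fun y =>
    Set.Subsingleton.measure_zero (fun s hs t ht => hinj y (hs.trans ht.symm)) volume
  suffices volume {y | g y = b} = 0 from measure_eq_zero_iff_ae_notMem.1 this
  rw [← hmp.measure_preimage hs.nullMeasurableSet, Measure.volume_eq_prod,
    Measure.measure_prod_null (hmp.measurable hs)]
  exact .of_forall hslice

end Update

section Exchange

variable [DecidableEq ι] {α : Type*}

/-- Exchange the coordinates in `S` between two points. For independent samples this preserves the
joint law, so the first component is a sample in which the coordinates in `S` are redrawn. -/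
def exchange (S : Finset ι) (w : (ι → α) × (ι → α)) : (ι → α) × (ι → α) :=
  (S.piecewise w.2 w.1, S.piecewise w.1 w.2)

lemma measurable_piecewise_prod [MeasurableSpace α] (S : Finset ι) :
    Measurable fun w : (ι → α) × (ι → α) => S.piecewise w.2 w.1 :=
  measurable_pi_lambda _ fun j => by
    by_cases hj : j ∈ S
    · simp only [S.piecewise_eq_of_mem _ _ hj]
      fun_prop
    · simp only [S.piecewise_eq_of_notMem _ _ hj]
      fun_prop

variable [Fintype ι] [MeasureSpace α] [IsProbabilityMeasure (volume : Measure α)]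

lemma measurePreserving_exchange (S : Finset ι) :
    MeasurePreserving (exchange S : (ι → α) × (ι → α) → (ι → α) × (ι → α)) := by
  have hpair := volume_measurePreserving_arrowProdEquivProdArrow α α ι
  have hswap : MeasurePreserving fun (w : ι → α × α) j => if j ∈ S then (w j).swap else w j := by
    refine volume_preserving_pi (f := fun j (z : α × α) => if j ∈ S then z.swap else z)
      fun j => ?_
    by_cases hj : j ∈ S
    · simp only [hj, if_true]
      exact Measure.measurePreserving_swap
    · simp only [hj, if_false]
      exact MeasurePreserving.id _
  convert (hpair.comp hswap).comp hpair.symm using 1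
  funext w
  ext j <;> by_cases hj : j ∈ S <;>
    simp [exchange, hj, MeasurableEquiv.arrowProdEquivProdArrow, Equiv.arrowProdEquivProdArrow]

lemma integral_piecewise_mul_eval {S : Finset ι} {j : ι} (hj : j ∉ S) {g : (ι → α) → ℝ}
    (hg : AEStronglyMeasurable g) {h : α → ℝ} (hh : AEStronglyMeasurable h) :
    ∫ w : (ι → α) × (ι → α), g (S.piecewise w.2 w.1) * h (w.2 j)
      = (∫ y, g y) * ∫ t, h t := by
  have hmp := measurePreserving_exchange (α := α) S
  have hhj : AEStronglyMeasurable fun y : ι → α => h (y j) :=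
    hh.comp_measurePreserving (measurePreserving_eval _ j)
  have hgh : AEStronglyMeasurable fun w : (ι → α) × (ι → α) => g w.1 * h (w.2 j) :=
    hg.comp_fst.mul hhj.comp_snd
  calc ∫ w : (ι → α) × (ι → α), g (S.piecewise w.2 w.1) * h (w.2 j)
      = ∫ w : (ι → α) × (ι → α), g (exchange S w).1 * h ((exchange S w).2 j) := by
        simp only [exchange, Finset.piecewise_eq_of_notMem _ _ _ hj]
    _ = ∫ w : (ι → α) × (ι → α), g w.1 * h (w.2 j) := by
        rw [← integral_map hmp.aemeasurable (f := fun w => g w.1 * h (w.2 j))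
          (by rwa [hmp.map_eq]), hmp.map_eq]
    _ = (∫ y, g y) * ∫ y : ι → α, h (y j) := integral_prod_mul g fun y : ι → α => h (y j)
    _ = (∫ y, g y) * ∫ t, h t := by rw [volume_pi, integral_comp_eval hh]

end Exchange

lemma measureReal_Ici_mul_integral_le [Fintype ι] {α : Type*} [LinearOrder α] [TopologicalSpace α]
    [OrderClosedTopology α] [MeasureSpace α] [OpensMeasurableSpace α]
    [IsProbabilityMeasure (volume : Measure α)] {f : (ι → α) → ℝ} (hf : Monotone f)
    (hfb : BoundedMeasurable f) (a : α) (i : ι) :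
    volume.real (Ici a) * ∫ y, f y ≤ ∫ y, (if a ≤ y i then 1 else 0) * f y := by
  classical
  set m := volume.real (Ici a)
  set χ : α → ℝ := fun t => if a ≤ t then 1 else 0
  have hm : m ∈ Icc 0 1 := ⟨measureReal_nonneg, measureReal_le_one⟩
  have hχ : BoundedMeasurable χ := .ite measurableSet_Ici (.const 1) (.const 0)
  have hχm : ∫ t, χ t = m :=
    calc ∫ t, χ t = ∫ t, (Ici a).indicator 1 t := by
          simp only [χ, indicator_apply, mem_Ici, Pi.one_apply]
      _ = m := integral_indicator_one measurableSet_Ici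
  have hχi : BoundedMeasurable fun y : ι → α => χ (y i) := hχ.comp (measurable_pi_apply i)
  have hslice : BoundedMeasurable fun y => (χ (y i) - m) * f (update y i a) :=
    (hχi.sub (.const m)).mul (hfb.comp measurable_update_left)
  have hslice0 : ∫ y, (χ (y i) - m) * f (update y i a) = 0 := by
    rw [integral_eq_integral_integral_update i (hslice.integrable _)]
    simp only [update_self, update_idem, integral_mul_const,
      integral_sub (hχ.integrable _) (integrable_const m), hχm, integral_const, probReal_univ,
      one_smul, sub_self, zero_mul]
  -- `χ - m` changes sign at `a`, where the averaged-out comparison function agrees with `f`.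
  have hpt : ∀ y, (χ (y i) - m) * f (update y i a) ≤ (χ (y i) - m) * f y := fun y => by
    by_cases hy : a ≤ y i
    · have hfy : f (update y i a) ≤ f y := hf (update_le_self_iff.2 hy)
      simpa only [χ, if_pos hy] using mul_le_mul_of_nonneg_left hfy (sub_nonneg.2 hm.2)
    · have hfy : f y ≤ f (update y i a) := hf (le_update_self_iff.2 (not_le.1 hy).le)
      simp only [χ, if_neg hy, zero_sub, neg_mul]
      exact neg_le_neg (mul_le_mul_of_nonneg_left hfy hm.1)
  have hχf := (hχi.mul hfb).integrable volume
  have hle := integral_mono (hslice.integrable _)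
    (((hχi.sub (.const m)).mul hfb).integrable volume) hpt
  rw [hslice0] at hle
  simp only [sub_mul] at hle
  rw [integral_sub hχf ((hfb.const_mul m).integrable _), integral_const_mul] at hle
  linarith

end ProductSpace

section UnitInterval

/-- `q x` is a subgradient of `g` at `x` relative to `s`, for every `x ∈ s`. -/
def IsSubgradientOn (g q : ℝ → ℝ) (s : Set ℝ) : Prop :=
  ∀ x ∈ s, ∀ y ∈ s, g x + (y - x) * q x ≤ g y

namespace IsSubgradientOn

variable {g q : ℝ → ℝ} {s : Set ℝ} {a b x : ℝ}

lemma monotoneOn (h : IsSubgradientOn g q s) : MonotoneOn q s := fun x hx y hy hxy => by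
  rcases hxy.eq_or_lt with rfl | hlt
  · exact le_rfl
  · have hxy' := h x hx y hy
    have hyx' := h y hy x hx
    exact le_of_mul_le_mul_left (by linarith) (sub_pos.2 hlt)

lemma continuousOn (h : IsSubgradientOn g q (Icc a b)) : ContinuousOn g (Icc a b) := by
  rcases lt_or_ge b a with hab | hab
  · simp only [Icc_eq_empty_of_lt hab, continuousOn_empty]
  set K := max |q a| |q b|
  have hK : ∀ x ∈ Icc a b, |q x| ≤ K := fun x hx => abs_le_max_abs_abs
    (h.monotoneOn (left_mem_Icc.2 hab) hx hx.1) (h.monotoneOn hx (right_mem_Icc.2 hab) hx.2)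
  refine (LipschitzOnWith.of_le_add_mul' K fun x hx y hy => ?_).continuousOn
  calc g x ≤ g y + (x - y) * q x := by linarith [h x hx y hy]
    _ ≤ g y + |(x - y) * q x| := by gcongr; exact le_abs_self _
    _ ≤ g y + K * dist x y := by
      rw [abs_mul, mul_comm K, Real.dist_eq]
      gcongr
      exact hK x hx

lemma hasDerivAt (h : IsSubgradientOn g q s) (hs : s ∈ 𝓝 x) (hq : ContinuousAt q x) :
    HasDerivAt g (q x) x := by
  rw [hasDerivAt_iff_isLittleO, Asymptotics.isLittleO_iff]
  intro ε hε
  filter_upwards [Metric.continuousAt_iff'.1 hq ε hε, hs] with y hy hys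
  have hxs := mem_of_mem_nhds hs
  have hlower : 0 ≤ g y - g x - (y - x) * q x := by linarith [h x hxs y hys]
  rw [Real.norm_eq_abs, Real.norm_eq_abs, smul_eq_mul, abs_of_nonneg hlower]
  calc g y - g x - (y - x) * q x ≤ (q y - q x) * (y - x) := by linarith [h y hys x hxs]
    _ ≤ |q y - q x| * |y - x| := (le_abs_self _).trans_eq (abs_mul _ _)
    _ ≤ ε * |y - x| := by
      rw [Real.dist_eq] at hy
      gcongr

lemma intervalIntegral_add_mul (h : IsSubgradientOn g q (Icc a b)) (hab : a ≤ b) (c : ℝ) :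
    ∫ t in a..b, (c + t) * q t = (c + b) * g b - (c + a) * g a - ∫ t in a..b, g t := by
  have hcont : ContinuousOn (fun t => (c + t) * g t) (Icc a b) :=
    (continuousOn_const.add continuousOn_id).mul h.continuousOn
  have hderiv : ∀ x ∈ Ioo a b \ {x ∈ Icc a b | ¬ContinuousWithinAt q (Icc a b) x},
      HasDerivAt (fun t => (c + t) * g t) (g x + (c + x) * q x) x := by
    rintro x ⟨hx, hxq⟩
    have hxI := Icc_mem_nhds hx.1 hx.2
    have hqx : ContinuousAt q x :=
      (not_not.1 fun hn => hxq ⟨Ioo_subset_Icc_self hx, hn⟩).continuousAt hxI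
    simpa only [one_mul, id_eq] using ((hasDerivAt_id x).const_add c).fun_mul (h.hasDerivAt hxI hqx)
  have hg : IntervalIntegrable g volume a b := h.continuousOn.intervalIntegrable_of_Icc hab
  have hq : IntervalIntegrable (fun t => (c + t) * q t) volume a b :=
    (MonotoneOn.intervalIntegrable (by rw [uIcc_of_le hab]; exact h.monotoneOn)).continuousOn_mul
      (by fun_prop)
  have hftc := integral_eq_of_hasDerivAt_off_countable_of_le _ _ hab
    h.monotoneOn.countable_not_continuousWithinAt hcont hderiv (hg.add hq)
  rw [intervalIntegral.integral_add hg hq] at hftc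
  linarith

end IsSubgradientOn

lemma integral_unitInterval (F : ℝ → ℝ) : ∫ t : I, F t = ∫ t in (0 : ℝ)..1, F t := by
  rw [intervalIntegral.integral_of_le zero_le_one, ← integral_Icc_eq_integral_Ioc,
    ← integral_subtype_comap measurableSet_Icc]
  rfl

lemma integral_add_mul_of_isSubgradient {g q : I → ℝ}
    (h : ∀ x y : I, g x + ((y : ℝ) - x) * q x ≤ g y) (c : ℝ) :
    ∫ t : I, (c + t) * q t = (c + 1) * g 1 - c * g 0 - ∫ t, g t := by
  have hext : IsSubgradientOn (IccExtend zero_le_one g) (IccExtend zero_le_one q) (Icc 0 1) :=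
    fun x hx y hy => by
      rw [IccExtend_of_mem _ _ hx, IccExtend_of_mem _ _ hy, IccExtend_of_mem _ _ hx]
      exact h ⟨x, hx⟩ ⟨y, hy⟩
  have hparts := hext.intervalIntegral_add_mul zero_le_one c
  rw [← integral_unitInterval, ← integral_unitInterval, add_zero, IccExtend_right,
    IccExtend_left] at hparts
  simp only [IccExtend_val] at hparts
  exact hparts

end UnitInterval

section Mechanism

variable {ι : Type*} [Fintype ι]

/-- The value of the grand bundle in excess of its value at the lowest type `(c, …, c)`, for the
type `c + y`. -/
noncomputable def total (y : ι → I) : ℝ := ∑ j, (y j : ℝ)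

lemma measurable_total : Measurable (total : (ι → I) → ℝ) := by
  unfold total
  fun_prop

lemma total_nonneg (y : ι → I) : 0 ≤ total y := Finset.sum_nonneg fun j _ => (y j).2.1

lemma total_le_card (y : ι → I) : total y ≤ Fintype.card ι :=
  (Finset.sum_le_card_nsmul _ _ 1 fun j _ => (y j).2.2).trans_eq (by simp)

lemma coe_le_total (y : ι → I) (j : ι) : (y j : ℝ) ≤ total y :=
  Finset.single_le_sum (f := fun j => (y j : ℝ)) (fun j _ => (y j).2.1) (Finset.mem_univ j)

lemma boundedMeasurable_total : BoundedMeasurable (total : (ι → I) → ℝ) :=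
  .of_mem_Icc measurable_total fun y => ⟨total_nonneg y, total_le_card y⟩

/-- An incentive compatible mechanism with types in `Iⁿ`, given by its allocation `Q` and its
indirect utility `u`. Incentive compatibility says that `Q x` is a subgradient of `u` at `x`. -/
structure IsIncentiveCompatible (Q : (ι → I) → ι → ℝ) (u : (ι → I) → ℝ) : Prop where
  measurable_alloc : Measurable Q
  measurable_utility : Measurable u
  alloc_mem_Icc : ∀ x i, Q x i ∈ Icc (0 : ℝ) 1
  subgradient : ∀ x y, u x + ∑ i, ((y i : ℝ) - x i) * Q x i ≤ u y

/-- The indirect utility of the buyer when the grand bundle is offered at price `p` in excess of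
its value at the lowest type. -/
noncomputable def bundleUtility (p : ℝ) (y : ι → I) : ℝ := max (total y - p) 0

namespace IsIncentiveCompatible

variable {Q : (ι → I) → ι → ℝ} {u : (ι → I) → ℝ}

lemma monotone_total_sub (h : IsIncentiveCompatible Q u) :
    Monotone fun y => total y - u y := fun x y hxy => by
  have hsub := h.subgradient y x
  have hslope : ∑ i, ((y i : ℝ) - x i) * Q y i ≤ total y - total x := by
    rw [total, total, ← Finset.sum_sub_distrib]
    exact Finset.sum_le_sum fun i _ =>
      mul_le_of_le_one_right (sub_nonneg.2 (hxy i)) (h.alloc_mem_Icc y i).2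
  have hneg : ∑ i, ((x i : ℝ) - y i) * Q y i = -∑ i, ((y i : ℝ) - x i) * Q y i := by
    rw [← Finset.sum_neg_distrib]
    exact Finset.sum_congr rfl fun i _ => by ring
  simp only
  linarith

lemma monotone (h : IsIncentiveCompatible Q u) : Monotone u := fun x y hxy => by
  have hslope : 0 ≤ ∑ i, ((y i : ℝ) - x i) * Q x i := Finset.sum_nonneg fun i _ =>
    mul_nonneg (sub_nonneg.2 (hxy i)) (h.alloc_mem_Icc x i).1
  linarith [h.subgradient x y]

lemma boundedMeasurable (h : IsIncentiveCompatible Q u) : BoundedMeasurable u :=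
  .of_mem_Icc h.measurable_utility (a := u 0) (b := u 1) fun _ =>
    ⟨h.monotone fun _ => unitInterval.nonneg', h.monotone fun _ => unitInterval.le_one'⟩

lemma boundedMeasurable_coord_mul_alloc (h : IsIncentiveCompatible Q u) (c : ℝ) (i : ι) :
    BoundedMeasurable fun y : ι → I => (c + y i) * Q y i :=
  .mul (.add (.const c) (.of_mem_Icc (by fun_prop) fun y => (y i).2))
    (.of_mem_Icc ((measurable_pi_apply i).comp h.measurable_alloc) fun y => h.alloc_mem_Icc y i)

end IsIncentiveCompatible

lemma isIncentiveCompatible_bundle (p : ℝ) :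
    IsIncentiveCompatible (fun (y : ι → I) _ => if p ≤ total y then 1 else 0)
      (bundleUtility p) where
  measurable_alloc := measurable_pi_lambda _ fun _ =>
    .ite (measurableSet_le measurable_const measurable_total) measurable_const measurable_const
  measurable_utility := (measurable_total.sub_const p).max measurable_const
  alloc_mem_Icc _ _ := by split_ifs <;> simp
  subgradient x y := by
    rw [← Finset.sum_mul, Finset.sum_sub_distrib]
    change bundleUtility p x + (total y - total x) * _ ≤ bundleUtility p y
    unfold bundleUtility
    split_ifs with hx
    · rw [max_eq_left (by linarith)]
      exact le_max_of_le_left (by linarith)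
    · rw [max_eq_right (by linarith)]
      exact le_max_of_le_right (by linarith)

variable [DecidableEq ι]

lemma total_update (y : ι → I) (i : ι) (t : I) : total (update y i t) = total y - y i + t := by
  have hcoe : ∀ j, ((update y i t j : I) : ℝ) = update (fun j => (y j : ℝ)) i (t : ℝ) j :=
    fun j => apply_update (fun _ => Subtype.val) y i t j
  simp only [total, hcoe]
  rw [Finset.sum_update_of_mem (Finset.mem_univ i), Finset.sdiff_singleton_eq_erase,
    Finset.sum_erase_eq_sub (Finset.mem_univ i)]
  ring

lemma measurable_total_update (i : ι) (t : I) :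
    Measurable fun y : ι → I => total (update y i t) :=
  measurable_total.comp measurable_update_left

/-- The revenue on `[c, c+1]ⁿ` as a functional of the indirect utility: integrating by parts in
each coordinate eliminates the allocation. -/
noncomputable def revenueFunctional (c : ℝ) (u : (ι → I) → ℝ) : ℝ :=
  ∫ y, (∑ i, ((c + 1) * u (update y i 1) - c * u (update y i 0)) - (Fintype.card ι + 1) * u y)

namespace IsIncentiveCompatible

variable {Q : (ι → I) → ι → ℝ} {u : (ι → I) → ℝ}

lemma integral_coord_mul_alloc (h : IsIncentiveCompatible Q u) (c : ℝ) (i : ι) :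
    ∫ y : ι → I, (c + y i) * Q y i
      = ∫ y, ((c + 1) * u (update y i 1) - c * u (update y i 0) - u y) := by
  have hface (t : I) : BoundedMeasurable fun y => u (update y i t) :=
    h.boundedMeasurable.comp measurable_update_left
  have hline (y : ι → I) : BoundedMeasurable fun t => u (update y i t) :=
    h.boundedMeasurable.comp (measurable_update y)
  have hsubgrad (y : ι → I) (s t : I) :
      u (update y i s) + ((t : ℝ) - s) * Q (update y i s) i ≤ u (update y i t) := by
    have hsub := h.subgradient (update y i s) (update y i t)
    rwa [Finset.sum_eq_single i (fun j _ hj => by simp [hj]) (by simp), update_self,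
      update_self] at hsub
  have hfaces := (((hface 1).const_mul (c + 1)).sub ((hface 0).const_mul c)).sub
    h.boundedMeasurable
  have halloc := h.boundedMeasurable_coord_mul_alloc c i
  rw [integral_eq_integral_integral_update i (halloc.integrable _),
    integral_eq_integral_integral_update i (hfaces.integrable _)]
  congr 1 with y
  simp only [update_self, update_idem]
  rw [integral_add_mul_of_isSubgradient (hsubgrad y), integral_sub (integrable_const _)
    ((hline y).integrable _), integral_const, probReal_univ, one_smul]

lemma integral_payment (h : IsIncentiveCompatible Q u) (c : ℝ) :
    ∫ y : ι → I, (∑ i, (c + y i) * Q y i - u y) = revenueFunctional c u := by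
  have hu := h.boundedMeasurable
  have halloc (i : ι) : Integrable fun y : ι → I => (c + y i) * Q y i :=
    (h.boundedMeasurable_coord_mul_alloc c i).integrable _
  have hfaces (i : ι) : Integrable fun y : ι → I =>
      (c + 1) * u (update y i 1) - c * u (update y i 0) - u y :=
    ((((hu.comp measurable_update_left).const_mul _).sub
      ((hu.comp measurable_update_left).const_mul _)).sub hu).integrable _
  rw [integral_sub (integrable_finsetSum _ fun i _ => halloc i) (hu.integrable _),
    integral_finsetSum _ fun i _ => halloc i]
  simp only [h.integral_coord_mul_alloc]
  rw [← integral_finsetSum _ fun i _ => hfaces i,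
    ← integral_sub (integrable_finsetSum _ fun i _ => hfaces i) (hu.integrable _)]
  unfold revenueFunctional
  congr 1 with y
  rw [Finset.sum_sub_distrib, Finset.sum_const, Finset.card_univ, nsmul_eq_mul]
  ring

end IsIncentiveCompatible

end Mechanism

section Slack

variable {ι : Type*} [Fintype ι]

/-- The amount by which the utility of a buyer who always takes the grand bundle at price `p`
exceeds `u`. -/
noncomputable def slack (p : ℝ) (u : (ι → I) → ℝ) (y : ι → I) : ℝ := total y - p - u y

section

variable {u : (ι → I) → ℝ} {p : ℝ} {y : ι → I}

lemma bundleUtility_sub_eq_slack (hy : p ≤ total y) :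
    bundleUtility p y - u y = slack p u y := by
  rw [bundleUtility, max_eq_left (by linarith), slack]

lemma bundleUtility_sub_nonpos (hu : ∀ y, 0 ≤ u y) (hy : total y < p) :
    bundleUtility p y - u y ≤ 0 := by
  rw [bundleUtility, max_eq_right (by linarith)]
  linarith [hu y]

lemma boundedMeasurable_slack (hu : BoundedMeasurable u) (p : ℝ) : BoundedMeasurable (slack p u) :=
  (boundedMeasurable_total.sub (.const p)).sub hu

lemma monotone_slack (hu : Monotone fun y => total y - u y) (p : ℝ) :
    Monotone (slack p u) := fun x y hxy => by
  have := hu hxy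
  simp only [slack] at this ⊢
  linarith

end

variable [DecidableEq ι] {f u v : (ι → I) → ℝ} {c p : ℝ}

/-- The increase of `f` across the cube in direction `i`, counted on the lines on which every
type takes the grand bundle at price `p`. -/
noncomputable def gain (f : (ι → I) → ℝ) (p : ℝ) (i : ι) (y : ι → I) : ℝ :=
  if p ≤ total (update y i 0) then f (update y i 1) - f (update y i 0) else 0

/-- The weight with which the types excluded at price `p` enter the first-order condition for
raising the utility in direction `i`: weight `c` on the lower facet `y i = 0`, and an equal share
`(n + 1) / n` of the weight of the interior. -/
noncomputable def exclusionWeight (c p : ℝ) (i : ι) (y : ι → I) : ℝ :=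
  c * (if total (update y i 0) < p then 1 else 0)
    + (Fintype.card ι + 1) / Fintype.card ι * (if total y < p then 1 else 0)

lemma gain_nonneg (hf : Monotone f) (i : ι) (y : ι → I) : 0 ≤ gain f p i y := by
  unfold gain
  split_ifs
  · exact sub_nonneg.2 (hf (update_le_update_iff'.2 unitInterval.nonneg'))
  · exact le_rfl

lemma boundedMeasurable_gain (hf : BoundedMeasurable f) (p : ℝ) (i : ι) :
    BoundedMeasurable (gain f p i) :=
  .ite (measurableSet_le measurable_const (measurable_total_update i 0))
    ((hf.comp measurable_update_left).sub (hf.comp measurable_update_left)) (.const 0)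

lemma le_add_gain (hf : Monotone f) {i : ι} {y : ι → I} (hy : p ≤ total (update y i 0)) (s t : I) :
    f (update y i s) ≤ f (update y i t) + gain f p i y := by
  rw [gain, if_pos hy]
  have hs : f (update y i s) ≤ f (update y i 1) :=
    hf (update_le_update_iff'.2 unitInterval.le_one')
  have ht : f (update y i 0) ≤ f (update y i t) :=
    hf (update_le_update_iff'.2 unitInterval.nonneg')
  linarith

lemma exclusionWeight_nonneg (hc : 0 ≤ c) (i : ι) (y : ι → I) : 0 ≤ exclusionWeight c p i y := by
  unfold exclusionWeight
  positivity

lemma boundedMeasurable_exclusionWeight (c p : ℝ) (i : ι) :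
    BoundedMeasurable (exclusionWeight c p i) :=
  .add (.const_mul _ (.ite (measurableSet_lt (measurable_total_update i 0) measurable_const)
      (.const 1) (.const 0)))
    (.const_mul _ (.ite (measurableSet_lt measurable_total measurable_const) (.const 1) (.const 0)))

lemma exclusionWeight_le (hc : 0 ≤ c) {i j : ι} (hji : j ≠ i) (y : ι → I) :
    exclusionWeight c p i y ≤ (c + 2) * (if (y j : ℝ) ≤ p then 1 else 0) := by
  unfold exclusionWeight
  by_cases hj : (y j : ℝ) ≤ p
  · have hcard : (1 : ℝ) ≤ Fintype.card ι := by exact_mod_cast Fintype.card_pos_iff.2 ⟨i⟩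
    have hle : ((Fintype.card ι : ℝ) + 1) / Fintype.card ι ≤ 2 := by
      rw [div_le_iff₀ (by linarith)]
      linarith
    have hnonneg : (0 : ℝ) ≤ (Fintype.card ι + 1) / Fintype.card ι := by positivity
    rw [if_pos hj]
    split_ifs <;> linarith only [hc, hle, hnonneg]
  · have hfacet : p < total (update y i 0) := by
      have hcoord := coe_le_total (update y i 0) j
      rw [update_of_ne hji] at hcoord
      linarith
    have hinterior : p < total y := by linarith [coe_le_total y j]
    simp [hj, hfacet.not_gt, hinterior.not_gt]

lemma gain_add_exclusionWeight_mul_le (hc : 0 ≤ c) (hp : p ≤ 1) (hu : ∀ y, 0 ≤ u y)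
    (hf : Monotone (slack p u)) (i : ι) (y : ι → I) :
    c * gain (slack p u) p i y
        + (exclusionWeight c p i y - 1 / Fintype.card ι) * slack p u (update y i 1)
      ≤ (c + 1) * (bundleUtility p (update y i 1) - u (update y i 1))
        - c * (bundleUtility p (update y i 0) - u (update y i 0))
        - (Fintype.card ι + 1) / Fintype.card ι * (bundleUtility p y - u y) := by
  set κ : ℝ := (Fintype.card ι + 1) / Fintype.card ι with hκ
  have hcard : (Fintype.card ι : ℝ) ≠ 0 := Nat.cast_ne_zero.2 (Fintype.card_pos_iff.2 ⟨i⟩).ne'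
  have hκ0 : 0 ≤ κ := by positivity
  have hκ1 : 1 / (Fintype.card ι : ℝ) = κ - 1 := by rw [hκ]; field_simp; ring
  have htop : p ≤ total (update y i 1) := by
    have hcoord := coe_le_total (update y i 1) i
    rw [update_self, Icc.coe_one] at hcoord
    linarith
  have hfacet : c * gain (slack p u) p i y
        + c * (if total (update y i 0) < p then 1 else 0) * slack p u (update y i 1)
      ≤ c * slack p u (update y i 1) - c * (bundleUtility p (update y i 0) - u (update y i 0)) := by
    rcases lt_or_ge (total (update y i 0)) p with h | h
    · rw [gain, if_neg h.not_ge, if_pos h]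
      linarith [mul_nonneg_of_nonpos_of_nonpos (neg_nonpos.2 hc) (bundleUtility_sub_nonpos hu h)]
    · rw [gain, if_pos h, if_neg h.not_gt, bundleUtility_sub_eq_slack h]
      linarith
  have hinterior : κ * (if total y < p then 1 else 0) * slack p u (update y i 1)
      ≤ κ * slack p u (update y i 1) - κ * (bundleUtility p y - u y) := by
    rcases lt_or_ge (total y) p with h | h
    · rw [if_pos h]
      linarith [mul_nonneg_of_nonpos_of_nonpos (neg_nonpos.2 hκ0) (bundleUtility_sub_nonpos hu h)]
    · have hmono : slack p u y ≤ slack p u (update y i 1) :=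
        hf (le_update_self_iff.2 unitInterval.le_one')
      rw [if_neg h.not_gt, bundleUtility_sub_eq_slack h]
      linarith [mul_le_mul_of_nonneg_left hmono hκ0]
  rw [exclusionWeight, ← hκ, hκ1, bundleUtility_sub_eq_slack htop]
  linarith

lemma boundedMeasurable_revenue_integrand (hu : BoundedMeasurable u) (c : ℝ) :
    BoundedMeasurable fun y =>
      ∑ i, ((c + 1) * u (update y i 1) - c * u (update y i 0)) - (Fintype.card ι + 1) * u y := by
  have hface (i : ι) (t : I) : BoundedMeasurable fun y => u (update y i t) :=
    hu.comp measurable_update_left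
  exact (BoundedMeasurable.sum Finset.univ fun i =>
    ((hface i 1).const_mul (c + 1)).sub ((hface i 0).const_mul c)).sub (hu.const_mul _)

lemma revenueFunctional_sub (hu : BoundedMeasurable u) (hv : BoundedMeasurable v) (c : ℝ) :
    revenueFunctional c (fun y => u y - v y) = revenueFunctional c u - revenueFunctional c v := by
  unfold revenueFunctional
  rw [← integral_sub ((boundedMeasurable_revenue_integrand hu c).integrable _)
    ((boundedMeasurable_revenue_integrand hv c).integrable _)]
  congr 1 with y
  rw [sub_sub_sub_comm, ← Finset.sum_sub_distrib]
  congr 1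
  · exact Finset.sum_congr rfl fun i _ => by ring
  · ring

lemma sum_integral_le_revenueFunctional_sub [Nonempty ι] (hc : 0 ≤ c) (hp : p ≤ 1)
    (hub : BoundedMeasurable u) (hu : ∀ y, 0 ≤ u y) (hf : Monotone (slack p u)) :
    ∑ i, ∫ y, (c * gain (slack p u) p i y
        + (exclusionWeight c p i y - 1 / Fintype.card ι) * slack p u (update y i 1))
      ≤ revenueFunctional (ι := ι) c (bundleUtility p) - revenueFunctional c u := by
  have hs : BoundedMeasurable (bundleUtility p : (ι → I) → ℝ) :=
    (isIncentiveCompatible_bundle p).boundedMeasurable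
  have hfb : BoundedMeasurable (slack p u) := boundedMeasurable_slack hub p
  have hterm (i : ι) : Integrable fun y => c * gain (slack p u) p i y
        + (exclusionWeight c p i y - 1 / Fintype.card ι) * slack p u (update y i 1) :=
    (((boundedMeasurable_gain hfb p i).const_mul c).add
      (((boundedMeasurable_exclusionWeight c p i).sub (.const _)).mul
        (hfb.comp measurable_update_left))).integrable _
  rw [← revenueFunctional_sub hs hub, ← integral_finsetSum _ fun i _ => hterm i]
  refine integral_mono (integrable_finsetSum _ fun i _ => hterm i)
    ((boundedMeasurable_revenue_integrand (hs.sub hub) c).integrable _) fun y => ?_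
  refine (Finset.sum_le_sum fun i _ =>
    gain_add_exclusionWeight_mul_le hc hp hu hf i y).trans_eq ?_
  rw [Finset.sum_sub_distrib, Finset.sum_const, Finset.card_univ, nsmul_eq_mul]
  field_simp

end Slack

section FaceAverages

variable {ι : Type*} [Fintype ι] [DecidableEq ι] {f : (ι → I) → ℝ} {c : ℝ} {p : I} {e : ι}

lemma measureReal_Ici_unitInterval (p : I) : volume.real (Ici p) = 1 - p := by
  rw [measureReal_def, unitInterval.volume_Ici, ENNReal.toReal_ofReal (sub_nonneg.2 p.2.2)]

lemma integral_indicator_ge (p : I) : ∫ t : I, (if p ≤ t then 1 else 0 : ℝ) = 1 - p :=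
  calc ∫ t : I, (if p ≤ t then 1 else 0 : ℝ) = ∫ t, (Ici p).indicator 1 t := by
        simp only [indicator_apply, mem_Ici, Pi.one_apply]
    _ = 1 - p := by
        rw [integral_indicator_one measurableSet_Ici, measureReal_Ici_unitInterval]

lemma integral_indicator_le (p : I) : ∫ t : I, (if (t : ℝ) ≤ p then 1 else 0 : ℝ) = p :=
  calc ∫ t : I, (if (t : ℝ) ≤ p then 1 else 0 : ℝ) = ∫ t, (Iic p).indicator 1 t := by
        simp only [indicator_apply, mem_Iic, Pi.one_apply, Subtype.coe_le_coe]
    _ = p := by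
        rw [integral_indicator_one measurableSet_Iic, measureReal_def, unitInterval.volume_Iic,
          ENNReal.toReal_ofReal p.2.1]

lemma boundedMeasurable_indicator_ge (p : I) :
    BoundedMeasurable fun t : I => (if p ≤ t then 1 else 0 : ℝ) :=
  .ite measurableSet_Ici (.const 1) (.const 0)

lemma boundedMeasurable_indicator_le (p : I) :
    BoundedMeasurable fun t : I => (if (t : ℝ) ≤ p then 1 else 0 : ℝ) :=
  .ite (measurableSet_le measurable_subtype_coe measurable_const) (.const 1) (.const 0)

lemma le_total_update_of_ne {i : ι} (hei : e ≠ i) {y : ι → I} (hy : p ≤ y e) (t : I) :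
    (p : ℝ) ≤ total (update y i t) :=
  calc (p : ℝ) ≤ update y i t e := by rw [update_of_ne hei]; exact hy
    _ ≤ total (update y i t) := coe_le_total _ e

lemma integral_upper_face_le (hf : Monotone f) (hfb : BoundedMeasurable f) {i : ι} (hei : e ≠ i) :
    (1 - p) * ∫ y, f (update y i 1)
      ≤ (∫ y, (if p ≤ y e then 1 else 0) * f y) + ∫ y, gain f p i y := by
  have hface : Monotone fun y => f (update y i 1) := fun y z hyz =>
    hf (update_le_update_iff.2 ⟨le_rfl, fun j _ => hyz j⟩)
  have hfaceb : BoundedMeasurable fun y => f (update y i 1) := hfb.comp measurable_update_left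
  have hχ : BoundedMeasurable fun y : ι → I => (if p ≤ y e then 1 else 0 : ℝ) :=
    (boundedMeasurable_indicator_ge p).comp (measurable_pi_apply e)
  have hgain := boundedMeasurable_gain hfb p i
  calc (1 - p) * ∫ y, f (update y i 1)
      ≤ ∫ y, (if p ≤ y e then 1 else 0) * f (update y i 1) := by
        rw [← measureReal_Ici_unitInterval]
        exact measureReal_Ici_mul_integral_le hface hfaceb p e
    _ ≤ ∫ y, ((if p ≤ y e then 1 else 0) * f y + gain f p i y) := by
        refine integral_mono ((hχ.mul hfaceb).integrable _)
          (((hχ.mul hfb).add hgain).integrable _) fun y => ?_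
        simp only
        split_ifs with hy
        · simpa only [one_mul, update_eq_self] using
            le_add_gain hf (le_total_update_of_ne hei hy 0) 1 (y i)
        · simpa only [zero_mul, zero_add] using gain_nonneg hf i y
    _ = (∫ y, (if p ≤ y e then 1 else 0) * f y) + ∫ y, gain f p i y :=
        integral_add ((hχ.mul hfb).integrable _) (hgain.integrable _)

/-- The average of `f` over a type whose coordinate `e` is at least `p`, after the coordinates in
`S` have been redrawn, weighted by the exclusion weight of the redrawn type. It interpolates
between independence (`S = ∅`) and the weighted average of `f` (`S = {e}ᶜ`). -/
noncomputable def hybridIntegral (c : ℝ) (p : I) (e : ι) (f : (ι → I) → ℝ) (S : Finset ι) : ℝ :=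
  ∫ w : (ι → I) × (ι → I),
    (if p ≤ w.1 e then 1 else 0) * (exclusionWeight c p e w.2 * f (S.piecewise w.2 w.1))

lemma boundedMeasurable_hybridIntegrand (hfb : BoundedMeasurable f) (c : ℝ) (p : I) (e : ι)
    (S : Finset ι) : BoundedMeasurable fun w : (ι → I) × (ι → I) =>
      (if p ≤ w.1 e then 1 else 0) * (exclusionWeight c p e w.2 * f (S.piecewise w.2 w.1)) :=
  ((boundedMeasurable_indicator_ge p).comp ((measurable_pi_apply e).comp measurable_fst)).mul
    (((boundedMeasurable_exclusionWeight c p e).comp measurable_snd).mul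
      (hfb.comp (measurable_piecewise_prod S)))

lemma hybridIntegral_empty (c : ℝ) (p : I) (e : ι) (f : (ι → I) → ℝ) :
    hybridIntegral c p e f ∅
      = (∫ y, (if p ≤ y e then 1 else 0) * f y) * ∫ y, exclusionWeight c p e y := by
  rw [← integral_prod_mul]
  simp only [hybridIntegral, Finset.piecewise_empty, mul_assoc, mul_comm (f _)]
  rfl

lemma hybridIntegral_singleton_compl_le (hf : Monotone f) (hfb : BoundedMeasurable f)
    (hc : 0 ≤ c) (p : I) (e : ι) :
    hybridIntegral c p e f {e}ᶜ ≤ (1 - p) * ∫ y, exclusionWeight c p e y * f (update y e 1) := by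
  have hχ := boundedMeasurable_indicator_ge p
  have hmass : ∫ y : ι → I, (if p ≤ y e then 1 else 0 : ℝ) = 1 - p := by
    rw [← integral_indicator_ge, volume_pi,
      integral_comp_eval (X := fun _ : ι => I) (i := e)
        (f := fun t : I => (if p ≤ t then 1 else 0 : ℝ)) hχ.measurable.aestronglyMeasurable]
  have hface : BoundedMeasurable fun y => exclusionWeight c p e y * f (update y e 1) :=
    (boundedMeasurable_exclusionWeight c p e).mul (hfb.comp measurable_update_left)
  calc hybridIntegral c p e f {e}ᶜ
      ≤ ∫ w : (ι → I) × (ι → I),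
          (if p ≤ w.1 e then 1 else 0) * (exclusionWeight c p e w.2 * f (update w.2 e 1)) := by
        refine integral_mono ((boundedMeasurable_hybridIntegrand hfb c p e _).integrable _)
          (((hχ.comp ((measurable_pi_apply e).comp measurable_fst)).mul
            (hface.comp measurable_snd)).integrable _) fun w => ?_
        simp only [Finset.piecewise_compl, Finset.piecewise_singleton]
        have hW := exclusionWeight_nonneg (p := p) hc e w.2
        gcongr
        exact hf (update_le_update_iff'.2 unitInterval.le_one')
    _ = (∫ y : ι → I, (if p ≤ y e then 1 else 0 : ℝ))
          * ∫ y, exclusionWeight c p e y * f (update y e 1) :=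
        integral_prod_mul (fun y : ι → I => (if p ≤ y e then 1 else 0 : ℝ))
          fun y => exclusionWeight c p e y * f (update y e 1)
    _ = (1 - p) * ∫ y, exclusionWeight c p e y * f (update y e 1) := by rw [hmass]

lemma hybridIntegrand_le_insert (hf : Monotone f) (hc : 0 ≤ c) {S : Finset ι} (heS : e ∉ S) {j : ι}
    (hje : j ≠ e) (w : (ι → I) × (ι → I)) :
    (if p ≤ w.1 e then 1 else 0) * (exclusionWeight c p e w.2 * f (S.piecewise w.2 w.1))
      ≤ (if p ≤ w.1 e then 1 else 0)
          * (exclusionWeight c p e w.2 * f ((insert j S).piecewise w.2 w.1))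
        + (c + 2) * (gain f p j (S.piecewise w.2 w.1) * if (w.2 j : ℝ) ≤ p then 1 else 0) := by
  rw [Finset.piecewise_insert]
  set z := S.piecewise w.2 w.1
  have hgain : 0 ≤ gain f p j z := gain_nonneg hf j z
  by_cases hw : p ≤ w.1 e
  · have hze : p ≤ z e := hw.trans_eq (S.piecewise_eq_of_notMem _ _ heS).symm
    have hfz := le_add_gain hf (le_total_update_of_ne hje.symm hze 0) (z j) (w.2 j)
    rw [update_eq_self] at hfz
    have hW0 := exclusionWeight_nonneg (p := p) hc e w.2
    have hW := exclusionWeight_le (p := p) hc hje w.2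
    simp only [if_pos hw, one_mul]
    calc exclusionWeight c p e w.2 * f z
        ≤ exclusionWeight c p e w.2 * (f (update z j (w.2 j)) + gain f p j z) := by gcongr
      _ ≤ exclusionWeight c p e w.2 * f (update z j (w.2 j))
          + (c + 2) * (if (w.2 j : ℝ) ≤ p then 1 else 0) * gain f p j z := by
        rw [mul_add]
        gcongr
      _ = _ := by ring
  · simp only [if_neg hw, zero_mul, zero_add]
    positivity

lemma hybridIntegral_le_insert (hf : Monotone f) (hfb : BoundedMeasurable f) (hc : 0 ≤ c)
    {S : Finset ι} (heS : e ∉ S) {j : ι} (hjS : j ∉ S) (hje : j ≠ e) :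
    hybridIntegral c p e f S
      ≤ hybridIntegral c p e f (insert j S) + (c + 2) * p * ∫ y, gain f p j y := by
  have hgain := boundedMeasurable_gain hfb p j
  have hχ := boundedMeasurable_indicator_le p
  have hhyb := boundedMeasurable_hybridIntegrand hfb c p e
  have herr : BoundedMeasurable fun w : (ι → I) × (ι → I) =>
      (c + 2) * (gain f p j (S.piecewise w.2 w.1) * if (w.2 j : ℝ) ≤ p then 1 else 0) :=
    .const_mul _ ((hgain.comp (measurable_piecewise_prod S)).mul
      (hχ.comp ((measurable_pi_apply j).comp measurable_snd)))
  calc hybridIntegral c p e f S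
      ≤ ∫ w : (ι → I) × (ι → I), ((if p ≤ w.1 e then 1 else 0)
          * (exclusionWeight c p e w.2 * f ((insert j S).piecewise w.2 w.1))
        + (c + 2) * (gain f p j (S.piecewise w.2 w.1) * if (w.2 j : ℝ) ≤ p then 1 else 0)) :=
        integral_mono ((hhyb S).integrable _) (((hhyb _).add herr).integrable _)
          (hybridIntegrand_le_insert hf hc heS hje)
    _ = hybridIntegral c p e f (insert j S) + (c + 2) * p * ∫ y, gain f p j y := by
        rw [integral_add ((hhyb _).integrable _) (herr.integrable _), integral_const_mul,
          integral_piecewise_mul_eval hjS hgain.measurable.aestronglyMeasurable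
            (h := fun t : I => (if (t : ℝ) ≤ p then 1 else 0 : ℝ))
            hχ.measurable.aestronglyMeasurable, integral_indicator_le, hybridIntegral]
        ring

lemma hybridIntegral_empty_le (hf : Monotone f) (hfb : BoundedMeasurable f) (hc : 0 ≤ c)
    {S : Finset ι} (heS : e ∉ S) :
    hybridIntegral c p e f ∅
      ≤ hybridIntegral c p e f S + (c + 2) * p * ∑ j ∈ S, ∫ y, gain f p j y := by
  induction S using Finset.induction_on with
  | empty => simp
  | insert j S hjS ih =>
    have hstep := hybridIntegral_le_insert (p := p) hf hfb hc
      (fun h => heS (Finset.mem_insert_of_mem h)) hjS fun h => heS (h ▸ Finset.mem_insert_self j S)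
    have hS := ih fun h => heS (Finset.mem_insert_of_mem h)
    rw [Finset.sum_insert hjS, mul_add]
    linarith

lemma integral_mul_integral_exclusionWeight_le (hf : Monotone f) (hfb : BoundedMeasurable f)
    (hc : 0 ≤ c) (p : I) (e : ι) :
    (∫ y, (if p ≤ y e then 1 else 0) * f y) * ∫ y, exclusionWeight c p e y
      ≤ (1 - p) * (∫ y, exclusionWeight c p e y * f (update y e 1))
        + (c + 2) * p * ∑ j, ∫ y, gain f p j y := by
  have hgain (j : ι) : 0 ≤ ∫ y, gain f p j y := integral_nonneg (gain_nonneg hf j)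
  have hp : 0 ≤ (p : ℝ) := p.2.1
  calc (∫ y, (if p ≤ y e then 1 else 0) * f y) * ∫ y, exclusionWeight c p e y
      = hybridIntegral c p e f ∅ := (hybridIntegral_empty c p e f).symm
    _ ≤ hybridIntegral c p e f {e}ᶜ + (c + 2) * p * ∑ j ∈ {e}ᶜ, ∫ y, gain f p j y :=
        hybridIntegral_empty_le hf hfb hc (by simp)
    _ ≤ (1 - p) * (∫ y, exclusionWeight c p e y * f (update y e 1))
        + (c + 2) * p * ∑ j, ∫ y, gain f p j y :=
        add_le_add (hybridIntegral_singleton_compl_le hf hfb hc p e)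
          (mul_le_mul_of_nonneg_left (Finset.sum_le_univ_sum_of_nonneg hgain) (by positivity))

lemma integral_upper_face_sub_le (hf : Monotone f) (hfb : BoundedMeasurable f) (hc : 0 ≤ c)
    (p : I) {i : ι} (hei : e ≠ i) :
    (1 - p) * ((∫ y, exclusionWeight c p e y) * (∫ y, f (update y i 1))
        - ∫ y, exclusionWeight c p e y * f (update y e 1))
      ≤ (∫ y, exclusionWeight c p e y) * (∫ y, gain f p i y)
        + (c + 2) * p * ∑ j, ∫ y, gain f p j y := by
  have hW : 0 ≤ ∫ y, exclusionWeight c p e y := integral_nonneg (exclusionWeight_nonneg hc e)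
  linarith [mul_le_mul_of_nonneg_left (integral_upper_face_le (p := p) hf hfb hei) hW,
    integral_mul_integral_exclusionWeight_le hf hfb hc p e]

lemma integral_gain_add_weighted_face (hfb : BoundedMeasurable f) (c p r : ℝ) (i : ι) :
    ∫ y, (c * gain f p i y + (exclusionWeight c p i y - r) * f (update y i 1))
      = c * (∫ y, gain f p i y)
        + ((∫ y, exclusionWeight c p i y * f (update y i 1)) - r * ∫ y, f (update y i 1)) := by
  have hgain := boundedMeasurable_gain hfb p i
  have hface : BoundedMeasurable fun y => f (update y i 1) := hfb.comp measurable_update_left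
  have hweighted := (boundedMeasurable_exclusionWeight c p i).mul hface
  simp only [sub_mul]
  rw [integral_add ((hgain.const_mul c).integrable _)
    ((hweighted.sub (hface.const_mul r)).integrable _), integral_sub (hweighted.integrable _)
    ((hface.const_mul r).integrable _), integral_const_mul, integral_const_mul]

-- The comparison needs two distinct directions, so the upper face of `i` is paired with the
-- weighted one of `τ i`; the sum over `i` does not see `τ`.
lemma sum_integral_gain_add_nonneg (hf : Monotone f) (hfb : BoundedMeasurable f) (hc : 0 ≤ c)
    (hp : (p : ℝ) < 1) {τ : Equiv.Perm ι} (hτ : ∀ i, τ i ≠ i)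
    (hmass : ∀ i : ι, ∫ y, exclusionWeight c p i y = 1 / Fintype.card ι)
    (hsmall : 1 / (Fintype.card ι : ℝ) + Fintype.card ι * ((c + 2) * p) ≤ (1 - p) * c) :
    0 ≤ ∑ i, ∫ y, (c * gain f p i y
        + (exclusionWeight c p i y - 1 / Fintype.card ι) * f (update y i 1)) := by
  set A : ι → ℝ := fun i => ∫ y, gain f p i y
  set L : ι → ℝ := fun i => ∫ y, exclusionWeight c p i y * f (update y i 1)
  set M : ι → ℝ := fun i => ∫ y, f (update y i 1)
  set N : ℝ := (Fintype.card ι : ℝ)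
  have hcompare (i : ι) : (1 - p) * (1 / N * M i - L (τ i))
      ≤ 1 / N * A i + (c + 2) * p * ∑ j, A j := by
    simpa only [hmass] using integral_upper_face_sub_le hf hfb hc p (hτ i)
  have hsum : (1 - p) * (∑ i, 1 / N * M i - ∑ i, L i)
      ≤ (1 / N + N * ((c + 2) * p)) * ∑ i, A i := by
    calc (1 - p) * (∑ i, 1 / N * M i - ∑ i, L i)
        = ∑ i, (1 - p) * (1 / N * M i - L (τ i)) := by
          rw [← Finset.mul_sum _ _ (1 - (p : ℝ)), Finset.sum_sub_distrib, Equiv.sum_comp τ L]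
      _ ≤ ∑ i, (1 / N * A i + (c + 2) * p * ∑ j, A j) := Finset.sum_le_sum fun i _ => hcompare i
      _ = (1 / N + N * ((c + 2) * p)) * ∑ i, A i := by
          rw [Finset.sum_add_distrib, ← Finset.mul_sum, Finset.sum_const, Finset.card_univ,
            nsmul_eq_mul]
          ring
  have hA : 0 ≤ ∑ i, A i := Finset.sum_nonneg fun i _ => integral_nonneg (gain_nonneg hf i)
  have hp' : (0 : ℝ) < 1 - p := sub_pos.2 hp
  have hdeficit : ∑ i, 1 / N * M i - ∑ i, L i ≤ c * ∑ i, A i := by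
    refine le_of_mul_le_mul_left ?_ hp'
    linarith [mul_le_mul_of_nonneg_right hsmall hA]
  simp only [integral_gain_add_weighted_face hfb]
  rw [Finset.sum_add_distrib, ← Finset.mul_sum, Finset.sum_sub_distrib]
  linarith

end FaceAverages

section Price

lemma continuous_integral_indicator_lt {Ω : Type*} [MeasurableSpace Ω] {μ : Measure Ω}
    [IsFiniteMeasure μ] {g : Ω → ℝ} (hg : Measurable g) (hne : ∀ p, ∀ᵐ x ∂μ, g x ≠ p) :
    Continuous fun p => ∫ x, (if g x < p then 1 else 0 : ℝ) ∂μ := by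
  refine continuous_iff_continuousAt.2 fun p => ?_
  refine continuousAt_of_dominated (bound := fun _ => 1)
    (.of_forall fun q => (Measurable.ite (measurableSet_lt hg measurable_const) measurable_const
      measurable_const).aestronglyMeasurable)
    (.of_forall fun q => .of_forall fun x => by split_ifs <;> simp) (integrable_const _) ?_
  filter_upwards [hne p] with x hx
  rcases lt_or_gt_of_ne hx with hlt | hgt
  · refine (continuousAt_const (y := (1 : ℝ))).congr ?_
    filter_upwards [eventually_gt_nhds hlt] with q hq
    rw [if_pos hq]
  · refine (continuousAt_const (y := (0 : ℝ))).congr ?_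
    filter_upwards [eventually_lt_nhds hgt] with q hq
    rw [if_neg hq.not_gt]

variable {ι : Type*} [Fintype ι]

lemma ae_total_ne (i : ι) (p : ℝ) : ∀ᵐ y : ι → I, total y ≠ p := by
  classical
  exact ae_ne_of_injective_update measurable_total i (fun y s t hst => by
    simpa only [total_update, add_right_inj, Subtype.coe_inj] using hst) p

variable [DecidableEq ι]

lemma ae_total_update_ne {i j : ι} (hji : j ≠ i) (t : I) (p : ℝ) :
    ∀ᵐ y : ι → I, total (update y i t) ≠ p :=
  ae_ne_of_injective_update (measurable_total_update i t) j (fun y r s hrs => by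
    simpa only [update_comm hji, total_update _ j, add_right_inj, Subtype.coe_inj] using hrs) p

lemma integral_exclusionWeight (c p : ℝ) (i : ι) :
    ∫ y, exclusionWeight c p i y
      = c * (∫ y : ι → I, if total (update y i 0) < p then 1 else 0)
        + (Fintype.card ι + 1) / Fintype.card ι * ∫ y : ι → I, if total y < p then 1 else 0 := by
  have hfacet : BoundedMeasurable fun y : ι → I =>
      (if total (update y i 0) < p then 1 else 0 : ℝ) :=
    .ite (measurableSet_lt (measurable_total_update i 0) measurable_const) (.const 1) (.const 0)
  have hinterior : BoundedMeasurable fun y : ι → I => (if total y < p then 1 else 0 : ℝ) :=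
    .ite (measurableSet_lt measurable_total measurable_const) (.const 1) (.const 0)
  unfold exclusionWeight
  rw [integral_add ((hfacet.const_mul _).integrable _) ((hinterior.const_mul _).integrable _),
    integral_const_mul, integral_const_mul]

lemma continuous_integral_exclusionWeight [Nontrivial ι] (c : ℝ) (i : ι) :
    Continuous fun p => ∫ y, exclusionWeight c p i y := by
  obtain ⟨j, hji⟩ := exists_ne i
  have hfacet := continuous_integral_indicator_lt (measurable_total_update i 0)
    (ae_total_update_ne hji 0)
  have hinterior := continuous_integral_indicator_lt measurable_total (ae_total_ne i)
  simp only [integral_exclusionWeight]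
  fun_prop

lemma exclusionWeight_zero (c : ℝ) (i : ι) (y : ι → I) : exclusionWeight c 0 i y = 0 := by
  simp only [exclusionWeight, (total_nonneg _).not_gt, if_false, mul_zero, add_zero]

lemma integral_exclusionWeight_eq (c p : ℝ) (i j : ι) :
    ∫ y, exclusionWeight c p i y = ∫ y, exclusionWeight c p j y := by
  set π : (ι → I) ≃ᵐ (ι → I) := MeasurableEquiv.piCongrLeft (fun _ => I) (Equiv.swap i j)
  have hπ (y : ι → I) (k : ι) : π y (Equiv.swap i j k) = y k :=
    Equiv.piCongrLeft_apply_apply (fun _ => I) (Equiv.swap i j) y k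
  have htotal (y : ι → I) : total (π y) = total y := by
    rw [total, ← Equiv.sum_comp (Equiv.swap i j)]
    simp only [hπ, total]
  have hi (y : ι → I) : π y i = y j := by simpa only [Equiv.swap_apply_right] using hπ y j
  have hmp := volume_measurePreserving_piCongrLeft (fun _ => I) (Equiv.swap i j)
  calc ∫ y, exclusionWeight c p i y = ∫ y, exclusionWeight c p i (π y) :=
        (hmp.integral_comp' _).symm
    _ = ∫ y, exclusionWeight c p j y := by simp only [exclusionWeight, total_update, htotal, hi]

lemma integral_indicator_total_update_lt_pos (i : ι) {δ : ℝ} (hδ : 0 < δ) :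
    0 < ∫ y : ι → I, (if total (update y i 0) < δ then 1 else 0 : ℝ) := by
  have hcard : (0 : ℝ) < Fintype.card ι := Nat.cast_pos.2 (Fintype.card_pos_iff.2 ⟨i⟩)
  have hindicator : BoundedMeasurable fun y : ι → I =>
      (if total (update y i 0) < δ then 1 else 0 : ℝ) :=
    .ite (measurableSet_lt (measurable_total_update i 0) measurable_const) (.const 1) (.const 0)
  rw [integral_pos_iff_support_of_nonneg (fun y => by dsimp only [Pi.zero_apply]; positivity)
    (hindicator.integrable _)]
  set ε : I := ⟨min 1 (δ / Fintype.card ι), by positivity, min_le_left _ _⟩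
  have hε : (0 : ℝ) < ε := lt_min one_pos (div_pos hδ hcard)
  have hsub : univ.pi (fun _ => Iio ε)
      ⊆ support fun y : ι → I => (if total (update y i 0) < δ then 1 else 0 : ℝ) := fun y hy => by
    have hlt : total (update y i 0) < δ :=
      calc total (update y i 0) ≤ total y := by
            rw [total_update, Icc.coe_zero]
            linarith [(y i).2.1]
        _ < ∑ _j : ι, (ε : ℝ) :=
          Finset.sum_lt_sum_of_nonempty ⟨i, Finset.mem_univ i⟩ fun j _ => hy j (mem_univ j)
        _ = Fintype.card ι * ε := by rw [Finset.sum_const, Finset.card_univ, nsmul_eq_mul]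
        _ ≤ δ := (le_div_iff₀' hcard).1 (min_le_right _ _)
    rw [mem_support, if_pos hlt]
    exact one_ne_zero
  refine lt_of_lt_of_le ?_ (measure_mono hsub)
  rw [volume_pi_pi, Finset.prod_const, unitInterval.volume_Iio]
  exact ENNReal.pow_pos (ENNReal.ofReal_pos.2 hε) _

lemma exists_price [Nontrivial ι] {δ : ℝ} (hδ : 0 < δ) :
    ∃ c₀ : ℝ, ∀ c, c₀ ≤ c → ∃ p ∈ Icc 0 δ,
      ∀ i : ι, ∫ y, exclusionWeight c p i y = 1 / Fintype.card ι := by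
  obtain ⟨i⟩ := (inferInstance : Nonempty ι)
  set a := ∫ y : ι → I, (if total (update y i 0) < δ then 1 else 0 : ℝ)
  have ha : 0 < a := integral_indicator_total_update_lt_pos i hδ
  have hcard : (1 : ℝ) ≤ Fintype.card ι := by exact_mod_cast Fintype.card_pos
  refine ⟨1 / a, fun c hc => ?_⟩
  have hlarge : 1 / Fintype.card ι ≤ ∫ y, exclusionWeight c δ i y :=
    calc 1 / (Fintype.card ι : ℝ) ≤ 1 := (div_le_one (by linarith)).2 hcard
      _ ≤ c * a := (div_le_iff₀ ha).1 hc
      _ ≤ ∫ y, exclusionWeight c δ i y := by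
        rw [integral_exclusionWeight]
        exact le_add_of_nonneg_right (mul_nonneg (by positivity)
          (integral_nonneg fun y => by dsimp only [Pi.zero_apply]; positivity))
  have hzero : ∫ y, exclusionWeight c 0 i y ≤ 1 / Fintype.card ι := by
    simp only [exclusionWeight_zero, integral_zero]
    positivity
  obtain ⟨p, hp, hmass⟩ := intermediate_value_Icc hδ.le
    (continuous_integral_exclusionWeight c i).continuousOn ⟨hzero, hlarge⟩
  exact ⟨p, hp, fun j => (integral_exclusionWeight_eq c p j i).trans hmass⟩

end Price

section OptimalPrice

variable {ι : Type*} [Fintype ι] [DecidableEq ι] {c p : ℝ}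

variable (ι) in
/-- The price `p`, in excess of the value of the lowest type, makes the grand bundle optimal for
types in `[c, c+1]^ι` among the indirect utilities that are nonnegative and satisfy the consequence
of incentive compatibility that the upper bound rests on: `u` grows no faster than `total`. -/
def IsOptimalBundlePrice (c p : ℝ) : Prop :=
  ∀ u : (ι → I) → ℝ, BoundedMeasurable u → (∀ y, 0 ≤ u y) → Monotone (fun y => total y - u y) →
    revenueFunctional c u ≤ revenueFunctional (ι := ι) c (bundleUtility p)

lemma isOptimalBundlePrice_of_slack [Nonempty ι] (hc : 0 ≤ c) (hp : p ≤ 1)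
    (h : ∀ u : (ι → I) → ℝ, BoundedMeasurable u → (∀ y, 0 ≤ u y) → Monotone (slack p u) →
      0 ≤ ∑ i, ∫ y, (c * gain (slack p u) p i y
        + (exclusionWeight c p i y - 1 / Fintype.card ι) * slack p u (update y i 1))) :
    IsOptimalBundlePrice ι c p := fun u hub hu hmono => by
  have hf := monotone_slack hmono p
  exact sub_nonneg.1 ((h u hub hu hf).trans
    (sum_integral_le_revenueFunctional_sub hc hp hub hu hf))

lemma exists_perm_forall_ne (α : Type*) [Countable α] [Nontrivial α] :
    ∃ τ : Equiv.Perm α, ∀ a, τ a ≠ a := by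
  obtain ⟨τ, hτ, -⟩ := (countable_univ (α := α)).exists_cycleOn
  exact ⟨τ, fun a => hτ.apply_ne nontrivial_univ (mem_univ a)⟩

lemma exists_isOptimalBundlePrice_of_nontrivial [Nontrivial ι] :
    ∃ c₀ : ℝ, 0 ≤ c₀ ∧ ∀ c, c₀ ≤ c → ∃ p, IsOptimalBundlePrice ι c p := by
  obtain ⟨τ, hτ⟩ := exists_perm_forall_ne ι
  set N := (Fintype.card ι : ℝ)
  have hN : 2 ≤ N := Nat.ofNat_le_cast.2 Fintype.one_lt_card
  obtain ⟨c₁, hprice⟩ := exists_price (ι := ι) (δ := 1 / (4 * N)) (by positivity)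
  refine ⟨max 2 c₁, zero_le_two.trans (le_max_left _ _), fun c hc => ?_⟩
  have hc2 : 2 ≤ c := (le_max_left _ _).trans hc
  have hc0 : 0 ≤ c := zero_le_two.trans hc2
  obtain ⟨p, ⟨hp0, hpδ⟩, hmass⟩ := hprice c ((le_max_right _ _).trans hc)
  have hNp : N * p ≤ 1 / 4 := by
    rw [le_div_iff₀ (by positivity)] at hpδ
    linarith
  have hp8 : p ≤ 1 / 8 := by linarith [mul_le_mul_of_nonneg_right hN hp0]
  have hp1 : p < 1 := by linarith
  have hsmall : 1 / N + N * ((c + 2) * p) ≤ (1 - p) * c :=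
    calc 1 / N + N * ((c + 2) * p) = 1 / N + (c + 2) * (N * p) := by ring
      _ ≤ 1 / 2 + (c + 2) * (1 / 4) := by gcongr
      _ ≤ (1 - 1 / 8) * c := by linarith
      _ ≤ (1 - p) * c := by gcongr
  refine ⟨p, isOptimalBundlePrice_of_slack hc0 hp1.le fun u hub _ hf => ?_⟩
  exact sum_integral_gain_add_nonneg (p := ⟨p, hp0, hp1.le⟩) hf (boundedMeasurable_slack hub p)
    hc0 hp1 hτ hmass hsmall

lemma isOptimalBundlePrice_zero_of_unique [Unique ι] (hc : 1 ≤ c) :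
    IsOptimalBundlePrice ι c 0 := by
  refine isOptimalBundlePrice_of_slack (by linarith) zero_le_one fun u _ hu hf => ?_
  have hbottom (y : ι → I) : slack 0 u (update y default 0) ≤ 0 := by
    have htotal : total (update y default 0) = 0 := by
      simp only [total, Fintype.sum_unique, update_self, Icc.coe_zero]
    rw [slack, htotal]
    linarith [hu (update y default 0)]
  have hmono (y : ι → I) : slack 0 u (update y default 0) ≤ slack 0 u (update y default 1) :=
    hf (update_le_update_iff'.2 unitInterval.nonneg')
  refine Finset.sum_nonneg fun i _ => integral_nonneg fun y => ?_
  rw [Unique.eq_default i, gain, if_pos (total_nonneg _), exclusionWeight_zero, Fintype.card_unique,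
    Nat.cast_one]
  have hgain := mul_le_mul_of_nonneg_right hc (sub_nonneg.2 (hmono y))
  simp only [Pi.zero_apply]
  linarith [hbottom y]

lemma exists_isOptimalBundlePrice (ι : Type*) [Fintype ι] [DecidableEq ι] [Nonempty ι] :
    ∃ c₀ : ℝ, 0 ≤ c₀ ∧ ∀ c, c₀ ≤ c → ∃ p, IsOptimalBundlePrice ι c p := by
  cases subsingleton_or_nontrivial ι
  · obtain ⟨_⟩ := nonempty_unique ι
    exact ⟨1, zero_le_one, fun c hc => ⟨0, isOptimalBundlePrice_zero_of_unique hc⟩⟩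
  · exact exists_isOptimalBundlePrice_of_nontrivial

end OptimalPrice

section ShiftedCube

variable {n : ℕ}

/-- The type in `[c, c+1]ⁿ` whose excess over the lowest type is `y`. -/
def shift (c : ℝ) (y : Fin n → I) : Fin n → ℝ := fun i => c + y i

lemma shift_mem_box (c : ℝ) (y : Fin n → I) : shift c y ∈ box (fun _ => c) (fun _ => c + 1) :=
  fun i => ⟨le_add_of_nonneg_right (y i).2.1, add_le_add_right (y i).2.2 c⟩

lemma continuous_shift (c : ℝ) : Continuous (shift c : (Fin n → I) → Fin n → ℝ) := by
  unfold shift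
  fun_prop

lemma sum_shift (c : ℝ) (y : Fin n → I) : ∑ i, shift c y i = n * c + total y := by
  simp only [shift, Finset.sum_add_distrib, Finset.sum_const, Finset.card_univ, Fintype.card_fin,
    nsmul_eq_mul, total]

lemma measurePreserving_shift (c : ℝ) :
    MeasurePreserving (shift c : (Fin n → I) → Fin n → ℝ) volume
      (volume.restrict (box (fun _ => c) fun _ => c + 1)) := by
  have hcoe : MeasurePreserving ((↑) : I → ℝ) volume (volume.restrict (Icc 0 1)) :=
    measurePreserving_subtype_coe measurableSet_Icc
  have hadd := (measurePreserving_add_left (volume : Measure ℝ) c).restrict_preimage_emb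
    (measurableEmbedding_addLeft c) (Icc c (c + 1))
  rw [preimage_const_add_Icc, sub_self, add_sub_cancel_left] at hadd
  have hbox : (box (fun _ => c) fun _ => c + 1)
      = (univ : Set (Fin n)).pi fun _ => Icc c (c + 1) :=
    ext fun _ => mem_univ_pi.symm
  rw [hbox, volume_pi (α := fun _ : Fin n => ℝ), Measure.restrict_pi_pi]
  exact measurePreserving_pi _ _ fun _ => hadd.comp hcoe

lemma integral_box (c : ℝ) (F : (Fin n → ℝ) → ℝ) :
    ∫ x in box (fun _ => c) fun _ => c + 1, F x = ∫ y : Fin n → I, F (shift c y) := by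
  have hinj : Injective (shift c : (Fin n → I) → Fin n → ℝ) := fun y z hyz => by
    ext i
    exact add_left_cancel (congrFun hyz i)
  exact ((measurePreserving_shift c).integral_comp
    ((continuous_shift c).measurableEmbedding hinj) F).symm

lemma isIncentiveCompatible_comp_shift {P : (Fin n → ℝ) → Fin n → ℝ} {T : (Fin n → ℝ) → ℝ} {c : ℝ}
    (hPm : Measurable P) (hTm : Measurable T) (hP : ∀ x i, P x i ∈ Icc (0 : ℝ) 1)
    (hIC : ∀ x ∈ box (fun _ => c) fun _ => c + 1, ∀ x' ∈ box (fun _ => c) fun _ => c + 1,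
      dotp x (P x') - T x' ≤ dotp x (P x) - T x) :
    IsIncentiveCompatible (fun y => P (shift c y))
      fun y => dotp (shift c y) (P (shift c y)) - T (shift c y) where
  measurable_alloc := hPm.comp (continuous_shift c).measurable
  measurable_utility := by
    have hshift := (continuous_shift (n := n) c).measurable
    have hcoord (i : Fin n) := (measurable_pi_apply i).comp hshift
    have halloc (i : Fin n) := (measurable_pi_apply i).comp (hPm.comp hshift)
    exact (Finset.measurable_sum _ fun i _ => (hcoord i).mul (halloc i)).sub (hTm.comp hshift)
  alloc_mem_Icc y := hP (shift c y)
  subgradient x y := by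
    have hdotp : dotp (shift c y) (P (shift c x)) = dotp (shift c x) (P (shift c x))
        + ∑ i, ((y i : ℝ) - x i) * P (shift c x) i := by
      simp only [dotp, ← Finset.sum_add_distrib, shift]
      exact Finset.sum_congr rfl fun i _ => by ring
    have hle := hIC _ (shift_mem_box c y) _ (shift_mem_box c x)
    linarith

lemma setIntegral_payment {P : (Fin n → ℝ) → Fin n → ℝ} {T : (Fin n → ℝ) → ℝ} {c : ℝ}
    (h : IsIncentiveCompatible (fun y => P (shift c y))
      fun y => dotp (shift c y) (P (shift c y)) - T (shift c y)) :
    ∫ x in box (fun _ => c) fun _ => c + 1, T x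
      = revenueFunctional c fun y => dotp (shift c y) (P (shift c y)) - T (shift c y) := by
  rw [integral_box, ← h.integral_payment]
  congr 1 with y
  exact (sub_sub_cancel _ _).symm

lemma setIntegral_bundle_payment (c p : ℝ) :
    ∫ x in (box (fun _ => c) fun _ => c + 1 : Set (Fin n → ℝ)),
        (if n * c + p ≤ ∑ i, x i then n * c + p else 0)
      = revenueFunctional (ι := Fin n) c (bundleUtility p) := by
  rw [integral_box, ← (isIncentiveCompatible_bundle p).integral_payment]
  congr 1 with y
  have hsum : ∑ i, (c + (y i : ℝ)) = n * c + total y := sum_shift c y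
  rw [← Finset.sum_mul, sum_shift, hsum, bundleUtility]
  simp only [add_le_add_iff_left]
  split_ifs with hy
  · rw [max_eq_left (by linarith)]
    ring
  · rw [max_eq_right (by linarith)]
    ring

end ShiftedCube

end Development

/-- **Grand bundling is optimal for shifted uniform items.** For every `n ≥ 1` there is a
`c₀ ≥ 0` such that for all `c ≥ c₀` there is a price `p` with the property that every IC and
IR mechanism `(P, T)` on the type space `X = [c, c+1]ⁿ` (with `T` Lebesgue-integrable on `X`)
earns expected revenue `∫_X T` at most the revenue `∫_X T_p` of the grand-bundling mechanism
at price `p`, whose payment is `p` if `Σᵢ xᵢ ≥ p` and `0` otherwise. -/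
theorem grand_bundling_optimal_shifted_uniform (n : ℕ) (hn : 1 ≤ n) :
    ∃ c₀ : ℝ, 0 ≤ c₀ ∧ ∀ c : ℝ, c₀ ≤ c →
      ∃ p : ℝ, ∀ (P : (Fin n → ℝ) → (Fin n → ℝ)) (T : (Fin n → ℝ) → ℝ),
        Measurable P → Measurable T →
        (∀ x, ∀ i, P x i ∈ Set.Icc (0:ℝ) 1) →
        (∀ x ∈ box (fun _ => c) (fun _ => c + 1), ∀ x' ∈ box (fun _ => c) (fun _ => c + 1),
          dotp x (P x') - T x' ≤ dotp x (P x) - T x) →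
        (∀ x ∈ box (fun _ => c) (fun _ => c + 1), 0 ≤ dotp x (P x) - T x) →
        IntegrableOn T (box (fun _ => c) (fun _ => c + 1)) volume →
        (∫ x in (box (fun _ => c) (fun _ => c + 1) : Set (Fin n → ℝ)), T x) ≤
          ∫ x in (box (fun _ => c) (fun _ => c + 1) : Set (Fin n → ℝ)),
            (if p ≤ ∑ i, x i then p else (0:ℝ)) := by
  have : NeZero n := ⟨by omega⟩
  obtain ⟨c₀, hc₀, hprice⟩ := exists_isOptimalBundlePrice (Fin n)
  refine ⟨c₀, hc₀, fun c hc => ?_⟩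
  obtain ⟨p, hp⟩ := hprice c hc
  refine ⟨n * c + p, fun P T hPm hTm hP hIC hIR _ => ?_⟩
  have hmech := isIncentiveCompatible_comp_shift hPm hTm hP hIC
  calc _ = revenueFunctional c fun y => dotp (shift c y) (P (shift c y)) - T (shift c y) :=
        setIntegral_payment hmech
    _ ≤ revenueFunctional c (bundleUtility p) :=
        hp _ hmech.boundedMeasurable (fun y => hIR _ (shift_mem_box c y)) hmech.monotone_total_sub
    _ = _ := (setIntegral_bundle_payment c p).symm
end

section
/- Grand bundling is suboptimal for many uniform items: For every c ≥ 0 there exists an integer n₀ such that for all n ≥ n₀ and every price p ∈ ℝ, there exists an IC and IR mechanism (𝒫, 𝒯) on the type space X = [c, c+1]ⁿ with 𝒯 Lebesgue-integrable such that ∫_X 𝒯(x) dx > ∫_X 𝒯_p(x) dx, where (𝒫_p, 𝒯_p) is the grand-bundling mechanism at price p. That is, for n iid items uniform on [c, c+1] with n sufficiently large, no take-it-or-leave-it offer of the grand bundle maximizes expected revenue. -/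
open MeasureTheory Set

/-! If the grand bundle is priced at `p` and a single item `k` is added to the menu at a price `t`
just below the top `b` of its value distribution, the types with `xₖ ≥ t` who could not afford the
bundle now pay `t`, while only types with `xₖ ≥ t` and `p ≤ ∑ xᵢ ≤ p + (b - t)` switch away from
the bundle. Conditionally on `xₖ ≥ t`, the first group has probability bounded below as long as
`p > b + (n - 1) a` for some `a` that values go below, whereas the second has vanishing probability
as `t → b`, by atomlessness. So any such bundle price is beaten. For large `n` the remaining prices
are irrelevant. If values can be negative, the threshold is eventually nonpositive. Otherwise let
`a ≥ 0` be the lowest value: by the Chernoff bound, selling the bundle for `n a + b + 1` fails with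
exponentially small probability, so this yields more than `n a + b`. -/

open ProbabilityTheory Filter

open scoped ENNReal Topology

section Measure

lemma exists_pos_forall_measure_ball_le {X : Type*} [MetricSpace X] [CompleteSpace X]
    [SecondCountableTopology X] [MeasurableSpace X] [BorelSpace X] (μ : Measure X)
    [IsFiniteMeasure μ] [NullSingletonClass μ] {ε : ℝ≥0∞} (hε : ε ≠ 0) :
    ∃ δ > 0, ∀ x, μ (Metric.ball x δ) ≤ ε := by
  obtain ⟨K, hK, hμK⟩ : ∃ K, IsCompact K ∧ μ Kᶜ ≤ ε := by
    simpa using isTightMeasureSet_iff_exists_isCompact_measure_compl_le.1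
      (isTightMeasureSet_singleton (μ := μ)) ε hε.bot_lt
  have small_nhd (x : X) : ∃ U ⊇ {x}, IsOpen U ∧ μ U < ε :=
    Set.exists_isOpen_lt_of_lt _ _ (by simpa using hε.bot_lt)
  choose U hxU hU hμU using small_nhd
  obtain ⟨δ, hδ, hball⟩ := lebesgue_number_lemma_of_metric hK hU
    fun x _ => mem_iUnion.2 ⟨x, hxU x rfl⟩
  refine ⟨δ / 2, half_pos hδ, fun x => ?_⟩
  by_cases hx : Disjoint (Metric.ball x (δ / 2)) K
  · exact (measure_mono hx.subset_compl_right).trans hμK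
  · obtain ⟨y, hyx, hyK⟩ := not_disjoint_iff.1 hx
    obtain ⟨z, hz⟩ := hball y hyK
    have hsub : Metric.ball x (δ / 2) ⊆ Metric.ball y δ :=
      Metric.ball_subset_ball' (by linarith [Metric.mem_ball'.1 hyx])
    exact (measure_mono (hsub.trans hz)).trans (hμU z).le

lemma exists_pos_forall_measure_Icc_le (ν : Measure ℝ) [IsFiniteMeasure ν]
    [NullSingletonClass ν] {ε : ℝ≥0∞} (hε : ε ≠ 0) : ∃ δ > 0, ∀ s, ν (Icc s (s + δ)) ≤ ε := by
  obtain ⟨δ, hδ, hball⟩ := exists_pos_forall_measure_ball_le ν hε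
  refine ⟨δ / 2, half_pos hδ, fun s => (measure_mono ?_).trans (hball s)⟩
  rw [Real.ball_eq_Ioo]
  exact Icc_subset_Ioo (by linarith) (by linarith)

variable {ι : Type*} [Fintype ι]

lemma measure_pi_inter_le_of_slice_le [DecidableEq ι] {X : ι → Type*}
    [∀ i, MeasurableSpace (X i)] (ν : ∀ i, Measure (X i)) [∀ i, SigmaFinite (ν i)] {j : ι}
    [IsProbabilityMeasure (ν j)] {E S : Set (∀ i, X i)} (hE : MeasurableSet E)
    (hS : MeasurableSet S) (hEj : ∀ x y, Function.update x j y ∈ E ↔ x ∈ E) {ε : ℝ≥0∞}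
    (hSj : ∀ x, ν j {y | Function.update x j y ∈ S} ≤ ε) :
    Measure.pi ν (E ∩ S) ≤ ε * Measure.pi ν E := by
  rw [← lintegral_indicator_one (hE.inter hS), ← lintegral_indicator_const hE]
  refine lintegral_le_of_lmarginal_le {j} (measurable_one.indicator (hE.inter hS))
    (measurable_const.indicator hE) fun x => ?_
  simp only [lmarginal_singleton]
  by_cases hx : x ∈ E
  · have hslice (y : X j) : Function.update x j y ∈ E ∩ S ↔ Function.update x j y ∈ S :=
      and_iff_right ((hEj x y).2 hx)
    calc ∫⁻ y, (E ∩ S).indicator 1 (Function.update x j y) ∂ν j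
        = ∫⁻ y, {y | Function.update x j y ∈ S}.indicator 1 y ∂ν j :=
          lintegral_congr fun y => by
            by_cases hy : Function.update x j y ∈ S <;> simp [hslice y, hy]
      _ = ν j {y | Function.update x j y ∈ S} :=
          lintegral_indicator_one (measurable_update x hS)
      _ ≤ ε := hSj x
      _ = ∫⁻ y, E.indicator (fun _ => ε) (Function.update x j y) ∂ν j := by
          simp [indicator, hEj, hx]
  · simp [indicator, hEj, hx]

lemma measure_pi_mem_and_sum_mem_Icc_le (ν : ι → Measure ℝ) [∀ i, IsProbabilityMeasure (ν i)]
    {k j : ι} (hkj : k ≠ j) {A : Set ℝ} (hA : MeasurableSet A) {δ : ℝ} {ε : ℝ≥0∞}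
    (hε : ∀ s, ν j (Icc s (s + δ)) ≤ ε) (p : ℝ) :
    Measure.pi ν {x | x k ∈ A ∧ ∑ i, x i ∈ Icc p (p + δ)} ≤ ε * ν k A := by
  classical
  rw [← (measurePreserving_eval ν k).measure_preimage hA.nullMeasurableSet]
  refine measure_pi_inter_le_of_slice_le ν (j := j) (S := {x | ∑ i, x i ∈ Icc p (p + δ)})
    (measurable_pi_apply k hA)
    (measurableSet_Icc.preimage (Finset.univ.measurable_fun_sum fun i _ => measurable_pi_apply i))
    (fun x y => by simp [hkj]) fun x => ?_
  set r := ∑ i ∈ Finset.univ \ {j}, x i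
  have hslice : {y | ∑ i, Function.update x j y i ∈ Icc p (p + δ)} =
      Icc (p - r) (p - r + δ) := by
    ext y
    rw [mem_ofPred_eq, Finset.sum_update_of_mem (Finset.mem_univ j), mem_Icc, mem_Icc]
    constructor <;> rintro ⟨h, h'⟩ <;> constructor <;> linarith
  exact hslice ▸ hε (p - r)

lemma measureReal_pi_sum_le_le (ν : Measure ℝ) [IsProbabilityMeasure ν] {t : ℝ} (ht : t ≤ 0)
    (hint : Integrable (fun x => Real.exp (t * x)) ν) (s : ℝ) :
    (Measure.pi fun _ : ι => ν).real {x | ∑ i, x i ≤ s} ≤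
      Real.exp (-t * s) * mgf id ν t ^ Fintype.card ι := by
  set μ := Measure.pi fun _ : ι => ν
  have hindep : iIndepFun (fun i (x : ι → ℝ) => x i) μ :=
    iIndepFun_pi (X := fun _ => id) fun _ => aemeasurable_id
  have hmgf (i : ι) : mgf (fun x : ι → ℝ => x i) μ t = mgf id ν t := by
    rw [← mgf_id_map (measurable_pi_apply i).aemeasurable, (measurePreserving_eval _ i).map_eq]
  have hsum := hindep.integrable_exp_mul_sum (fun i => measurable_pi_apply i) (s := Finset.univ)
    fun i _ => (measurePreserving_eval (fun _ : ι => ν) i).integrable_comp_of_integrable hint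
  convert measure_le_le_exp_mul_mgf s ht hsum using 2
  · simp
  · rw [hindep.mgf_sum (fun i => measurable_pi_apply i)]
    simp [hmgf]

lemma integrable_exp_mul_of_ae_le (ν : Measure ℝ) [IsFiniteMeasure ν] {a t : ℝ}
    (ha : ∀ᵐ x ∂ν, a ≤ x) (ht : t ≤ 0) : Integrable (fun x => Real.exp (t * x)) ν := by
  simpa using integrable_exp_mul_of_le (X := fun x => -x) (-t) (-a) (neg_nonneg.2 ht)
    (by fun_prop) (by simpa using ha)

lemma mgf_lt_exp_mul_of_ae_le (ν : Measure ℝ) [IsProbabilityMeasure ν] [NullSingletonClass ν]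
    {a t : ℝ} (ha : ∀ᵐ x ∂ν, a ≤ x) (ht : t < 0) : mgf id ν t < Real.exp (t * a) := by
  have hlt : ∀ᵐ x ∂ν, Real.exp (t * x) < Real.exp (t * a) := by
    filter_upwards [ha, ν.ae_ne a] with x hx hne
    exact Real.exp_lt_exp.2 (mul_lt_mul_of_neg_left (lt_of_le_of_ne hx hne.symm) ht)
  obtain ⟨x, hx, hle⟩ :=
    exists_notMem_null_integral_le (integrable_exp_mul_of_ae_le ν ha ht.le) (ae_iff.1 hlt)
  exact hle.trans_lt (not_not.1 hx)

end Measure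

section Mechanism

variable {n : ℕ}

/-- The payment in the grand-bundling mechanism at price `p`. -/
noncomputable def bundlePayment (p : ℝ) (x : Fin n → ℝ) : ℝ :=
  if p ≤ ∑ i, x i then p else 0

/-- The menu offering the grand bundle at price `p`, item `k` alone at price `t`, and the outside
option. An entry of a menu is a pair of an allocation and a payment. -/
def bundleItemMenu (k : Fin n) (p t : ℝ) : Set ((Fin n → ℝ) × ℝ) :=
  {(1, p), (Pi.single k 1, t), (0, 0)}

/-- The entry of `bundleItemMenu k p t` chosen by type `x`. Ties are broken in the order in which
the entries are listed. -/
noncomputable def menuChoice (k : Fin n) (p t : ℝ) (x : Fin n → ℝ) : (Fin n → ℝ) × ℝ :=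
  if p ≤ ∑ i, x i ∧ x k - t ≤ ∑ i, x i - p then (1, p)
  else if t ≤ x k then (Pi.single k 1, t) else (0, 0)

/-- The types that buy item `k` alone from the menu and buy nothing in the grand-bundling
mechanism. -/
def newBuyers (k : Fin n) (p t : ℝ) : Set (Fin n → ℝ) :=
  {x | t ≤ x k ∧ ∑ i, x i < p}

/-- The types that buy item `k` alone from the menu and buy the bundle in the grand-bundling
mechanism. -/
def switchers (k : Fin n) (p t : ℝ) : Set (Fin n → ℝ) :=
  {x | p ≤ ∑ i, x i ∧ ∑ i, x i - p < x k - t}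

lemma menuChoice_mem (k : Fin n) (p t : ℝ) (x : Fin n → ℝ) :
    menuChoice k p t x ∈ bundleItemMenu k p t := by
  unfold menuChoice bundleItemMenu
  split_ifs <;> simp

lemma mem_Icc_of_mem_bundleItemMenu {k : Fin n} {p t : ℝ} {e : (Fin n → ℝ) × ℝ}
    (he : e ∈ bundleItemMenu k p t) (i : Fin n) : e.1 i ∈ Icc (0 : ℝ) 1 := by
  rcases he with rfl | rfl | rfl
  · simp
  · by_cases h : i = k <;> simp [h]
  · simp

lemma dotp_one (x : Fin n → ℝ) : dotp x 1 = ∑ i, x i := by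
  simp [dotp]

lemma dotp_single_one (x : Fin n → ℝ) (k : Fin n) : dotp x (Pi.single k 1) = x k := by
  simp [dotp, Pi.single_apply]

lemma dotp_zero (x : Fin n → ℝ) : dotp x 0 = 0 := by
  simp [dotp]

lemma utility_le_utility_menuChoice {k : Fin n} {p t : ℝ} {e : (Fin n → ℝ) × ℝ}
    (he : e ∈ bundleItemMenu k p t) (x : Fin n → ℝ) :
    dotp x e.1 - e.2 ≤ dotp x (menuChoice k p t x).1 - (menuChoice k p t x).2 := by
  unfold menuChoice
  rcases he with rfl | rfl | rfl <;> split_ifs <;>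
    simp only [dotp_one, dotp_single_one, dotp_zero] <;> grind

lemma utility_menuChoice_nonneg (k : Fin n) (p t : ℝ) (x : Fin n → ℝ) :
    0 ≤ dotp x (menuChoice k p t x).1 - (menuChoice k p t x).2 := by
  have hout : ((0, 0) : (Fin n → ℝ) × ℝ) ∈ bundleItemMenu k p t := by simp [bundleItemMenu]
  simpa [dotp_zero] using utility_le_utility_menuChoice hout x

lemma measurableSet_le_sum (p : ℝ) : MeasurableSet {x : Fin n → ℝ | p ≤ ∑ i, x i} :=
  measurableSet_le measurable_const (by fun_prop)

lemma measurableSet_newBuyers (k : Fin n) (p t : ℝ) : MeasurableSet (newBuyers k p t) := by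
  rw [newBuyers, ofPred_and]
  exact (measurableSet_le (by fun_prop) (by fun_prop)).inter
    (measurableSet_lt (by fun_prop) (by fun_prop))

lemma measurableSet_switchers (k : Fin n) (p t : ℝ) : MeasurableSet (switchers k p t) := by
  rw [switchers, ofPred_and]
  exact (measurableSet_le_sum p).inter (measurableSet_lt (by fun_prop) (by fun_prop))

lemma measurable_menuChoice (k : Fin n) (p t : ℝ) : Measurable (menuChoice k p t) := by
  refine .ite ?_ measurable_const
    (.ite (measurableSet_le (by fun_prop) (by fun_prop)) measurable_const measurable_const)
  rw [ofPred_and]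
  exact (measurableSet_le_sum p).inter (measurableSet_le (by fun_prop) (by fun_prop))

lemma menuChoice_snd_eq (k : Fin n) (p t : ℝ) :
    (fun x => (menuChoice k p t x).2) = bundlePayment p +
      (newBuyers k p t).indicator (fun _ => t) - (switchers k p t).indicator fun _ => p - t := by
  ext x
  simp only [menuChoice, bundlePayment, newBuyers, switchers, Pi.add_apply, Pi.sub_apply,
    indicator, mem_ofPred_eq]
  split_ifs <;> grind

lemma bundlePayment_eq_indicator (p : ℝ) :
    bundlePayment p = {x : Fin n → ℝ | p ≤ ∑ i, x i}.indicator fun _ => p := by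
  ext x
  simp [bundlePayment, indicator]

lemma integral_bundlePayment (μ : Measure (Fin n → ℝ)) (p : ℝ) :
    ∫ x, bundlePayment p x ∂μ = p * μ.real {x | p ≤ ∑ i, x i} := by
  rw [bundlePayment_eq_indicator, integral_indicator_const p (measurableSet_le_sum p),
    smul_eq_mul, mul_comm]

section Revenue

variable (μ : Measure (Fin n → ℝ)) [IsFiniteMeasure μ]

lemma integrable_bundlePayment (p : ℝ) : Integrable (bundlePayment p) μ := by
  rw [bundlePayment_eq_indicator]
  exact (integrable_const p).indicator (measurableSet_le_sum p)

lemma integrable_menuChoice_snd (k : Fin n) (p t : ℝ) :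
    Integrable (fun x => (menuChoice k p t x).2) μ := by
  rw [menuChoice_snd_eq]
  exact ((integrable_bundlePayment μ p).add
    ((integrable_const t).indicator (measurableSet_newBuyers k p t))).sub
    ((integrable_const (p - t)).indicator (measurableSet_switchers k p t))

lemma integral_menuChoice_snd (k : Fin n) (p t : ℝ) :
    ∫ x, (menuChoice k p t x).2 ∂μ = ∫ x, bundlePayment p x ∂μ +
      t * μ.real (newBuyers k p t) - (p - t) * μ.real (switchers k p t) := by
  have hnew : Integrable ((newBuyers k p t).indicator fun _ => t) μ :=
    (integrable_const t).indicator (measurableSet_newBuyers k p t)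
  have hswitch : Integrable ((switchers k p t).indicator fun _ => p - t) μ :=
    (integrable_const (p - t)).indicator (measurableSet_switchers k p t)
  rw [menuChoice_snd_eq, integral_sub' ((integrable_bundlePayment μ p).add hnew) hswitch,
    integral_add' (integrable_bundlePayment μ p) hnew,
    integral_indicator_const t (measurableSet_newBuyers k p t),
    integral_indicator_const (p - t) (measurableSet_switchers k p t), smul_eq_mul, smul_eq_mul]
  ring

end Revenue

lemma integral_bundlePayment_le (μ : Measure (Fin n → ℝ)) [IsProbabilityMeasure μ] {p q : ℝ}
    (hpq : p ≤ q) (hq : 0 ≤ q) : ∫ x, bundlePayment p x ∂μ ≤ q := by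
  rw [integral_bundlePayment]
  calc p * μ.real {x | p ≤ ∑ i, x i} ≤ q * μ.real {x | p ≤ ∑ i, x i} := by gcongr
    _ ≤ q := mul_le_of_le_one_right hq measureReal_le_one

end Mechanism

section IID

variable (ν : Measure ℝ) [IsProbabilityMeasure ν] {n : ℕ}

lemma le_measureReal_newBuyers (k : Fin n) {a b p t : ℝ} (hb : ∀ᵐ x ∂ν, x ≤ b)
    (hp : b + (n - 1) * a < p) :
    ν.real (Ici t) * ν.real (Iic a) ^ (n - 1) ≤
      (Measure.pi fun _ => ν).real (newBuyers k p t) := by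
  set s : Fin n → Set ℝ := Function.update (fun _ => Iic a) k (Ici t) with hs
  have hbox : (Measure.pi fun _ => ν).real (univ.pi s) =
      ν.real (Ici t) * ν.real (Iic a) ^ (n - 1) := by
    rw [measureReal_def, Measure.pi_pi, ENNReal.toReal_prod,
      ← Finset.mul_prod_erase _ _ (Finset.mem_univ k)]
    congr 1
    · simp [hs, measureReal_def]
    · rw [Finset.prod_eq_pow_card (b := ν.real (Iic a))]
      · simp
      · intro i hi
        simp [hs, Finset.ne_of_mem_erase hi, measureReal_def]
  rw [← hbox, measureReal_def, measureReal_def]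
  refine ENNReal.toReal_mono (measure_ne_top _ _) (measure_mono_ae ?_)
  have hxk : ∀ᵐ x ∂Measure.pi fun _ : Fin n => ν, x k ≤ b :=
    (measurePreserving_eval (fun _ => ν) k).quasiMeasurePreserving.ae hb
  filter_upwards [hxk] with x hxk hx
  have hxt : t ≤ x k := by simpa [hs] using hx k (mem_univ k)
  have hxa : ∀ i ∈ Finset.univ.erase k, x i ≤ a := fun i hi => by
    simpa [hs, Finset.ne_of_mem_erase hi] using hx i (mem_univ i)
  refine ⟨hxt, ?_⟩
  calc ∑ i, x i = x k + ∑ i ∈ Finset.univ.erase k, x i :=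
        (Finset.add_sum_erase _ _ (Finset.mem_univ k)).symm
    _ ≤ b + (n - 1) * a := by
        gcongr
        simpa [Nat.cast_sub k.pos] using Finset.sum_le_card_nsmul _ _ a hxa
    _ < p := hp

lemma measureReal_switchers_le {k j : Fin n} (hkj : k ≠ j) {b t δ : ℝ} {ε : ℝ≥0∞}
    (hb : ∀ᵐ x ∂ν, x ≤ b) (hbt : b ≤ t + δ) (hε : ∀ s, ν (Icc s (s + δ)) ≤ ε) (hε' : ε ≠ ∞)
    (p : ℝ) :
    (Measure.pi fun _ => ν).real (switchers k p t) ≤ ε.toReal * ν.real (Ici t) := by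
  have hxk : ∀ᵐ x ∂Measure.pi fun _ : Fin n => ν, x k ≤ b :=
    (measurePreserving_eval (fun _ => ν) k).quasiMeasurePreserving.ae hb
  rw [measureReal_def, measureReal_def, ← ENNReal.toReal_mul]
  refine ENNReal.toReal_mono (ENNReal.mul_ne_top hε' (measure_ne_top _ _))
    ((measure_mono_ae ?_).trans
      (measure_pi_mem_and_sum_mem_Icc_le (fun _ => ν) hkj measurableSet_Ici hε p))
  filter_upwards [hxk] with x hxk hx
  rcases hx with ⟨hp, hswitch⟩
  exact ⟨by simp only [mem_Ici]; linarith, hp, by linarith⟩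

lemma exists_integral_bundlePayment_lt_menuChoice [NullSingletonClass ν] {k j : Fin n}
    (hkj : k ≠ j) {a b p : ℝ} (hb : IsLUB ν.support b) (hb_pos : 0 < b)
    (ha : ν (Iic a) ≠ 0) (hp : b + (n - 1) * a < p) (hp_pos : 0 < p) :
    ∃ t, ∫ x, bundlePayment p x ∂(Measure.pi fun _ : Fin n => ν) <
      ∫ x, (menuChoice k p t x).2 ∂Measure.pi fun _ => ν := by
  set v := ν.real (Iic a) ^ (n - 1)
  have hv : 0 < v := pow_pos (ENNReal.toReal_pos ha (measure_ne_top _ _)) _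
  set ε := b * v / (4 * p)
  have hε : 0 < ε := by positivity
  have hb_ae : ∀ᵐ x ∂ν, x ≤ b := by
    filter_upwards [Measure.support_mem_ae] with x hx using hb.1 hx
  obtain ⟨δ, hδ, hνδ⟩ := exists_pos_forall_measure_Icc_le ν (ENNReal.ofReal_pos.2 hε).ne'
  set t := max (b - δ) (b / 2)
  have htb : t < b := max_lt (by linarith) (by linarith)
  have hbδ : b ≤ t + δ := by linarith [le_max_left (b - δ) (b / 2)]
  have hbt : b / 2 ≤ t := le_max_right _ _
  set w := ν.real (Ici t)
  have hw : 0 < w := by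
    obtain ⟨x, hx, htx⟩ := (lt_isLUB_iff hb).1 htb
    exact ENNReal.toReal_pos ((Measure.mem_support_iff_forall x).1 hx _ (Ici_mem_nhds htx)).ne'
      (measure_ne_top _ _)
  have hnew := le_measureReal_newBuyers ν k (t := t) hb_ae hp
  have hswitch := measureReal_switchers_le ν hkj hb_ae hbδ hνδ ENNReal.ofReal_ne_top p
  rw [ENNReal.toReal_ofReal hε.le] at hswitch
  set μ := Measure.pi fun _ : Fin n => ν
  refine ⟨t, ?_⟩
  rw [integral_menuChoice_snd, add_sub_assoc, lt_add_iff_pos_right, sub_pos]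
  calc (p - t) * μ.real (switchers k p t) ≤ p * μ.real (switchers k p t) := by
        gcongr
        linarith
    _ ≤ p * (ε * w) := by gcongr
    _ = b / 2 * (w * v) / 2 := by
        simp only [ε]
        field_simp
        norm_num
    _ < b / 2 * (w * v) := half_lt_self (by positivity)
    _ ≤ t * μ.real (newBuyers k p t) := by gcongr

lemma le_integral_bundlePayment {a : ℝ} (ha : ∀ᵐ x ∂ν, a ≤ x) {q : ℝ} (hq : 0 ≤ q) :
    q - q * (Real.exp q * mgf id ν (-1) ^ n) ≤
      ∫ x, bundlePayment q x ∂(Measure.pi fun _ : Fin n => ν) := by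
  set μ := Measure.pi fun _ : Fin n => ν
  have hchernoff : μ.real {x | ∑ i, x i ≤ q} ≤ Real.exp q * mgf id ν (-1) ^ n := by
    simpa using measureReal_pi_sum_le_le (ι := Fin n) ν (t := -1) (by norm_num)
      (integrable_exp_mul_of_ae_le ν ha (by norm_num)) q
  have hcover : 1 ≤ μ.real {x | ∑ i, x i ≤ q} + μ.real {x | q ≤ ∑ i, x i} := by
    have hunion : {x : Fin n → ℝ | ∑ i, x i ≤ q} ∪ {x | q ≤ ∑ i, x i} = univ :=
      eq_univ_of_forall fun x => le_total (∑ i, x i) q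
    rw [← probReal_univ (μ := μ), ← hunion]
    exact measureReal_union_le _ _
  rw [integral_bundlePayment]
  nlinarith

lemma eventually_lt_integral_bundlePayment [NullSingletonClass ν] {a d : ℝ} (ha : 0 ≤ a)
    (hd : 0 ≤ d) (hν : ∀ᵐ x ∂ν, a ≤ x) :
    ∀ᶠ n : ℕ in atTop, n * a + d <
      ∫ x, bundlePayment (n * a + d + 1) x ∂(Measure.pi fun _ : Fin n => ν) := by
  set r := Real.exp a * mgf id ν (-1)
  have hr0 : 0 ≤ r := mul_nonneg (Real.exp_nonneg a) mgf_nonneg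
  have hr1 : r < 1 := by
    have := mul_lt_mul_of_pos_left (mgf_lt_exp_mul_of_ae_le ν hν neg_one_lt_zero) (Real.exp_pos a)
    rwa [← Real.exp_add, neg_one_mul, add_neg_cancel, Real.exp_zero] at this
  have hlim : Tendsto (fun n : ℕ => Real.exp (d + 1) * (a * (n * r ^ n) + (d + 1) * r ^ n))
      atTop (𝓝 (Real.exp (d + 1) * (a * 0 + (d + 1) * 0))) :=
    (((tendsto_self_mul_const_pow_of_lt_one hr0 hr1).const_mul a).add
      ((tendsto_pow_atTop_nhds_zero_of_lt_one hr0 hr1).const_mul (d + 1))).const_mul _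
  filter_upwards [hlim.eventually_lt_const (u := 1) (by norm_num)] with n hn
  set q := n * a + d + 1 with hq
  have hloss : q * (Real.exp q * mgf id ν (-1) ^ n) =
      Real.exp (d + 1) * (a * (n * r ^ n) + (d + 1) * r ^ n) := by
    have : Real.exp q = Real.exp (d + 1) * Real.exp a ^ n := by
      rw [← Real.exp_nat_mul, ← Real.exp_add, hq]
      ring_nf
    rw [this, mul_pow]
    ring
  have := le_integral_bundlePayment (n := n) ν hν (q := q) (by positivity)
  linarith

lemma eventually_exists_price_of_neg {a : ℝ} (ha : a < 0) (b : ℝ) :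
    ∀ᶠ n : ℕ in atTop, ∀ p : ℝ, ∃ q, 0 < q ∧ b + (n - 1) * a < q ∧
      ∫ x, bundlePayment p x ∂(Measure.pi fun _ : Fin n => ν) ≤
        ∫ x, bundlePayment q x ∂(Measure.pi fun _ : Fin n => ν) := by
  have hlim : Tendsto (fun n : ℕ => b + ((n : ℝ) - 1) * a) atTop atBot :=
    tendsto_atBot_add_const_left _ b
      ((tendsto_atTop_add_const_right _ (-1) tendsto_natCast_atTop_atTop).atTop_mul_const_of_neg ha)
  filter_upwards [hlim.eventually_le_atBot 0] with n hn p
  rcases le_or_gt p 0 with hp | hp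
  · refine ⟨1, one_pos, by linarith, (integral_bundlePayment_le _ hp le_rfl).trans ?_⟩
    rw [integral_bundlePayment]
    positivity
  · exact ⟨p, hp, by linarith, le_rfl⟩

lemma eventually_exists_price_of_nonneg [NullSingletonClass ν] {a b : ℝ} (ha : 0 ≤ a)
    (hb : 0 ≤ b) (hν : ∀ᵐ x ∂ν, a ≤ x) :
    ∀ᶠ n : ℕ in atTop, ∀ p : ℝ, ∃ q, n * a + b < q ∧
      ∫ x, bundlePayment p x ∂(Measure.pi fun _ : Fin n => ν) ≤
        ∫ x, bundlePayment q x ∂(Measure.pi fun _ : Fin n => ν) := by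
  filter_upwards [eventually_lt_integral_bundlePayment ν ha hb hν] with n hn p
  rcases le_or_gt p (n * a + b) with hp | hp
  · exact ⟨n * a + b + 1, lt_add_one _,
      (integral_bundlePayment_le _ hp (by positivity)).trans hn.le⟩
  · exact ⟨p, hp, le_rfl⟩

lemma eventually_exists_price [NullSingletonClass ν] {b : ℝ} (hb : 0 ≤ b) :
    ∀ᶠ n : ℕ in atTop, ∀ p : ℝ, ∃ q a, 0 < q ∧ ν (Iic a) ≠ 0 ∧ b + (n - 1) * a < q ∧
      ∫ x, bundlePayment p x ∂(Measure.pi fun _ : Fin n => ν) ≤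
        ∫ x, bundlePayment q x ∂(Measure.pi fun _ : Fin n => ν) := by
  by_cases hneg : ∃ a < 0, ν (Iic a) ≠ 0
  · obtain ⟨a, ha, hνa⟩ := hneg
    filter_upwards [eventually_exists_price_of_neg ν ha b] with n hn p
    obtain ⟨q, hq, haq, hpq⟩ := hn p
    exact ⟨q, a, hq, hνa, haq, hpq⟩
  · push Not at hneg
    have hsupp : ∀ x ∈ ν.support, ∀ a, x < a → ν (Iic a) ≠ 0 := fun x hx a hxa =>
      ((Measure.mem_support_iff_forall x).1 hx _ (Iic_mem_nhds hxa)).ne'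
    have hlower : 0 ∈ lowerBounds ν.support := fun x hx => by
      by_contra! hx0
      exact hsupp x hx (x / 2) (by linarith) (hneg _ (by linarith))
    have hglb : IsGLB ν.support (sInf ν.support) :=
      isGLB_csInf (Measure.nonempty_support (NeZero.ne ν)) ⟨0, hlower⟩
    have hνae : ∀ᵐ x ∂ν, sInf ν.support ≤ x := by
      filter_upwards [Measure.support_mem_ae] with x hx using hglb.1 hx
    set a₀ := sInf ν.support
    have ha₀ : 0 ≤ a₀ := hglb.2 hlower
    filter_upwards [eventually_exists_price_of_nonneg ν ha₀ hb hνae, eventually_gt_atTop 0]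
      with n hn hn_pos p
    obtain ⟨q, hq, hpq⟩ := hn p
    have hn_pos' : (0 : ℝ) < n := Nat.cast_pos.2 hn_pos
    obtain ⟨a, ha₀a, haq⟩ : ∃ a > a₀, a < (q - b) / n :=
      exists_between ((lt_div_iff₀ hn_pos').2 (by linarith))
    obtain ⟨x, hx, hxa⟩ := (isGLB_lt_iff hglb).1 ha₀a
    rw [lt_div_iff₀ hn_pos'] at haq
    refine ⟨q, a, lt_of_le_of_lt (by positivity) hq, hsupp x hx a hxa, ?_, hpq⟩
    linarith

end IID

lemma restrict_box_eq_pi {n : ℕ} (a b : Fin n → ℝ) :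
    volume.restrict (box a b) = Measure.pi fun i => volume.restrict (Icc (a i) (b i)) := by
  have hbox : box a b = univ.pi fun i => Icc (a i) (b i) := by
    ext x
    simp only [box, mem_ofPred_eq, mem_univ_pi]
  rw [hbox, volume_pi, Measure.restrict_pi_pi]

lemma restrict_Icc_Ioi_pos {a b s : ℝ} (hab : a < b) (hs : s < b) :
    0 < volume.restrict (Icc a b) (Ioi s) := by
  have hsub : Ioc (max s a) b ⊆ Ioi s ∩ Icc a b := fun x hx =>
    ⟨(max_lt_iff.1 hx.1).1, (max_lt_iff.1 hx.1).2.le, hx.2⟩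
  rw [Measure.restrict_apply measurableSet_Ioi]
  exact lt_of_lt_of_le (by simp [hab, hs]) (measure_mono hsub)

theorem grand_bundling_suboptimal_many_uniform_items_general (ν : Measure ℝ)
    [IsProbabilityMeasure ν] [NullSingletonClass ν] {B : ℝ} (hB : ∀ᵐ x ∂ν, x ≤ B)
    (hpos : 0 < ν (Ioi 0)) :
    ∃ n₀ : ℕ, ∀ n : ℕ, n₀ ≤ n → ∀ p : ℝ,
      ∃ (P : (Fin n → ℝ) → (Fin n → ℝ)) (T : (Fin n → ℝ) → ℝ),
      Measurable P ∧ Measurable T ∧ (∀ x i, P x i ∈ Icc (0 : ℝ) 1) ∧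
      (∀ x x', dotp x (P x') - T x' ≤ dotp x (P x) - T x) ∧
      (∀ x, 0 ≤ dotp x (P x) - T x) ∧
      Integrable T (Measure.pi fun _ => ν) ∧
      ∫ x, bundlePayment p x ∂(Measure.pi fun _ : Fin n => ν) <
        ∫ x, T x ∂(Measure.pi fun _ : Fin n => ν) := by
  obtain ⟨x, hx_pos, hx⟩ := Measure.nonempty_inter_support_of_pos hpos
  have hbdd : BddAbove ν.support :=
    ⟨B, fun y hy => Measure.support_subset_of_isClosed isClosed_Iic hB hy⟩
  have hb : IsLUB ν.support (sSup ν.support) := isLUB_csSup ⟨x, hx⟩ hbdd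
  have hb_pos : 0 < sSup ν.support := hx_pos.trans_le (hb.1 hx)
  obtain ⟨n₀, hn₀⟩ := eventually_atTop.1
    ((eventually_exists_price ν hb_pos.le).and (eventually_ge_atTop 2))
  refine ⟨n₀, fun n hn p => ?_⟩
  obtain ⟨hprice, hn2⟩ := hn₀ n hn
  obtain ⟨q, a, hq, ha, haq, hpq⟩ := hprice p
  have : Nontrivial (Fin n) := Fin.nontrivial_iff_two_le.2 hn2
  obtain ⟨k, j, hkj⟩ := exists_pair_ne (Fin n)
  obtain ⟨t, ht⟩ := exists_integral_bundlePayment_lt_menuChoice ν hkj hb hb_pos ha haq hq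
  exact ⟨fun x => (menuChoice k q t x).1, fun x => (menuChoice k q t x).2,
    (measurable_menuChoice k q t).fst, (measurable_menuChoice k q t).snd,
    fun x => mem_Icc_of_mem_bundleItemMenu (menuChoice_mem k q t x),
    fun x x' => utility_le_utility_menuChoice (menuChoice_mem k q t x') x,
    utility_menuChoice_nonneg k q t,
    integrable_menuChoice_snd _ k q t, hpq.trans_lt ht⟩

/-- **Grand bundling is suboptimal for many uniform items.** For every `c ≥ 0` there is an
`n₀` such that for all `n ≥ n₀` and every price `p`, there exists an IC and IR mechanism
`(P, T)` on the type space `X = [c, c+1]ⁿ` (with `T` Lebesgue-integrable on `X`) whose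
expected revenue `∫_X T` strictly exceeds the revenue of the grand-bundling mechanism at
price `p`, whose payment is `p` if `Σᵢ xᵢ ≥ p` and `0` otherwise. -/
theorem grand_bundling_suboptimal_many_uniform_items (c : ℝ) (hc : 0 ≤ c) :
    ∃ n₀ : ℕ, ∀ n : ℕ, n₀ ≤ n → ∀ p : ℝ,
      ∃ (P : (Fin n → ℝ) → (Fin n → ℝ)) (T : (Fin n → ℝ) → ℝ),
        Measurable P ∧ Measurable T ∧
        (∀ x, ∀ i, P x i ∈ Set.Icc (0:ℝ) 1) ∧
        (∀ x ∈ box (fun _ => c) (fun _ => c + 1), ∀ x' ∈ box (fun _ => c) (fun _ => c + 1),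
          dotp x (P x') - T x' ≤ dotp x (P x) - T x) ∧
        (∀ x ∈ box (fun _ => c) (fun _ => c + 1), 0 ≤ dotp x (P x) - T x) ∧
        IntegrableOn T (box (fun _ => c) (fun _ => c + 1)) volume ∧
        (∫ x in (box (fun _ => c) (fun _ => c + 1) : Set (Fin n → ℝ)),
            (if p ≤ ∑ i, x i then p else (0:ℝ))) <
          ∫ x in (box (fun _ => c) (fun _ => c + 1) : Set (Fin n → ℝ)), T x := by
  have : IsProbabilityMeasure (volume.restrict (Icc c (c + 1))) := ⟨by simp⟩
  obtain ⟨n₀, h⟩ := grand_bundling_suboptimal_many_uniform_items_general _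
    (ae_restrict_of_forall_mem measurableSet_Icc fun _ hx => hx.2)
    (restrict_Icc_Ioi_pos (lt_add_one c) (by linarith))
  simp only [IntegrableOn, restrict_box_eq_pi]
  refine ⟨n₀, fun n hn p => ?_⟩
  obtain ⟨P, T, hP, hT, hrange, hIC, hIR, hrevenue⟩ := h n hn p
  exact ⟨P, T, hP, hT, hrange, fun x _ x' _ => hIC x x', fun x _ => hIR x, hrevenue⟩
end

section
/- Exclusion-set utilities are feasible: Let X = ∏_{i=1}^n [aᵢ, bᵢ] ⊂ ℝⁿ be a compact box with 0 ≤ aᵢ < bᵢ for each i, and let Z ⊆ X be an exclusion set of X (convex, compact, decreasing, with nonempty interior). Define u_Z : X → ℝ by u_Z(x) = min_{z ∈ Z} ‖z − x‖₁. Then u_Z is nonnegative, coordinatewise nondecreasing, convex, and 1-Lipschitz with respect to the ℓ¹ norm; in particular u_Z ∈ 𝒰(X) ∩ ℒ₁(X) and u_Z is the utility function of an incentive compatible and individually rational mechanism. -/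
open MeasureTheory Set

/-- ℓ¹ distance on `Fin n → ℝ`. -/
noncomputable def l1dist {n : ℕ} (x y : Fin n → ℝ) : ℝ := ∑ i, |x i - y i|

/-- `u ∈ 𝒰(X)`: continuous, coordinatewise nondecreasing and convex on `X`. -/
def memU {n : ℕ} (X : Set (Fin n → ℝ)) (u : (Fin n → ℝ) → ℝ) : Prop :=
  ContinuousOn u X ∧ (∀ x ∈ X, ∀ y ∈ X, (∀ i, x i ≤ y i) → u x ≤ u y) ∧ ConvexOn ℝ X u

/-- `u ∈ ℒ₁(X)`: 1-Lipschitz with respect to the ℓ¹ norm on `X`. -/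
def memL1 {n : ℕ} (X : Set (Fin n → ℝ)) (u : (Fin n → ℝ) → ℝ) : Prop :=
  ∀ x ∈ X, ∀ y ∈ X, u x - u y ≤ l1dist x y

/-!
The ℓ¹ distance is the metric of `PiLp 1`, so `u_Z` is the distance to `Z` in a normed space: it is
nonnegative and 1-Lipschitz, and it is convex because `Z` is. For monotonicity, truncation
`v ↦ v ⊓ x` does not increase the ℓ¹ distance; it maps `Z` into `Z` because `Z` is decreasing, and
it sends every `y ≥ x` to `x`, so `x` is at most as far from `Z` as `y` is.
-/

open Metric WithLp

section InfDist

theorem infDist_map_le_of_lipschitzWith_one {α β : Type*} [PseudoMetricSpace α]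
    [PseudoMetricSpace β] {f : α → β} (hf : LipschitzWith 1 f) {s : Set α} {t : Set β}
    (hst : MapsTo f s t) (hs : s.Nonempty) (x : α) : infDist (f x) t ≤ infDist x s :=
  (le_infDist hs).2 fun y hy =>
    (infDist_le_dist_of_mem (hst hy)).trans (by simpa using hf.dist_le_mul x y)

theorem dist_smul_add_smul_le {𝕜 E : Type*} [NormedField 𝕜] [SeminormedAddCommGroup E]
    [NormedSpace 𝕜 E] (a b : 𝕜) (x y z w : E) :
    dist (a • x + b • y) (a • z + b • w) ≤ ‖a‖ * dist x z + ‖b‖ * dist y w := by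
  simpa only [dist_smul₀] using dist_add_add_le (a • x) (b • y) (a • z) (b • w)

theorem convexOn_infDist {E : Type*} [SeminormedAddCommGroup E] [NormedSpace ℝ E] {s : Set E}
    (hs : Convex ℝ s) : ConvexOn ℝ univ fun x => infDist x s := by
  rcases s.eq_empty_or_nonempty with rfl | hne
  · simpa only [infDist_empty] using convexOn_const (0 : ℝ) convex_univ
  refine ⟨convex_univ, fun x _ y _ a b ha hb hab => le_of_forall_pos_le_add fun ε hε => ?_⟩
  obtain ⟨z, hz, hxz⟩ := (infDist_lt_iff hne).1 (lt_add_of_pos_right (infDist x s) hε)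
  obtain ⟨w, hw, hyw⟩ := (infDist_lt_iff hne).1 (lt_add_of_pos_right (infDist y s) hε)
  calc infDist (a • x + b • y) s
      ≤ dist (a • x + b • y) (a • z + b • w) := infDist_le_dist_of_mem (hs hz hw ha hb hab)
    _ ≤ a * dist x z + b * dist y w := by
      simpa only [Real.norm_of_nonneg ha, Real.norm_of_nonneg hb] using
        dist_smul_add_smul_le a b x y z w
    _ ≤ a * (infDist x s + ε) + b * (infDist y s + ε) := by gcongr
    _ = a • infDist x s + b • infDist y s + ε := by
      simp only [smul_eq_mul]
      linear_combination ε * hab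

end InfDist

section ExclusionUtility

variable {n : ℕ}

theorem l1dist_eq_dist_toLp (x y : Fin n → ℝ) : l1dist x y = dist (toLp 1 x) (toLp 1 y) := by
  simp only [l1dist, PiLp.dist_eq_of_L1, Real.dist_eq]

theorem l1dist_inf_inf_le_l1dist (x y z : Fin n → ℝ) :
    l1dist (x ⊓ z) (y ⊓ z) ≤ l1dist x y :=
  Finset.sum_le_sum fun i _ => abs_inf_sub_inf_le_abs (x i) (y i) (z i)

theorem lipschitzWith_one_toLp_inf (x : Fin n → ℝ) :
    LipschitzWith 1 fun v : PiLp 1 fun _ : Fin n => ℝ => toLp 1 (ofLp v ⊓ x) :=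
  LipschitzWith.mk_one fun v w => by
    simpa only [l1dist_eq_dist_toLp] using l1dist_inf_inf_le_l1dist (ofLp v) (ofLp w) x

/-- The utility `u_Z` of the exclusion set `Z`. The minimum over `Z` is encoded as an infimum, so
`Z` may be any set; for `Z = ∅` the value is the junk value `0`. -/
noncomputable def exclusionUtility (Z : Set (Fin n → ℝ)) (x : Fin n → ℝ) : ℝ :=
  sInf ((fun z => l1dist z x) '' Z)

variable {Z : Set (Fin n → ℝ)}

theorem exclusionUtility_eq_infDist (Z : Set (Fin n → ℝ)) (x : Fin n → ℝ) :
    exclusionUtility Z x = infDist (toLp 1 x) (toLp 1 '' Z) := by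
  rw [exclusionUtility, infDist_eq_iInf, ← sInf_image' (f := dist (toLp 1 x)), image_image]
  simp only [l1dist_eq_dist_toLp, dist_comm (toLp 1 x)]

theorem exclusionUtility_nonneg (Z : Set (Fin n → ℝ)) (x : Fin n → ℝ) :
    0 ≤ exclusionUtility Z x :=
  exclusionUtility_eq_infDist Z x ▸ infDist_nonneg

theorem exclusionUtility_sub_le_l1dist (Z : Set (Fin n → ℝ)) (x y : Fin n → ℝ) :
    exclusionUtility Z x - exclusionUtility Z y ≤ l1dist x y := by
  simp only [exclusionUtility_eq_infDist, l1dist_eq_dist_toLp]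
  exact sub_le_iff_le_add'.2 infDist_le_infDist_add_dist

theorem continuous_exclusionUtility (Z : Set (Fin n → ℝ)) : Continuous (exclusionUtility Z) := by
  rw [funext (exclusionUtility_eq_infDist Z)]
  exact (continuous_infDist_pt _).comp (PiLp.continuous_toLp 1 _)

theorem convexOn_exclusionUtility (hZ : Convex ℝ Z) : ConvexOn ℝ univ (exclusionUtility Z) := by
  let toL1 := (WithLp.linearEquiv 1 ℝ (Fin n → ℝ)).symm.toLinearMap
  rw [funext (exclusionUtility_eq_infDist Z)]
  exact (convexOn_infDist (hZ.linear_image toL1)).comp_linearMap toL1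

theorem exclusionUtility_le_of_le {x y : Fin n → ℝ} (hne : Z.Nonempty)
    (hZ : ∀ z ∈ Z, z ⊓ x ∈ Z) (hxy : x ≤ y) : exclusionUtility Z x ≤ exclusionUtility Z y := by
  have hmaps : MapsTo (fun v : PiLp 1 fun _ : Fin n => ℝ => toLp 1 (ofLp v ⊓ x))
      (toLp 1 '' Z) (toLp 1 '' Z) := by
    rintro _ ⟨z, hz, rfl⟩
    exact mem_image_of_mem _ (hZ z hz)
  simpa only [exclusionUtility_eq_infDist, inf_eq_right.2 hxy] using
    infDist_map_le_of_lipschitzWith_one (lipschitzWith_one_toLp_inf x) hmaps (hne.image _)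
      (toLp 1 y)

theorem exclusion_set_utility_feasible_general {X : Set (Fin n → ℝ)} (hXconv : Convex ℝ X)
    (hXinf : InfClosed X) (hZX : Z ⊆ X) (hZconv : Convex ℝ Z) (hZne : Z.Nonempty)
    (hZdec : ∀ x ∈ X, ∀ y ∈ Z, (∀ i, x i ≤ y i) → x ∈ Z) :
    (∀ x, 0 ≤ exclusionUtility Z x) ∧ memU X (exclusionUtility Z) ∧
      memL1 X (exclusionUtility Z) := by
  have hinf : ∀ x ∈ X, ∀ z ∈ Z, z ⊓ x ∈ Z := fun x hx z hz =>
    hZdec _ (hXinf (hZX hz) hx) z hz fun _ => inf_le_left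
  exact ⟨exclusionUtility_nonneg Z,
    ⟨(continuous_exclusionUtility Z).continuousOn,
      fun x hx _ _ hxy => exclusionUtility_le_of_le hZne (hinf x hx) hxy,
      (convexOn_exclusionUtility hZconv).subset (subset_univ X) hXconv⟩,
    fun x _ y _ => exclusionUtility_sub_le_l1dist Z x y⟩

end ExclusionUtility

section Box

theorem infClosed_Icc {α : Type*} [SemilatticeInf α] (a b : α) : InfClosed (Icc a b) :=
  fun _ hx _ hy => ⟨le_inf hx.1 hy.1, inf_le_left.trans hx.2⟩

theorem box_eq_Icc {n : ℕ} (a b : Fin n → ℝ) : box a b = Icc a b :=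
  ext fun _ => forall_and

end Box

/-- **Exclusion-set utilities are feasible.** Let `Z` be an exclusion set of the box `X`
(convex, compact, decreasing, with nonempty interior). The induced utility
`u_Z(x) = min_{z ∈ Z} ‖z − x‖₁` (expressed as an infimum) is nonnegative, coordinatewise
nondecreasing, convex, and 1-Lipschitz w.r.t. the ℓ¹ norm; in particular
`u_Z ∈ 𝒰(X) ∩ ℒ₁(X)`, so it is the utility function of an IC and IR mechanism. -/
theorem exclusion_set_utility_feasible {n : ℕ} (a b : Fin n → ℝ)
    (hab : ∀ i, 0 ≤ a i ∧ a i < b i)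
    (Z : Set (Fin n → ℝ)) (hZX : Z ⊆ box a b)
    (hZconv : Convex ℝ Z) (hZcomp : IsCompact Z)
    (hZdec : ∀ x ∈ box a b, ∀ y ∈ Z, (∀ i, x i ≤ y i) → x ∈ Z)
    (hZint : (interior Z).Nonempty) :
    (∀ x, 0 ≤ sInf ((fun z => l1dist z x) '' Z)) ∧
    memU (box a b) (fun x => sInf ((fun z => l1dist z x) '' Z)) ∧
    memL1 (box a b) (fun x => sInf ((fun z => l1dist z x) '' Z)) := by
  exact exclusion_set_utility_feasible_general (box_eq_Icc a b ▸ convex_Icc a b)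
    (box_eq_Icc a b ▸ infClosed_Icc a b) hZX hZconv (hZint.mono interior_subset) hZdec
end

section
/- Finite unions of bases suffice for dominance on increasing sets: Let g, h : ℝⁿ_{≥0} → ℝ_{≥0} be bounded Lebesgue-integrable functions with ∫_{ℝⁿ_{≥0}} g dx < ∞ and ∫_{ℝⁿ_{≥0}} h dx < ∞. Suppose that for every finite collection Z of points of ℝⁿ_{≥0}, ∫_{⋃_{z ∈ Z} B_z} g(x) dx ≥ ∫_{⋃_{z ∈ Z} B_z} h(x) dx. Then for every Lebesgue-measurable increasing set A ⊆ ℝⁿ_{≥0}, ∫_A g(x) dx ≥ ∫_A h(x) dx. -/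
open MeasureTheory Set

/-- The nonnegative orthant `ℝⁿ_{≥0}`. -/
def orthant (n : ℕ) : Set (Fin n → ℝ) := {x | ∀ i, 0 ≤ x i}

/-- The base rooted at `z`: all points componentwise at least `z`. -/
def base {n : ℕ} (z : Fin n → ℝ) : Set (Fin n → ℝ) := {x | ∀ i, z i ≤ x i}

/-!
Almost every point of an increasing set `A` is interior, because the frontier of `A` is null. The
points of `A` below a given interior point contain a nonempty open set, hence a point of a fixed
countable dense set `D`. So up to a null set `A` is the union of the countably many bases rooted at
`A ∩ D`, and integrals over `A` are limits of integrals over finite unions of these bases.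
-/

open Filter Topology

theorem mem_closure_pi_Iio {ι : Type*} {α : ι → Type*} [∀ i, TopologicalSpace (α i)]
    [∀ i, LinearOrder (α i)] [∀ i, OrderTopology (α i)] [∀ i, DenselyOrdered (α i)]
    [∀ i, NoMinOrder (α i)] (x : ∀ i, α i) : x ∈ closure (univ.pi fun i ↦ Iio (x i)) := by
  simp only [closure_pi_set, closure_Iio, mem_univ_pi, mem_Iic, le_refl, implies_true]

theorem exists_mem_inter_le_of_isOpen_of_dense {ι : Type*} [Finite ι] {α : ι → Type*}
    [∀ i, TopologicalSpace (α i)] [∀ i, LinearOrder (α i)] [∀ i, OrderTopology (α i)]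
    [∀ i, DenselyOrdered (α i)] [∀ i, NoMinOrder (α i)] {D U : Set (∀ i, α i)} (hD : Dense D)
    (hU : IsOpen U) {x : ∀ i, α i} (hx : x ∈ U) : ∃ z ∈ U ∩ D, z ≤ x := by
  have hlt_open : IsOpen (univ.pi fun i ↦ Iio (x i)) :=
    isOpen_set_pi finite_univ fun _ _ ↦ isOpen_Iio
  have hmeet : (U ∩ univ.pi fun i ↦ Iio (x i)).Nonempty :=
    mem_closure_iff.1 (mem_closure_pi_Iio x) U hU hx
  obtain ⟨z, ⟨hzU, hzx⟩, hzD⟩ := hD.inter_open_nonempty _ (hU.inter hlt_open) hmeet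
  exact ⟨z, ⟨hzU, hzD⟩, fun i ↦ (hzx i (mem_univ i)).le⟩

theorem iUnion_Ici_ae_eq_of_isUpperSet {ι : Type*} [Fintype ι] {A D : Set (ι → ℝ)}
    (hA : IsUpperSet A) (hD : Dense D) :
    (⋃ z : ↥(A ∩ D), Ici (z : ι → ℝ)) =ᵐ[volume] A := by
  have hsubset : (⋃ z : ↥(A ∩ D), Ici (z : ι → ℝ)) ⊆ A :=
    iUnion_subset fun z ↦ hA.Ici_subset z.2.1
  have hinterior : interior A ⊆ ⋃ z : ↥(A ∩ D), Ici (z : ι → ℝ) := fun x hx ↦ by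
    obtain ⟨z, ⟨hzA, hzD⟩, hzx⟩ := exists_mem_inter_le_of_isOpen_of_dense hD isOpen_interior hx
    exact mem_iUnion.2 ⟨⟨z, interior_subset hzA, hzD⟩, hzx⟩
  have hA_interior : A =ᵐ[volume] interior A :=
    (interior_ae_eq_of_null_frontier hA.null_frontier).symm
  exact hsubset.eventuallyLE.antisymm (hA_interior.le.trans hinterior.eventuallyLE)

theorem tendsto_setIntegral_biUnion_finset {β X E : Type*} [Countable β] [MeasurableSpace X]
    {μ : Measure X} [NormedAddCommGroup E] [NormedSpace ℝ E] {s : β → Set X} {f : X → E}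
    (hs : ∀ b, MeasurableSet (s b)) (hf : IntegrableOn f (⋃ b, s b) μ) :
    Tendsto (fun Z : Finset β ↦ ∫ x in ⋃ b ∈ Z, s b, f x ∂μ) atTop
      (𝓝 (∫ x in ⋃ b, s b, f x ∂μ)) := by
  rw [iUnion_eq_iUnion_finset] at hf ⊢
  exact tendsto_setIntegral_of_monotone (fun Z ↦ Z.measurableSet_biUnion fun b _ ↦ hs b)
    (fun _ _ hZ ↦ biUnion_subset_biUnion_left hZ) hf

theorem tendsto_setIntegral_biUnion_Ici {ι E : Type*} [Fintype ι] [NormedAddCommGroup E]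
    [NormedSpace ℝ E] {μ : Measure (ι → ℝ)} (hμ : μ ≪ volume) {A D : Set (ι → ℝ)}
    (hA : IsUpperSet A) (hD : Dense D) (hDc : D.Countable) {f : (ι → ℝ) → E}
    (hf : IntegrableOn f A μ) :
    Tendsto (fun Z : Finset ↥(A ∩ D) ↦ ∫ x in ⋃ z ∈ Z, Ici (z : ι → ℝ), f x ∂μ) atTop
      (𝓝 (∫ x in A, f x ∂μ)) := by
  have : Countable ↥(A ∩ D) := (hDc.mono inter_subset_right).to_subtype
  have hae : (⋃ z : ↥(A ∩ D), Ici (z : ι → ℝ)) =ᵐ[μ] A :=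
    hμ.ae_eq (iUnion_Ici_ae_eq_of_isUpperSet hA hD)
  rw [← setIntegral_congr_set hae]
  exact tendsto_setIntegral_biUnion_finset (fun _ ↦ measurableSet_Ici) (hf.congr_set_ae hae)

theorem finite_unions_of_bases_suffice_general {ι E : Type*} [Fintype ι] [NormedAddCommGroup E]
    [NormedSpace ℝ E] [CompleteSpace E] [Preorder E] [OrderClosedTopology E]
    {μ : Measure (ι → ℝ)} (hμ : μ ≪ volume) {A : Set (ι → ℝ)} (hA : IsUpperSet A)
    {g h : (ι → ℝ) → E} (hg : IntegrableOn g A μ) (hh : IntegrableOn h A μ)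
    (hbases : ∀ Z : Finset (ι → ℝ), (Z : Set (ι → ℝ)) ⊆ A →
      (∫ x in ⋃ z ∈ Z, Ici z, h x ∂μ) ≤ ∫ x in ⋃ z ∈ Z, Ici z, g x ∂μ) :
    (∫ x in A, h x ∂μ) ≤ ∫ x in A, g x ∂μ := by
  obtain ⟨D, hDc, hD⟩ := TopologicalSpace.exists_countable_dense (ι → ℝ)
  refine le_of_tendsto_of_tendsto' (tendsto_setIntegral_biUnion_Ici hμ hA hD hDc hh)
    (tendsto_setIntegral_biUnion_Ici hμ hA hD hDc hg) fun Z ↦ ?_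
  classical
  have hroots : ((Z.image (↑) : Finset (ι → ℝ)) : Set (ι → ℝ)) ⊆ A := by
    simp only [Finset.coe_image, image_subset_iff]
    exact fun z _ ↦ z.2.1
  simpa only [Finset.set_biUnion_finset_image] using hbases _ hroots

/-- **Finite unions of bases suffice for dominance on increasing sets.** Let
`g, h : ℝⁿ_{≥0} → ℝ_{≥0}` be bounded Lebesgue-integrable functions. If
`∫_{⋃_{z ∈ Z} B_z} g ≥ ∫_{⋃_{z ∈ Z} B_z} h` for every finite collection `Z` of points of
`ℝⁿ_{≥0}`, then `∫_A g ≥ ∫_A h` for every Lebesgue-measurable increasing set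
`A ⊆ ℝⁿ_{≥0}`. -/
theorem finite_unions_of_bases_suffice {n : ℕ} (g h : (Fin n → ℝ) → ℝ)
    (hg0 : ∀ x, 0 ≤ g x) (hh0 : ∀ x, 0 ≤ h x)
    (hgbd : ∃ C : ℝ, ∀ x, g x ≤ C) (hhbd : ∃ C : ℝ, ∀ x, h x ≤ C)
    (hgint : IntegrableOn g (orthant n) volume)
    (hhint : IntegrableOn h (orthant n) volume)
    (hbases : ∀ Z : Finset (Fin n → ℝ), (Z : Set (Fin n → ℝ)) ⊆ orthant n →
      (∫ x in ⋃ z ∈ (Z : Set (Fin n → ℝ)), base z, h x) ≤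
        ∫ x in ⋃ z ∈ (Z : Set (Fin n → ℝ)), base z, g x) :
    ∀ A : Set (Fin n → ℝ), MeasurableSet A → A ⊆ orthant n →
      (∀ x ∈ A, ∀ y ∈ orthant n, (∀ i, x i ≤ y i) → y ∈ A) →
      (∫ x in A, h x) ≤ ∫ x in A, g x := by
  intro A _ hAo hA
  have hup : IsUpperSet A := fun x y hxy hx ↦
    hA x hx y (fun i ↦ (hAo hx i).trans (hxy i)) hxy
  exact finite_unions_of_bases_suffice_general .rfl hup (hgint.mono_set hAo)
    (hhint.mono_set hAo) fun Z hZ ↦ hbases Z (hZ.trans hAo)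
end

section
/- A sufficient condition for first-order stochastic dominance in the plane: Let 𝒞 = [p₁, q₁) × [p₂, q₂) where q₁, q₂ may be +∞, and let R be a nonempty decreasing subset of 𝒞. Let κ and λ be nonnegative Borel measures on 𝒞 with bounded integrable density functions g, h : 𝒞 → ℝ_{≥0} (with respect to Lebesgue measure) satisfying: (i) g(x,y) = h(x,y) = 0 for all (x,y) ∈ R; (ii) ∫_𝒞 g dx dy = ∫_𝒞 h dx dy < ∞; (iii) for each basis vector e ∈ {(1,0), (0,1)} and every point z ∈ R, ∫_0^{q_i − z_i} (g(z + τe) − h(z + τe)) dτ ≤ 0, where i is the coordinate in which e is nonzero; and (iv) there exist nonnegative functions α : [p₁,q₁) → ℝ_{≥0} and β : [p₂,q₂) → ℝ_{≥0} and a coordinatewise nondecreasing function η : 𝒞 → ℝ such that g(x,y) − h(x,y) = α(x)·β(y)·η(x,y) for all (x,y) ∈ 𝒞 \ R. Then κ ≽₁ λ. -/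
open MeasureTheory Set

/-!
By the layer-cake formula it suffices that `φ = g - h` has nonnegative mass on every upper set `A`.

Replace `R` by its lower closure. Since `α, β ≥ 0` and `η` is nondecreasing, `φ` changes sign at
most once, from `-` to `+`, along every column and row; if that line meets `R`, so that its total
mass is nonpositive, then its mass outside `A` is nonpositive. On a rectangle `E` disjoint from `R`
the product form yields a correlation inequality of Harris type: `A ∩ E` has nonnegative mass or
`E \ A` has nonpositive mass.

Suppose `A` has negative mass, and let `S` be a maximal lower set of abscissae such that the part of
`A` over `S` has nonnegative mass. If some column over `S` misses `R`, the part of `A` to the right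
of `S` lives on columns disjoint from `R` and the correlation inequality shows that its mass is
nonnegative, a contradiction. Otherwise all columns over `S` meet `R`. Let `T` be the set of rows
that `R` meets to the right of `S`. The complement of `A ∪ Sᶜ ×ˢ Tᶜ` consists, up to `R`, of pieces
of columns and rows that meet `R`, so this union has nonnegative mass and the corner cut out of
`Sᶜ ×ˢ Tᶜ` by the complement of `A` has positive mass. The correlation inequality on a rectangle
containing that corner then enlarges `S`, contradicting maximality.
-/

section ProductInequalities

variable {X Y : Type*} [MeasurableSpace X] [MeasurableSpace Y] {μ : Measure X} {ν : Measure Y}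

theorem integral_mul_integral_le_integral_mul_integral {f f' : X → ℝ} {g g' : Y → ℝ}
    (hf : Integrable f μ) (hf' : Integrable f' μ) (hg : Integrable g ν) (hg' : Integrable g' ν)
    (h : ∀ᵐ x ∂μ, ∀ᵐ y ∂ν, f x * g y ≤ f' x * g' y) :
    (∫ x, f x ∂μ) * ∫ y, g y ∂ν ≤ (∫ x, f' x ∂μ) * ∫ y, g' y ∂ν := by
  rw [← integral_mul_const, ← integral_mul_const]
  refine integral_mono_ae (hf.mul_const _) (hf'.mul_const _) ?_
  filter_upwards [h] with x hx
  rw [← integral_const_mul, ← integral_const_mul]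
  exact integral_mono_ae (hg.const_mul _) (hg'.const_mul _) hx

theorem integral_eq_integral_max_sub_integral_max {f : X → ℝ} (hf : Integrable f μ) :
    ∫ x, f x ∂μ = (∫ x, max (f x) 0 ∂μ) - ∫ x, max (-f x) 0 ∂μ := by
  rw [← integral_sub hf.pos_part hf.neg_part]
  simp only [max_zero_sub_max_neg_zero_eq_self]

/-- The planar vectors `(F x, L x)` avoid the open second quadrant, and the cross products keep
them in a half-plane that avoids it as well; hence so does their integral. -/
theorem integral_nonneg_or_integral_nonpos_of_cross_mul_le {F L : X → ℝ} (hF : Integrable F μ)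
    (hL : Integrable L μ) (hFL : ∀ᵐ x ∂μ, 0 ≤ F x ∨ L x ≤ 0)
    (hcross : ∀ᵐ x ∂μ, ∀ᵐ x' ∂μ, F x < 0 → 0 < L x' → F x' * L x ≤ F x * L x') :
    0 ≤ ∫ x, F x ∂μ ∨ ∫ x, L x ∂μ ≤ 0 := by
  by_contra! ⟨hFneg, hLpos⟩
  have hmul : (∫ x, max (-F x) 0 ∂μ) * ∫ x, max (L x) 0 ∂μ ≤
      (∫ x, max (-L x) 0 ∂μ) * ∫ x, max (F x) 0 ∂μ := by
    refine integral_mul_integral_le_integral_mul_integral hF.neg_part hL.neg_part hL.pos_part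
      hF.pos_part ?_
    filter_upwards [hFL, hcross] with x hx hxcross
    filter_upwards [hFL, hxcross] with x' hx' hle
    have hnonneg : 0 ≤ max (-L x) 0 * max (F x') 0 := by positivity
    rcases le_or_gt 0 (F x) with hFx | hFx
    · simpa [hFx] using hnonneg
    rcases le_or_gt (L x') 0 with hLx' | hLx'
    · simpa [hLx'] using hnonneg
    have hLx : L x ≤ 0 := hx.resolve_left hFx.not_ge
    have hFx' : 0 ≤ F x' := hx'.resolve_right hLx'.not_ge
    rw [max_eq_left (by linarith), max_eq_left hLx'.le, max_eq_left (by linarith),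
      max_eq_left hFx']
    linarith [hle hFx hLx']
  rw [integral_eq_integral_max_sub_integral_max hF] at hFneg
  rw [integral_eq_integral_max_sub_integral_max hL] at hLpos
  have hpos : ∀ f : X → ℝ, 0 ≤ ∫ x, max (f x) 0 ∂μ :=
    fun f ↦ integral_nonneg fun x ↦ le_max_right _ _
  refine hmul.not_gt ?_
  rw [mul_comm]
  exact mul_lt_mul'' (by linarith) (by linarith) (hpos _) (hpos _)

end ProductInequalities

section ProductSections

variable {X Y : Type*} [MeasurableSpace X] [MeasurableSpace Y] {μ : Measure X} {ν : Measure Y}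
  [SFinite ν] {φ : X × Y → ℝ} {A : Set (X × Y)}

theorem integrable_setIntegral_prodMk_preimage (hφ : Integrable φ (μ.prod ν))
    (hA : MeasurableSet A) : Integrable (fun x ↦ ∫ y in Prod.mk x ⁻¹' A, φ (x, y) ∂ν) μ :=
  (hφ.indicator hA).integral_prod_left.congr <| .of_forall fun _ ↦
    integral_indicator (measurable_prodMk_left hA)

variable [SFinite μ]

theorem setIntegral_inter_fst_preimage (hφ : Integrable φ (μ.prod ν)) (hA : MeasurableSet A)
    {S : Set X} (hS : MeasurableSet S) :
    ∫ z in A ∩ Prod.fst ⁻¹' S, φ z ∂(μ.prod ν) =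
      ∫ x in S, ∫ y in Prod.mk x ⁻¹' A, φ (x, y) ∂ν ∂μ := by
  have hAS : MeasurableSet (A ∩ Prod.fst ⁻¹' S) := hA.inter (measurable_fst hS)
  rw [← integral_indicator hAS, integral_prod _ (hφ.indicator hAS), ← integral_indicator hS]
  refine integral_congr_ae (.of_forall fun x ↦ ?_)
  refine (integral_indicator (measurable_prodMk_left hAS)).trans ?_
  by_cases hx : x ∈ S
  · have huniv : Prod.mk x ⁻¹' (Prod.fst ⁻¹' S : Set (X × Y)) = univ :=
      eq_univ_of_forall fun _ ↦ hx
    rw [preimage_inter, huniv, inter_univ, indicator_of_mem hx]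
  · have hempty : Prod.mk x ⁻¹' (Prod.fst ⁻¹' S : Set (X × Y)) = ∅ :=
      eq_empty_of_forall_notMem fun _ ↦ hx
    rw [preimage_inter, hempty, inter_empty, setIntegral_empty, indicator_of_notMem hx]

theorem setIntegral_prod_eq_integral_prodMk_preimage (hφ : Integrable φ (μ.prod ν))
    (hA : MeasurableSet A) :
    ∫ z in A, φ z ∂(μ.prod ν) = ∫ x, ∫ y in Prod.mk x ⁻¹' A, φ (x, y) ∂ν ∂μ := by
  simpa using setIntegral_inter_fst_preimage hφ hA MeasurableSet.univ

end ProductSections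

/-- The single-crossing property: going up in the order, `w` never becomes negative again once it
has been positive. -/
def SingleCrossing {X : Type*} [Preorder X] (w : X → ℝ) : Prop :=
  ∀ ⦃x y⦄, x ≤ y → 0 < w x → 0 ≤ w y

namespace SingleCrossing

theorem comp_monotone {X Y : Type*} [Preorder X] [Preorder Y] {w : X → ℝ} (hw : SingleCrossing w)
    {f : Y → X} (hf : Monotone f) : SingleCrossing (w ∘ f) :=
  fun _ _ hxy ↦ hw (hf hxy)

variable {X : Type*} [LinearOrder X] [MeasurableSpace X] {μ : Measure X} {w : X → ℝ} {U : Set X}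

theorem nonpos_of_setIntegral_neg (hw : SingleCrossing w) (hU : IsUpperSet U)
    (hUm : MeasurableSet U) (hneg : ∫ x in U, w x ∂μ < 0) {x : X} (hx : x ∉ U) : w x ≤ 0 := by
  by_contra! hpos
  exact hneg.not_ge <| setIntegral_nonneg hUm fun y hy ↦
    hw (le_of_not_ge fun hyx ↦ hx (hU hyx hy)) hpos

theorem nonneg_of_setIntegral_compl_pos (hw : SingleCrossing w) (hU : IsUpperSet U)
    (hUm : MeasurableSet U) (hpos : 0 < ∫ x in Uᶜ, w x ∂μ) {x : X} (hx : x ∈ U) : 0 ≤ w x := by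
  by_contra! hneg
  refine hpos.not_ge <| setIntegral_nonpos hUm.compl fun y hy ↦ ?_
  by_contra! hy'
  exact hneg.not_ge (hw (le_of_not_ge fun hxy ↦ hy (hU hxy hx)) hy')

theorem setIntegral_nonneg_or_setIntegral_compl_nonpos (hw : SingleCrossing w) (hU : IsUpperSet U)
    (hUm : MeasurableSet U) : 0 ≤ ∫ x in U, w x ∂μ ∨ ∫ x in Uᶜ, w x ∂μ ≤ 0 := by
  refine (le_or_gt _ _).symm.imp_left fun hpos ↦ setIntegral_nonneg hUm fun x hx ↦ ?_
  exact hw.nonneg_of_setIntegral_compl_pos hU hUm hpos hx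

theorem setIntegral_compl_nonpos (hw : SingleCrossing w) (hU : IsUpperSet U)
    (hUm : MeasurableSet U) (hint : Integrable w μ) (htotal : ∫ x, w x ∂μ ≤ 0) :
    ∫ x in Uᶜ, w x ∂μ ≤ 0 := by
  have hsplit := integral_add_compl hUm hint
  rcases hw.setIntegral_nonneg_or_setIntegral_compl_nonpos hU hUm with h | h
  · linarith
  · exact h

end SingleCrossing

/-- The signed density `φ` vanishes on the lower set `R` and equals `α x * β y * η (x, y)` off `R`,
with `α`, `β` nonnegative and `η` nondecreasing. Monotonicity of `η` is only required where
`α x * β y ≠ 0`, so that a factorization on a rectangle extends by zero to the whole product. -/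
structure MonotoneFactorization {X Y : Type*} [Preorder X] [Preorder Y] (R : Set (X × Y))
    (φ : X × Y → ℝ) (α : X → ℝ) (β : Y → ℝ) (η : X × Y → ℝ) : Prop where
  isLowerSet : IsLowerSet R
  eq_zero : ∀ z ∈ R, φ z = 0
  eq_mul : ∀ z ∉ R, φ z = α z.1 * β z.2 * η z
  nonneg_left : ∀ x, 0 ≤ α x
  nonneg_right : ∀ y, 0 ≤ β y
  monotoneOn : MonotoneOn η (α.support ×ˢ β.support)

theorem mul_le_mul_of_mem_Icc {p q r s : ℝ} (hp : p ≤ 0) (hq : 0 ≤ q) (hr : r ∈ Icc p q)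
    (hs : s ∈ Icc p q) : p * q ≤ r * s := by
  rcases le_total 0 r with h | h
  · nlinarith [mul_le_mul_of_nonneg_left hs.1 h, mul_le_mul_of_nonpos_left hr.2 hp]
  · nlinarith [mul_le_mul_of_nonpos_left hs.2 h, mul_le_mul_of_nonneg_right hr.1 hq]

namespace MonotoneFactorization

section Preorder

variable {X Y : Type*} [Preorder X] [Preorder Y] {R : Set (X × Y)} {φ : X × Y → ℝ} {α : X → ℝ}
  {β : Y → ℝ} {η : X × Y → ℝ}

theorem of_prod {I : Set X} {K : Set Y}
    (hR : ∀ a ∈ I ×ˢ K, ∀ b ∈ R, a ≤ b → a ∈ R) (hφR : ∀ z ∈ R, φ z = 0)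
    (hφ : ∀ z ∉ I ×ˢ K, φ z = 0) (hα : ∀ x ∈ I, 0 ≤ α x) (hβ : ∀ y ∈ K, 0 ≤ β y)
    (hη : MonotoneOn η (I ×ˢ K)) (hmul : ∀ z ∈ I ×ˢ K \ R, φ z = α z.1 * β z.2 * η z) :
    MonotoneFactorization (lowerClosure R) φ (I.indicator α) (K.indicator β) η where
  isLowerSet := (lowerClosure R).lower
  eq_zero z := fun ⟨w, hwR, hzw⟩ ↦ by
    by_cases hz : z ∈ I ×ˢ K
    · exact hφR z (hR z hz w hwR hzw)
    · exact hφ z hz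
  eq_mul z hzR := by
    by_cases hz : z ∈ I ×ˢ K
    · rw [indicator_of_mem hz.1, indicator_of_mem hz.2]
      exact hmul z ⟨hz, fun h ↦ hzR (subset_lowerClosure h)⟩
    · rw [hφ z hz]
      rcases not_and_or.1 hz with h | h <;> simp [h]
  nonneg_left := indicator_nonneg hα
  nonneg_right := indicator_nonneg hβ
  monotoneOn := hη.mono <| prod_mono (support_indicator.trans_subset inter_subset_left)
    (support_indicator.trans_subset inter_subset_left)

theorem swap (d : MonotoneFactorization R φ α β η) :
    MonotoneFactorization (Prod.swap ⁻¹' R) (φ ∘ Prod.swap) β α (η ∘ Prod.swap) where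
  isLowerSet _ _ hzw hz := d.isLowerSet (Prod.swap_le_swap.2 hzw) hz
  eq_zero _ hz := d.eq_zero _ hz
  eq_mul z hz := by
    simp only [Function.comp_apply, d.eq_mul z.swap hz, Prod.fst_swap, Prod.snd_swap,
      mul_comm (α z.2)]
  nonneg_left := d.nonneg_right
  nonneg_right := d.nonneg_left
  monotoneOn _ hz _ hw hzw := d.monotoneOn hz.symm hw.symm (Prod.swap_le_swap.2 hzw)

theorem singleCrossing (d : MonotoneFactorization R φ α β η) : SingleCrossing φ := by
  intro z w hzw hz
  have hzR : z ∉ R := fun h ↦ hz.ne' (d.eq_zero z h)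
  have hwR : w ∉ R := fun h ↦ hzR (d.isLowerSet hzw h)
  rw [d.eq_mul z hzR] at hz
  rw [d.eq_mul w hwR]
  have hcoeff : ∀ z : X × Y, 0 ≤ α z.1 * β z.2 :=
    fun z ↦ mul_nonneg (d.nonneg_left _) (d.nonneg_right _)
  obtain ⟨hαz, hβz⟩ : α z.1 ≠ 0 ∧ β z.2 ≠ 0 := mul_ne_zero_iff.1 (left_ne_zero_of_mul hz.ne')
  rcases eq_or_ne (α w.1 * β w.2) 0 with hw | hw
  · rw [hw, zero_mul]
  · have hηzw : η z ≤ η w := d.monotoneOn ⟨hαz, hβz⟩ (mul_ne_zero_iff.1 hw) hzw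
    exact mul_nonneg (hcoeff w) ((pos_of_mul_pos_right hz (hcoeff z)).le.trans hηzw)

theorem singleCrossing_column (d : MonotoneFactorization R φ α β η) (x : X) :
    SingleCrossing fun y ↦ φ (x, y) :=
  d.singleCrossing.comp_monotone fun _ _ ↦ Prod.mk_le_mk_iff_right.2

theorem mul_diagonal_le_mul_antidiagonal (d : MonotoneFactorization R φ α β η) {x x' : X}
    {y y' : Y} (hx : x ≤ x') (hy : y ≤ y') (hR : (x, y) ∉ R) (hnonpos : φ (x, y) ≤ 0)
    (hnonneg : 0 ≤ φ (x', y')) : φ (x, y) * φ (x', y') ≤ φ (x, y') * φ (x', y) := by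
  have hφ {a : X} {b : Y} (ha : x ≤ a) (hb : y ≤ b) : φ (a, b) = α a * β b * η (a, b) :=
    d.eq_mul _ fun h ↦ hR (d.isLowerSet (Prod.mk_le_mk.2 ⟨ha, hb⟩) h)
  rw [hφ le_rfl le_rfl] at hnonpos ⊢
  rw [hφ hx hy] at hnonneg ⊢
  rw [hφ le_rfl hy, hφ hx le_rfl]
  rcases (d.nonneg_left x).eq_or_lt with hα | hα
  · simp [← hα]
  rcases (d.nonneg_left x').eq_or_lt with hα' | hα'
  · simp [← hα']
  rcases (d.nonneg_right y).eq_or_lt with hβ | hβ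
  · simp [← hβ]
  rcases (d.nonneg_right y').eq_or_lt with hβ' | hβ'
  · simp [← hβ']
  have hmono {a a' : X} {b b' : Y} (ha : 0 < α a) (ha' : 0 < α a') (hb : 0 < β b) (hb' : 0 < β b')
      (haa' : a ≤ a') (hbb' : b ≤ b') : η (a, b) ≤ η (a', b') :=
    d.monotoneOn (mk_mem_prod ha.ne' hb.ne') (mk_mem_prod ha'.ne' hb'.ne')
      (Prod.mk_le_mk.2 ⟨haa', hbb'⟩)
  have hη : η (x, y) * η (x', y') ≤ η (x, y') * η (x', y) :=
    mul_le_mul_of_mem_Icc (nonpos_of_mul_nonpos_right hnonpos (mul_pos hα hβ))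
      (nonneg_of_mul_nonneg_right hnonneg (mul_pos hα' hβ'))
      ⟨hmono hα hα hβ hβ' le_rfl hy, hmono hα hα' hβ' hβ' hx le_rfl⟩
      ⟨hmono hα hα' hβ hβ hx le_rfl, hmono hα' hα' hβ hβ' le_rfl hy⟩
  calc α x * β y * η (x, y) * (α x' * β y' * η (x', y'))
      = α x * β y * (α x' * β y') * (η (x, y) * η (x', y')) := by ring
    _ ≤ α x * β y * (α x' * β y') * (η (x, y') * η (x', y)) := by gcongr
    _ = α x * β y' * η (x, y') * (α x' * β y * η (x', y)) := by ring

theorem indicator_prod (d : MonotoneFactorization R φ α β η) {I : Set X} {K : Set Y}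
    (hIK : Disjoint R (I ×ˢ K)) :
    MonotoneFactorization ∅ ((I ×ˢ K).indicator φ) (I.indicator α) (K.indicator β) η where
  isLowerSet := isLowerSet_empty
  eq_zero _ hz := absurd hz (notMem_empty _)
  eq_mul z _ := by
    by_cases hz : z ∈ I ×ˢ K
    · rw [indicator_of_mem hz, indicator_of_mem hz.1, indicator_of_mem hz.2]
      exact d.eq_mul z (hIK.notMem_of_mem_right hz)
    · rw [indicator_of_notMem hz]
      rcases not_and_or.1 hz with h | h <;> simp [h]
  nonneg_left x := indicator_nonneg (fun x _ ↦ d.nonneg_left x) x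
  nonneg_right y := indicator_nonneg (fun y _ ↦ d.nonneg_right y) y
  monotoneOn := d.monotoneOn.mono <| prod_mono
    (support_indicator.trans_subset inter_subset_right)
    (support_indicator.trans_subset inter_subset_right)

theorem singleCrossing_integral_column [MeasurableSpace Y] {ν : Measure Y}
    (d : MonotoneFactorization ∅ φ α β η) : SingleCrossing fun x ↦ ∫ y, φ (x, y) ∂ν := by
  intro x x' hxx' hpos
  have hφ (z : X × Y) : φ z = α z.1 * β z.2 * η z := d.eq_mul z (notMem_empty z)
  have hint : Integrable (fun y ↦ φ (x, y)) ν := .of_integral_ne_zero hpos.ne'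
  have hα : α x ≠ 0 := fun h ↦ hpos.ne' (by simp [hφ, h])
  by_cases hα' : α x' = 0
  · simp [hφ, hα']
  by_cases hint' : Integrable (fun y ↦ φ (x', y)) ν
  · calc
      0 ≤ α x' / α x * ∫ y, φ (x, y) ∂ν :=
        mul_nonneg (div_nonneg (d.nonneg_left _) (d.nonneg_left _)) hpos.le
      _ = ∫ y, α x' / α x * φ (x, y) ∂ν := (integral_const_mul _ _).symm
      _ ≤ ∫ y, φ (x', y) ∂ν := by
        refine integral_mono (hint.const_mul _) hint' fun y ↦ ?_
        simp only [hφ]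
        rcases eq_or_ne (β y) 0 with hβ | hβ
        · simp [hβ]
        have hη : η (x, y) ≤ η (x', y) :=
          d.monotoneOn (mk_mem_prod hα hβ) (mk_mem_prod hα' hβ) (Prod.mk_le_mk_iff_left.2 hxx')
        calc α x' / α x * (α x * β y * η (x, y)) = α x' * β y * η (x, y) := by field_simp
          _ ≤ α x' * β y * η (x', y) :=
            mul_le_mul_of_nonneg_left hη (mul_nonneg (d.nonneg_left _) (d.nonneg_right _))
  · exact (integral_undef hint').ge

end Preorder

section LinearOrder

variable {X Y : Type*} [LinearOrder X] [LinearOrder Y] [MeasurableSpace Y] {ν : Measure Y}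
  {R : Set (X × Y)} {φ : X × Y → ℝ} {α : X → ℝ} {β : Y → ℝ} {η : X × Y → ℝ}

/-- A negative mass above the cut `U` in column `x` forces `φ (x, ·) ≤ 0` below `U`, and a positive
mass below the cut `U'` in column `x'` forces `0 ≤ φ (x', ·)` above `U'`; so enlarging `U` to `U'`
only weakens the left column, and the pointwise inequality across `U'` can be integrated. -/
theorem setIntegral_cross_mul_le_of_le (d : MonotoneFactorization ∅ φ α β η) {x x' : X}
    (hxx' : x ≤ x') {U U' : Set Y} (hU : IsUpperSet U) (hUm : MeasurableSet U)
    (hU' : IsUpperSet U') (hUm' : MeasurableSet U') (hUU' : U ⊆ U')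
    (hx : Integrable (fun y ↦ φ (x, y)) ν) (hx' : Integrable (fun y ↦ φ (x', y)) ν)
    (hneg : ∫ y in U, φ (x, y) ∂ν < 0) (hpos : 0 < ∫ y in U'ᶜ, φ (x', y) ∂ν) :
    (∫ y in U', φ (x', y) ∂ν) * ∫ y in Uᶜ, φ (x, y) ∂ν ≤
      (∫ y in U, φ (x, y) ∂ν) * ∫ y in U'ᶜ, φ (x', y) ∂ν := by
  have hnonpos {y : Y} (hy : y ∉ U) : φ (x, y) ≤ 0 :=
    (d.singleCrossing_column x).nonpos_of_setIntegral_neg hU hUm hneg hy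
  have hnonneg {y : Y} (hy : y ∈ U') : 0 ≤ φ (x', y) :=
    (d.singleCrossing_column x').nonneg_of_setIntegral_compl_pos hU' hUm' hpos hy
  have hstrip : ∫ y in U' \ U, φ (x, y) ∂ν ≤ 0 :=
    setIntegral_nonpos (hUm'.diff hUm) fun y hy ↦ hnonpos hy.2
  have habove : ∫ y in U', φ (x, y) ∂ν ≤ ∫ y in U, φ (x, y) ∂ν := by
    have hsplit := integral_inter_add_sdiff (s := U') hUm hx.integrableOn
    rw [inter_eq_self_of_subset_right hUU'] at hsplit
    linarith
  have hbelow : ∫ y in Uᶜ, φ (x, y) ∂ν ≤ ∫ y in U'ᶜ, φ (x, y) ∂ν := by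
    linarith [integral_add_compl hUm hx, integral_add_compl hUm' hx]
  calc (∫ y in U', φ (x', y) ∂ν) * ∫ y in Uᶜ, φ (x, y) ∂ν
      ≤ (∫ y in U', φ (x', y) ∂ν) * ∫ y in U'ᶜ, φ (x, y) ∂ν :=
        mul_le_mul_of_nonneg_left hbelow (setIntegral_nonneg hUm' fun y hy ↦ hnonneg hy)
    _ ≤ (∫ y in U', φ (x, y) ∂ν) * ∫ y in U'ᶜ, φ (x', y) ∂ν := by
        refine integral_mul_integral_le_integral_mul_integral hx'.integrableOn hx.integrableOn
          hx.integrableOn hx'.integrableOn ?_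
        filter_upwards [ae_restrict_mem hUm'] with y' hy'
        filter_upwards [ae_restrict_mem hUm'.compl] with y hy
        rw [mul_comm]
        exact d.mul_diagonal_le_mul_antidiagonal hxx' (le_of_not_ge fun h ↦ hy (hU' h hy'))
          (notMem_empty _) (hnonpos fun h ↦ hy (hUU' h)) (hnonneg hy')
    _ ≤ (∫ y in U, φ (x, y) ∂ν) * ∫ y in U'ᶜ, φ (x', y) ∂ν :=
        mul_le_mul_of_nonneg_right habove hpos.le

variable [MeasurableSpace X] {μ : Measure X}

theorem setIntegral_cross_mul_le (d : MonotoneFactorization ∅ φ α β η) {A : Set (X × Y)}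
    (hA : IsUpperSet A) (hAm : MeasurableSet A) {x x' : X}
    (hx : Integrable (fun y ↦ φ (x, y)) ν) (hx' : Integrable (fun y ↦ φ (x', y)) ν)
    (hneg : ∫ y in Prod.mk x ⁻¹' A, φ (x, y) ∂ν < 0)
    (hpos : 0 < ∫ y in (Prod.mk x' ⁻¹' A)ᶜ, φ (x', y) ∂ν) :
    (∫ y in Prod.mk x' ⁻¹' A, φ (x', y) ∂ν) * ∫ y in (Prod.mk x ⁻¹' A)ᶜ, φ (x, y) ∂ν ≤
      (∫ y in Prod.mk x ⁻¹' A, φ (x, y) ∂ν) * ∫ y in (Prod.mk x' ⁻¹' A)ᶜ, φ (x', y) ∂ν := by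
  have hupper (x : X) : IsUpperSet (Prod.mk x ⁻¹' A) :=
    hA.preimage fun _ _ ↦ Prod.mk_le_mk_iff_right.2
  have hmeas (x : X) : MeasurableSet (Prod.mk x ⁻¹' A) := measurable_prodMk_left hAm
  rcases le_total x x' with hxx' | hxx'
  · exact d.setIntegral_cross_mul_le_of_le hxx' (hupper x) (hmeas x) (hupper x') (hmeas x')
      (fun y hy ↦ hA (Prod.mk_le_mk_iff_left.2 hxx') hy) hx hx' hneg hpos
  · have hcompl : ∫ y in (Prod.mk x ⁻¹' A)ᶜ, φ (x, y) ∂ν ≤ 0 :=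
      ((d.singleCrossing_column x).setIntegral_nonneg_or_setIntegral_compl_nonpos
        (hupper x) (hmeas x)).resolve_left hneg.not_ge
    have habove : 0 ≤ ∫ y in Prod.mk x' ⁻¹' A, φ (x', y) ∂ν :=
      ((d.singleCrossing_column x').setIntegral_nonneg_or_setIntegral_compl_nonpos
        (hupper x') (hmeas x')).resolve_right hpos.not_ge
    have htotal : 0 < ∫ y, φ (x', y) ∂ν := by
      linarith [integral_add_compl (hmeas x') hx']
    linarith [integral_add_compl (hmeas x) hx, d.singleCrossing_integral_column hxx' htotal]

/-- A Harris-type correlation inequality for a signed density. -/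
theorem setIntegral_nonneg_or_setIntegral_compl_nonpos [SFinite μ] [SFinite ν]
    (d : MonotoneFactorization ∅ φ α β η) (hφ : Integrable φ (μ.prod ν)) {A : Set (X × Y)}
    (hA : IsUpperSet A) (hAm : MeasurableSet A) :
    0 ≤ ∫ z in A, φ z ∂(μ.prod ν) ∨ ∫ z in Aᶜ, φ z ∂(μ.prod ν) ≤ 0 := by
  rw [setIntegral_prod_eq_integral_prodMk_preimage hφ hAm,
    setIntegral_prod_eq_integral_prodMk_preimage hφ hAm.compl]
  refine integral_nonneg_or_integral_nonpos_of_cross_mul_le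
    (integrable_setIntegral_prodMk_preimage hφ hAm)
    (integrable_setIntegral_prodMk_preimage hφ hAm.compl) (.of_forall fun x ↦ ?_) ?_
  · exact (d.singleCrossing_column x).setIntegral_nonneg_or_setIntegral_compl_nonpos
      (hA.preimage fun _ _ ↦ Prod.mk_le_mk_iff_right.2) (measurable_prodMk_left hAm)
  · filter_upwards [hφ.prod_right_ae] with x hx
    filter_upwards [hφ.prod_right_ae] with x' hx'
    exact d.setIntegral_cross_mul_le hA hAm hx hx'

theorem setIntegral_inter_prod_nonneg_or_setIntegral_prod_sdiff_nonpos [SFinite μ] [SFinite ν]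
    (d : MonotoneFactorization R φ α β η) (hφ : Integrable φ (μ.prod ν)) {I : Set X} {K : Set Y}
    (hI : MeasurableSet I) (hK : MeasurableSet K) (hIK : Disjoint R (I ×ˢ K)) {A : Set (X × Y)}
    (hA : IsUpperSet A) (hAm : MeasurableSet A) :
    0 ≤ ∫ z in A ∩ I ×ˢ K, φ z ∂(μ.prod ν) ∨ ∫ z in I ×ˢ K \ A, φ z ∂(μ.prod ν) ≤ 0 := by
  have hIKm : MeasurableSet (I ×ˢ K) := hI.prod hK
  rw [sdiff_eq, inter_comm _ Aᶜ, ← setIntegral_indicator hIKm, ← setIntegral_indicator hIKm]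
  exact (d.indicator_prod hIK).setIntegral_nonneg_or_setIntegral_compl_nonpos
    (hφ.indicator hIKm) hA hAm

end LinearOrder

end MonotoneFactorization

section MaximalLowerSet

variable {μ : Measure ℝ} {F : ℝ → ℝ}

theorem exists_isGreatest_setIntegral_preimage_Iio_nonneg (hF : Integrable F μ) :
    ∃ c, IsGreatest {s : EReal | 0 ≤ ∫ x in Real.toEReal ⁻¹' Iio s, F x ∂μ} c := by
  set Z : Set EReal := {s | 0 ≤ ∫ x in Real.toEReal ⁻¹' Iio s, F x ∂μ}
  have hbot : ⊥ ∈ Z := by simp [Z]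
  obtain ⟨u, hu_mono, hu_tendsto, huZ⟩ := exists_seq_tendsto_sSup ⟨⊥, hbot⟩ (OrderTop.bddAbove Z)
  have hunion : ⋃ n, Real.toEReal ⁻¹' Iio (u n) = Real.toEReal ⁻¹' Iio (sSup Z) := by
    rw [← preimage_iUnion]
    congr 1
    ext x
    simp only [mem_iUnion, mem_Iio, lt_isLUB_iff (isLUB_of_tendsto_atTop hu_mono hu_tendsto),
      exists_range_iff]
  have hlim := tendsto_setIntegral_of_monotone (s := fun n ↦ Real.toEReal ⁻¹' Iio (u n))
    (fun n ↦ measurable_coe_real_ereal measurableSet_Iio)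
    (fun m n hmn ↦ preimage_mono (Iio_subset_Iio (hu_mono hmn))) hF.integrableOn
  rw [hunion] at hlim
  exact ⟨sSup Z, ge_of_tendsto' hlim huZ, fun s hs ↦ le_sSup hs⟩

variable [NullSingletonClass μ]

theorem setIntegral_eq_setIntegral_preimage_Iio {s : EReal} {S : Set ℝ}
    (hs : Real.toEReal ⁻¹' Iio s ⊆ S) (hS : S ⊆ Real.toEReal ⁻¹' Iic s) :
    ∫ x in S, F x ∂μ = ∫ x in Real.toEReal ⁻¹' Iio s, F x ∂μ := by
  have hdiff : (S \ Real.toEReal ⁻¹' Iio s).Subsingleton := fun x hx y hy ↦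
    EReal.coe_injective <|
      (eq_of_le_of_not_lt (hS hx.1) hx.2).trans (eq_of_le_of_not_lt (hS hy.1) hy.2).symm
  exact setIntegral_congr_set <|
    (ae_le_set.2 (hdiff.measure_zero μ)).antisymm hs.eventuallyLE

theorem exists_maximal_isLowerSet_setIntegral_nonneg (hF : Integrable F μ) :
    ∃ S : Set ℝ, Maximal (fun S ↦ IsLowerSet S ∧ 0 ≤ ∫ x in S, F x ∂μ) S := by
  obtain ⟨c, hc, hc_max⟩ := exists_isGreatest_setIntegral_preimage_Iio_nonneg hF
  refine ⟨Real.toEReal ⁻¹' Iic c, ⟨(isLowerSet_Iic c).preimage EReal.coe_strictMono.monotone, ?_⟩,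
    fun S ⟨hS, hnonneg⟩ _ x hx ↦ ?_⟩
  · rw [setIntegral_eq_setIntegral_preimage_Iio (preimage_mono Iio_subset_Iic_self) subset_rfl]
    exact hc
  · have hle : S ⊆ Real.toEReal ⁻¹' Iic (sSup (Real.toEReal '' S)) :=
      fun x hx ↦ le_sSup (mem_image_of_mem Real.toEReal hx)
    have hlt : Real.toEReal ⁻¹' Iio (sSup (Real.toEReal '' S)) ⊆ S := by
      intro x (hx : (x : EReal) < _)
      obtain ⟨_, ⟨y, hy, rfl⟩, hxy⟩ := lt_sSup_iff.1 hx
      exact hS (EReal.coe_lt_coe_iff.1 hxy).le hy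
    rw [setIntegral_eq_setIntegral_preimage_Iio hlt hle] at hnonneg
    exact (hle hx).trans (hc_max hnonneg)

end MaximalLowerSet

section LayerCake

variable {X : Type*} [MeasurableSpace X] {μ : Measure X} [SFinite μ] {f φ : X → ℝ} {M : ℝ}

theorem integral_Ico_setIntegral_superlevel (hφ : Integrable φ μ) (hf : Measurable f)
    (hM : ∀ x, |f x| ≤ M) :
    ∫ t in Ico (-M) M, ∫ x in {x | t < f x}, φ x ∂μ = ∫ x, (f x + M) * φ x ∂μ := by
  have hint : Integrable (fun p : ℝ × X ↦ {p : ℝ × X | p.1 < f p.2}.indicator (φ ∘ Prod.snd) p)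
      ((volume.restrict (Ico (-M) M)).prod μ) :=
    (hφ.comp_snd _).indicator (measurableSet_lt measurable_fst (hf.comp measurable_snd))
  calc ∫ t in Ico (-M) M, ∫ x in {x | t < f x}, φ x ∂μ
      = ∫ t in Ico (-M) M, ∫ x, {x | t < f x}.indicator φ x ∂μ := by
        simp only [integral_indicator (measurableSet_lt measurable_const hf)]
    _ = ∫ x, (∫ t in Ico (-M) M, (Iio (f x)).indicator (fun _ ↦ φ x) t) ∂μ :=
        integral_integral_swap hint
    _ = ∫ x, (f x + M) * φ x ∂μ := by
        refine integral_congr_ae (.of_forall fun x ↦ ?_)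
        obtain ⟨hlow, hhigh⟩ := abs_le.1 (hM x)
        simp only [setIntegral_indicator measurableSet_Iio, Ico_inter_Iio, min_eq_right hhigh,
          setIntegral_const, Real.volume_real_Ico_of_le hlow, sub_neg_eq_add, smul_eq_mul]

theorem integral_mul_nonneg_of_setIntegral_superlevel_nonneg (hφ : Integrable φ μ)
    (hzero : ∫ x, φ x ∂μ = 0) (hf : Measurable f) (hM : ∀ x, |f x| ≤ M)
    (hlevel : ∀ t, 0 ≤ ∫ x in {x | t < f x}, φ x ∂μ) : 0 ≤ ∫ x, f x * φ x ∂μ := by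
  have hfφ : Integrable (fun x ↦ f x * φ x) μ :=
    hφ.bdd_mul hf.aestronglyMeasurable (.of_forall hM)
  calc 0 ≤ ∫ t in Ico (-M) M, ∫ x in {x | t < f x}, φ x ∂μ := integral_nonneg hlevel
    _ = ∫ x, (f x + M) * φ x ∂μ := integral_Ico_setIntegral_superlevel hφ hf hM
    _ = ∫ x, f x * φ x ∂μ := by
      simp only [add_mul, integral_add hfφ (hφ.const_mul M), integral_const_mul, hzero, mul_zero,
        add_zero]

end LayerCake

theorem isUpperSet_union_upperClosure_sdiff {X : Type*} [Preorder X] {A C : Set X}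
    (hC : C.OrdConnected) (hA : ∀ a ∈ A, ∀ b ∈ C, a ≤ b → b ∈ A) (hAC : A ⊆ C) :
    IsUpperSet (A ∪ (↑(upperClosure C) \ C)) := by
  rintro a b hab (ha | ⟨⟨c, hc, hca⟩, ha⟩)
  · by_cases hb : b ∈ C
    · exact .inl (hA a ha b hb hab)
    · exact .inr ⟨⟨a, hAC ha, hab⟩, hb⟩
  · exact .inr ⟨⟨c, hc, hca.trans hab⟩, fun hb ↦ ha (hC.out hc hb ⟨hca, hab⟩)⟩

/-- A monotone factorization of an integrable signed density of total mass zero whose marginal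
masses along the columns and rows that meet `R` are nonpositive. -/
structure BalancedFactorization {X Y : Type*} [Preorder X] [Preorder Y] [MeasurableSpace X]
    [MeasurableSpace Y] (μ : Measure X) (ν : Measure Y) (R : Set (X × Y)) (φ : X × Y → ℝ)
    (α : X → ℝ) (β : Y → ℝ) (η : X × Y → ℝ) : Prop
    extends MonotoneFactorization R φ α β η where
  integrable : Integrable φ (μ.prod ν)
  integral_eq_zero : ∫ z, φ z ∂(μ.prod ν) = 0
  integral_column_nonpos : ∀ z ∈ R, ∫ y, φ (z.1, y) ∂ν ≤ 0
  integral_row_nonpos : ∀ z ∈ R, ∫ x, φ (x, z.2) ∂μ ≤ 0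

namespace BalancedFactorization

section Preorder

variable {X Y : Type*} [Preorder X] [Preorder Y] [MeasurableSpace X] [MeasurableSpace Y]
  {μ : Measure X} {ν : Measure Y} {R : Set (X × Y)} {φ : X × Y → ℝ} {α : X → ℝ} {β : Y → ℝ}
  {η : X × Y → ℝ}

theorem of_prod {I : Set X} {K : Set Y} (d : MonotoneFactorization (lowerClosure R) φ α β η)
    (hRIK : R ⊆ I ×ˢ K) (hR : ∀ a ∈ I ×ˢ K, ∀ b ∈ R, a ≤ b → a ∈ R) (hφ : ∀ z ∉ I ×ˢ K, φ z = 0)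
    (hint : Integrable φ (μ.prod ν)) (hzero : ∫ z, φ z ∂(μ.prod ν) = 0)
    (hcolumn : ∀ z ∈ R, ∫ y, φ (z.1, y) ∂ν ≤ 0) (hrow : ∀ z ∈ R, ∫ x, φ (x, z.2) ∂μ ≤ 0) :
    BalancedFactorization μ ν (lowerClosure R) φ α β η where
  toMonotoneFactorization := d
  integrable := hint
  integral_eq_zero := hzero
  integral_column_nonpos z := fun ⟨w, hwR, hzw⟩ ↦ by
    by_cases hz : z.1 ∈ I
    · exact hcolumn (z.1, w.2) (hR _ ⟨hz, (hRIK hwR).2⟩ w hwR ⟨hzw.1, le_rfl⟩)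
    · exact integral_nonpos fun y ↦ (hφ (z.1, y) fun h ↦ hz h.1).le
  integral_row_nonpos z := fun ⟨w, hwR, hzw⟩ ↦ by
    by_cases hz : z.2 ∈ K
    · exact hrow (w.1, z.2) (hR _ ⟨(hRIK hwR).1, hz⟩ w hwR ⟨le_rfl, hzw.2⟩)
    · exact integral_nonpos fun x ↦ (hφ (x, z.2) fun h ↦ hz h.2).le

theorem swap [SFinite μ] [SFinite ν] (d : BalancedFactorization μ ν R φ α β η) :
    BalancedFactorization ν μ (Prod.swap ⁻¹' R) (φ ∘ Prod.swap) β α (η ∘ Prod.swap) where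
  toMonotoneFactorization := d.toMonotoneFactorization.swap
  integrable := d.integrable.swap
  integral_eq_zero := (integral_prod_swap φ).trans d.integral_eq_zero
  integral_column_nonpos _ hz := d.integral_row_nonpos _ hz
  integral_row_nonpos _ hz := d.integral_column_nonpos _ hz

end Preorder

section LinearOrder

variable {X Y : Type*} [LinearOrder X] [LinearOrder Y] [MeasurableSpace X] [MeasurableSpace Y]
  {μ : Measure X} {ν : Measure Y} [SFinite μ] [SFinite ν] {R : Set (X × Y)} {φ : X × Y → ℝ}
  {α : X → ℝ} {β : Y → ℝ} {η : X × Y → ℝ} {A : Set (X × Y)}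

theorem setIntegral_compl_inter_fst_preimage_nonpos (d : BalancedFactorization μ ν R φ α β η)
    (hA : IsUpperSet A) (hAm : MeasurableSet A) {S : Set X} (hS : MeasurableSet S)
    (hSR : ∀ x ∈ S, ∃ y, (x, y) ∈ R) :
    ∫ z in Aᶜ ∩ Prod.fst ⁻¹' S, φ z ∂(μ.prod ν) ≤ 0 := by
  rw [setIntegral_inter_fst_preimage d.integrable hAm.compl hS]
  refine setIntegral_nonpos_ae hS ?_
  filter_upwards [d.integrable.prod_right_ae] with x hx hxS
  obtain ⟨y, hxy⟩ := hSR x hxS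
  exact (d.singleCrossing_column x).setIntegral_compl_nonpos
    (hA.preimage fun _ _ ↦ Prod.mk_le_mk_iff_right.2) (measurable_prodMk_left hAm) hx
    (d.integral_column_nonpos _ hxy)

theorem setIntegral_compl_inter_snd_preimage_nonpos (d : BalancedFactorization μ ν R φ α β η)
    (hA : IsUpperSet A) (hAm : MeasurableSet A) {T : Set Y} (hT : MeasurableSet T)
    (hTR : ∀ y ∈ T, ∃ x, (x, y) ∈ R) :
    ∫ z in Aᶜ ∩ Prod.snd ⁻¹' T, φ z ∂(μ.prod ν) ≤ 0 := by
  rw [← (Measure.measurePreserving_swap (μ := ν) (ν := μ)).setIntegral_preimage_emb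
    MeasurableEquiv.prodComm.measurableEmbedding φ]
  exact d.swap.setIntegral_compl_inter_fst_preimage_nonpos
    (hA.preimage fun _ _ ↦ Prod.swap_le_swap.2) (measurable_swap hAm) hT hTR

theorem setIntegral_nonneg_of_compl_prod_compl_subset (d : BalancedFactorization μ ν R φ α β η)
    (hA : IsUpperSet A) (hAm : MeasurableSet A) {S : Set X} {T : Set Y} (hS : MeasurableSet S)
    (hT : MeasurableSet T) (hSR : ∀ x ∈ S, ∃ y, (x, y) ∈ R) (hTR : ∀ y ∈ T, ∃ x, (x, y) ∈ R)
    (hST : S ×ˢ T ⊆ R) (hSTA : Sᶜ ×ˢ Tᶜ ⊆ A) : 0 ≤ ∫ z in A, φ z ∂(μ.prod ν) := by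
  have hcolumns := d.setIntegral_compl_inter_fst_preimage_nonpos hA hAm hS hSR
  have hrest : ∫ z in Aᶜ \ Prod.fst ⁻¹' S, φ z ∂(μ.prod ν) =
      ∫ z in Aᶜ ∩ Prod.snd ⁻¹' T, φ z ∂(μ.prod ν) := by
    refine (setIntegral_eq_of_subset_of_forall_sdiff_eq_zero
      (hAm.compl.inter (measurable_snd hT)) (fun z hz ↦ ⟨hz.1, ?_⟩) fun z hz ↦ ?_).symm
    · by_contra hzT
      exact hz.1 (hSTA ⟨hz.2, hzT⟩)
    · refine d.eq_zero z (hST ⟨?_, hz.1.2⟩)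
      by_contra hzS
      exact hz.2 ⟨hz.1.1, hzS⟩
  linarith [d.setIntegral_compl_inter_snd_preimage_nonpos hA hAm hT hTR,
    integral_inter_add_sdiff (s := Aᶜ) (measurable_fst hS) d.integrable.integrableOn,
    integral_add_compl hAm d.integrable, d.integral_eq_zero]

end LinearOrder

section OrderTopology

variable {X Y : Type*} [LinearOrder X] [TopologicalSpace X] [OrderTopology X]
  [MeasurableSpace X] [BorelSpace X] [LinearOrder Y] [MeasurableSpace Y] {μ : Measure X}
  {ν : Measure Y} [SFinite μ] [SFinite ν] {R : Set (X × Y)}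
  {φ : X × Y → ℝ} {α : X → ℝ} {β : Y → ℝ} {η : X × Y → ℝ} {A : Set (X × Y)}

theorem setIntegral_nonneg_of_forall_column_disjoint (d : BalancedFactorization μ ν R φ α β η)
    (hA : IsUpperSet A) (hAm : MeasurableSet A) (hAR : ∀ z ∈ A, ∀ y, (z.1, y) ∉ R) :
    0 ≤ ∫ z in A, φ z ∂(μ.prod ν) := by
  let S : Set X := {x | ∃ y, (x, y) ∈ R}
  have hS : IsLowerSet S := fun x x' hxx' ⟨y, hy⟩ ↦
    ⟨y, d.isLowerSet (Prod.mk_le_mk_iff_left.2 hxx') hy⟩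
  have hSm : MeasurableSet S := hS.ordConnected.measurableSet
  have hQR : Disjoint R (Sᶜ ×ˢ univ) := disjoint_left.2 fun z hz hzQ ↦ hzQ.1 ⟨z.2, hz⟩
  have hAQ : A ⊆ Sᶜ ×ˢ univ := fun z hz ↦ ⟨fun ⟨y, hy⟩ ↦ hAR z hz y hy, mem_univ _⟩
  have hQ : 0 ≤ ∫ z in Sᶜ ×ˢ univ, φ z ∂(μ.prod ν) :=
    d.setIntegral_nonneg_of_compl_prod_compl_subset (hS.compl.prod isUpperSet_univ)
      (hSm.compl.prod .univ) hSm .empty (fun _ hx ↦ hx) (by simp) (by simp) (by simp)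
  have hsplit := integral_inter_add_sdiff (s := Sᶜ ×ˢ univ) hAm d.integrable.integrableOn
  have hharris := d.setIntegral_inter_prod_nonneg_or_setIntegral_prod_sdiff_nonpos d.integrable
    hSm.compl .univ hQR hA hAm
  rw [inter_eq_self_of_subset_right hAQ] at hsplit
  rw [inter_eq_self_of_subset_left hAQ] at hharris
  rcases hharris with h | h
  · exact h
  · linarith

variable [TopologicalSpace Y] [OrderTopology Y] [BorelSpace Y]

/-- Let `T` be the rows that `R` meets to the right of `S`. The region `Sᶜ ×ˢ Tᶜ \ A` has positive
mass, since adding it to `A` makes the mass nonnegative. It is the part outside `A` of a rectangle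
`(K \ S) ×ˢ Tᶜ` disjoint from `R`, so the part of that rectangle inside `A` has nonnegative mass. -/
theorem exists_isLowerSet_setIntegral_inter_fst_preimage_sdiff_nonneg
    (d : BalancedFactorization μ ν R φ α β η) (hA : IsUpperSet A) (hAm : MeasurableSet A)
    (hneg : ∫ z in A, φ z ∂(μ.prod ν) < 0) {S : Set X} (hS : IsLowerSet S)
    (hSR : ∀ x ∈ S, ∃ y, (x, y) ∈ R) :
    ∃ K : Set X, IsLowerSet K ∧ ¬ K ⊆ S ∧
      0 ≤ ∫ z in A ∩ Prod.fst ⁻¹' (K \ S), φ z ∂(μ.prod ν) := by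
  let T : Set Y := {y | ∃ x ∉ S, (x, y) ∈ R}
  let K : Set X := {x | ∀ y ∈ T, (x, y) ∉ A}
  have hT : IsLowerSet T := fun y y' hyy' ⟨x, hx, hxy⟩ ↦
    ⟨x, hx, d.isLowerSet (Prod.mk_le_mk_iff_right.2 hyy') hxy⟩
  have hK : IsLowerSet K := fun x x' hxx' hx y hy hxy ↦
    hx y hy (hA (Prod.mk_le_mk_iff_left.2 hxx') hxy)
  have hSm : MeasurableSet S := hS.ordConnected.measurableSet
  have hTm : MeasurableSet T := hT.ordConnected.measurableSet
  have hKSm : MeasurableSet (K \ S) := hK.ordConnected.measurableSet.diff hSm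
  have hunion : 0 ≤ ∫ z in A ∪ Sᶜ ×ˢ Tᶜ, φ z ∂(μ.prod ν) :=
    d.setIntegral_nonneg_of_compl_prod_compl_subset (hA.union (hS.compl.prod hT.compl))
      (hAm.union (hSm.compl.prod hTm.compl)) hSm hTm hSR (fun y ⟨x, _, hxy⟩ ↦ ⟨x, hxy⟩)
      (fun z ⟨hzS, x, hx, hxy⟩ ↦ d.isLowerSet
        (Prod.mk_le_mk_iff_left.2 (le_of_not_ge fun h ↦ hx (hS h hzS))) hxy) subset_union_right
  have hcorner : Sᶜ ×ˢ Tᶜ \ A = (K \ S) ×ˢ Tᶜ \ A := by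
    ext z
    refine ⟨fun ⟨⟨hzS, hzT⟩, hzA⟩ ↦ ⟨⟨⟨fun y hy hyA ↦ hzA ?_, hzS⟩, hzT⟩, hzA⟩,
      fun ⟨⟨⟨_, hzS⟩, hzT⟩, hzA⟩ ↦ ⟨⟨hzS, hzT⟩, hzA⟩⟩
    exact hA (Prod.mk_le_mk_iff_right.2 (le_of_not_ge fun h ↦ hzT (hT h hy))) hyA
  have hpos : 0 < ∫ z in (K \ S) ×ˢ Tᶜ \ A, φ z ∂(μ.prod ν) := by
    rw [← union_sdiff_self, setIntegral_union disjoint_sdiff_right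
      ((hSm.compl.prod hTm.compl).diff hAm) d.integrable.integrableOn d.integrable.integrableOn,
      hcorner] at hunion
    linarith
  have hpart : A ∩ Prod.fst ⁻¹' (K \ S) = A ∩ (K \ S) ×ˢ Tᶜ :=
    ext fun z ↦ ⟨fun ⟨hzA, hzKS⟩ ↦ ⟨hzA, hzKS, fun hzT ↦ hzKS.1 z.2 hzT hzA⟩,
      fun ⟨hzA, hzKS, _⟩ ↦ ⟨hzA, hzKS⟩⟩
  refine ⟨K, hK, fun hKS ↦ hpos.ne' ?_, ?_⟩
  · rw [sdiff_eq_empty.2 hKS, empty_prod, empty_sdiff, setIntegral_empty]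
  · rw [hpart]
    refine (d.setIntegral_inter_prod_nonneg_or_setIntegral_prod_sdiff_nonpos d.integrable hKSm
      hTm.compl ?_ hA hAm).resolve_right hpos.not_ge
    exact disjoint_left.2 fun z hzR hz ↦ hz.2 ⟨z.1, hz.1.2, hzR⟩

end OrderTopology

section Real

variable {Y : Type*} [LinearOrder Y] [TopologicalSpace Y] [OrderTopology Y] [MeasurableSpace Y]
  [BorelSpace Y] {μ : Measure ℝ} [SFinite μ] [NullSingletonClass μ] {ν : Measure Y} [SFinite ν]
  {R : Set (ℝ × Y)} {φ : ℝ × Y → ℝ} {α : ℝ → ℝ} {β : Y → ℝ} {η : ℝ × Y → ℝ}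

theorem setIntegral_nonneg_of_isUpperSet (d : BalancedFactorization μ ν R φ α β η)
    {A : Set (ℝ × Y)} (hA : IsUpperSet A) (hAm : MeasurableSet A) :
    0 ≤ ∫ z in A, φ z ∂(μ.prod ν) := by
  by_contra! hneg
  obtain ⟨S, ⟨hS, hSnonneg⟩, hSmax⟩ := exists_maximal_isLowerSet_setIntegral_nonneg
    (integrable_setIntegral_prodMk_preimage d.integrable hAm)
  have hSm : MeasurableSet S := hS.ordConnected.measurableSet
  have hSR : ∀ x ∈ S, ∃ y, (x, y) ∈ R := by
    by_contra! ⟨x, hxS, hxR⟩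
    have hright : 0 ≤ ∫ z in A \ Prod.fst ⁻¹' S, φ z ∂(μ.prod ν) :=
      d.setIntegral_nonneg_of_forall_column_disjoint
        (hA.inter (hS.compl.preimage monotone_fst)) (hAm.diff (measurable_fst hSm))
        fun z hz y hzy ↦ hxR y <| d.isLowerSet
          (Prod.mk_le_mk_iff_left.2 (le_of_not_ge fun h ↦ hz.2 (hS h hxS))) hzy
    rw [← setIntegral_inter_fst_preimage d.integrable hAm hSm] at hSnonneg
    linarith [integral_inter_add_sdiff (s := A) (measurable_fst hSm) d.integrable.integrableOn]
  obtain ⟨K, hK, hKS, hKnonneg⟩ :=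
    d.exists_isLowerSet_setIntegral_inter_fst_preimage_sdiff_nonneg hA hAm hneg hS hSR
  have hKSm : MeasurableSet (K \ S) := hK.ordConnected.measurableSet.diff hSm
  rw [setIntegral_inter_fst_preimage d.integrable hAm hKSm] at hKnonneg
  refine hKS (subset_union_right.trans (hSmax ⟨hS.union hK, ?_⟩ subset_union_left))
  have hint := integrable_setIntegral_prodMk_preimage d.integrable hAm
  rw [← union_sdiff_self, setIntegral_union disjoint_sdiff_right hKSm hint.integrableOn
    hint.integrableOn]
  exact add_nonneg hSnonneg hKnonneg

theorem integral_mul_nonneg (d : BalancedFactorization μ ν R φ α β η) {I : Set ℝ}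
    {K : Set Y} (hI : I.OrdConnected) (hK : K.OrdConnected) (hφ : ∀ z ∉ I ×ˢ K, φ z = 0)
    {f : ℝ × Y → ℝ} (hf : Measurable f) (hfM : ∃ M, ∀ z, |f z| ≤ M)
    (hmono : MonotoneOn f (I ×ˢ K)) :
    0 ≤ ∫ z, f z * φ z ∂(μ.prod ν) := by
  obtain ⟨M, hM⟩ := hfM
  refine integral_mul_nonneg_of_setIntegral_superlevel_nonneg d.integrable d.integral_eq_zero hf hM
    fun t ↦ ?_
  have hC : MeasurableSet (I ×ˢ K) := hI.measurableSet.prod hK.measurableSet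
  have hCord : (I ×ˢ K).OrdConnected :=
    (hI.preimage_mono monotone_fst).inter (hK.preimage_mono monotone_snd)
  have hCup : MeasurableSet (↑(upperClosure (I ×ˢ K)) : Set (ℝ × Y)) := by
    rw [upperClosure_prod]
    exact (upperClosure I).upper.ordConnected.measurableSet.prod
      (upperClosure K).upper.ordConnected.measurableSet
  have hlevel : MeasurableSet ({z | t < f z} ∩ I ×ˢ K) :=
    (measurableSet_lt measurable_const hf).inter hC
  calc 0 ≤ ∫ z in {z | t < f z} ∩ I ×ˢ K ∪ (↑(upperClosure (I ×ˢ K)) \ I ×ˢ K), φ z ∂(μ.prod ν) :=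
        d.setIntegral_nonneg_of_isUpperSet
          (isUpperSet_union_upperClosure_sdiff hCord
            (fun a ha b hb hab ↦ ⟨ha.1.trans_le (hmono ha.2 hb hab), hb⟩) inter_subset_right)
          (hlevel.union (hCup.diff hC))
    _ = ∫ z in {z | t < f z} ∩ I ×ˢ K, φ z ∂(μ.prod ν) :=
        setIntegral_eq_of_subset_of_forall_sdiff_eq_zero (hlevel.union (hCup.diff hC))
          subset_union_left fun z hz ↦ hφ z fun h ↦ hz.1.elim hz.2 fun h' ↦ h'.2 h
    _ = ∫ z in {z | t < f z}, φ z ∂(μ.prod ν) :=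
        (setIntegral_eq_of_subset_of_forall_sdiff_eq_zero (measurableSet_lt measurable_const hf)
          inter_subset_left fun z hz ↦ hφ z fun h ↦ hz.2 ⟨hz.1, h⟩).symm

end Real

end BalancedFactorization

theorem setIntegral_ray_eq_integral {w : ℝ → ℝ} {b : ℝ} {S : Set ℝ} (hbelow : ∀ x < b, w x = 0)
    (hS : ∀ x ∉ S, w x = 0) : ∫ τ in {τ | 0 ≤ τ ∧ b + τ ∈ S}, w (b + τ) = ∫ x, w x := by
  rw [setIntegral_eq_integral_of_forall_compl_eq_zero, integral_add_left_eq_self]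
  intro τ hτ
  rcases not_and_or.1 hτ with h | h
  · exact hbelow _ (by linarith)
  · exact hS _ h

theorem plane_fosd_sufficient_general {I K : Set ℝ} (hI : I.OrdConnected) (hK : K.OrdConnected)
    {R : Set (ℝ × ℝ)} (hRC : R ⊆ I ×ˢ K) (hR : ∀ a ∈ I ×ˢ K, ∀ b ∈ R, a ≤ b → a ∈ R)
    {g h : ℝ × ℝ → ℝ} (hg : Integrable g) (hh : Integrable h) (hghR : ∀ z ∈ R, g z = h z)
    (hgh : ∀ z ∉ I ×ˢ K, g z = h z) (heq : ∫ z, g z = ∫ z, h z)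
    (hrow : ∀ z ∈ R, ∫ τ in {τ | 0 ≤ τ ∧ (z.1 + τ, z.2) ∈ I ×ˢ K},
      (g (z.1 + τ, z.2) - h (z.1 + τ, z.2)) ≤ 0)
    (hcolumn : ∀ z ∈ R, ∫ τ in {τ | 0 ≤ τ ∧ (z.1, z.2 + τ) ∈ I ×ˢ K},
      (g (z.1, z.2 + τ) - h (z.1, z.2 + τ)) ≤ 0)
    {α β : ℝ → ℝ} {η : ℝ × ℝ → ℝ} (hα : ∀ x ∈ I, 0 ≤ α x) (hβ : ∀ y ∈ K, 0 ≤ β y)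
    (hη : MonotoneOn η (I ×ˢ K)) (hmul : ∀ z ∈ I ×ˢ K \ R, g z - h z = α z.1 * β z.2 * η z)
    {f : ℝ × ℝ → ℝ} (hf : Measurable f) (hfM : ∃ M, ∀ z, |f z| ≤ M)
    (hmono : MonotoneOn f (I ×ˢ K)) : ∫ z, f z * h z ≤ ∫ z, f z * g z := by
  have hoff (z) (hz : z ∉ I ×ˢ K) : g z - h z = 0 := sub_eq_zero.2 (hgh z hz)
  have hfact := MonotoneFactorization.of_prod hR (fun z hz ↦ sub_eq_zero.2 (hghR z hz)) hoff
    hα hβ hη hmul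
  have hzero : ∫ z, (g z - h z) = 0 := by rw [integral_sub hg hh, heq, sub_self]
  have hbalanced : BalancedFactorization volume volume (lowerClosure R) (fun z ↦ g z - h z)
      (I.indicator α) (K.indicator β) η := by
    refine .of_prod hfact hRC hR hoff (hg.sub hh) hzero (fun z hz ↦ ?_) fun z hz ↦ ?_
    · rw [← setIntegral_ray_eq_integral (b := z.2) (S := {y | (z.1, y) ∈ I ×ˢ K})
        (fun y hy ↦ hfact.eq_zero (z.1, y) ⟨z, hz, le_rfl, hy.le⟩) fun y hy ↦ hoff (z.1, y) hy]
      exact hcolumn z hz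
    · rw [← setIntegral_ray_eq_integral (b := z.1) (S := {x | (x, z.2) ∈ I ×ˢ K})
        (fun x hx ↦ hfact.eq_zero (x, z.2) ⟨z, hz, hx.le, le_rfl⟩) fun x hx ↦ hoff (x, z.2) hx]
      exact hrow z hz
  have hnonneg : 0 ≤ ∫ z, f z * (g z - h z) :=
    hbalanced.integral_mul_nonneg hI hK hoff hf hfM hmono
  obtain ⟨M, hM⟩ := hfM
  simp only [mul_sub] at hnonneg
  rwa [integral_sub (hg.bdd_mul hf.aestronglyMeasurable (.of_forall hM))
    (hh.bdd_mul hf.aestronglyMeasurable (.of_forall hM)), sub_nonneg] at hnonneg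

/-- **A sufficient condition for first-order stochastic dominance in the plane.** Let
`𝒞 = [p₁,q₁) × [p₂,q₂)` (the upper endpoints `q₁, q₂ : EReal` may be `+∞`), let `R` be a
nonempty decreasing subset of `𝒞`, and let `κ, λ` be the measures with bounded integrable
densities `g, h ≥ 0` vanishing outside `𝒞`. Assume: (i) `g = h = 0` on `R`; (ii)
`∫_𝒞 g = ∫_𝒞 h < ∞`; (iii) integrating `g − h` rightwards or upwards from any point of `R`
to the boundary gives a nonpositive value; (iv) `g − h = α(x)·β(y)·η(x,y)` on `𝒞 \ R` with
`α, β ≥ 0` and `η` coordinatewise nondecreasing. Then `κ ≽₁ λ`: for every bounded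
measurable coordinatewise nondecreasing `f` on `𝒞`, `∫ f·g ≥ ∫ f·h`. -/
theorem plane_fosd_sufficient (p₁ p₂ : ℝ) (q₁ q₂ : EReal)
    (hq₁ : (p₁ : EReal) < q₁) (hq₂ : (p₂ : EReal) < q₂)
    (C : Set (ℝ × ℝ))
    (hC : C = {z | p₁ ≤ z.1 ∧ (z.1 : EReal) < q₁ ∧ p₂ ≤ z.2 ∧ (z.2 : EReal) < q₂})
    (R : Set (ℝ × ℝ)) (hRC : R ⊆ C) (hRne : R.Nonempty)
    (hRdec : ∀ a ∈ C, ∀ b ∈ R, a.1 ≤ b.1 → a.2 ≤ b.2 → a ∈ R)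
    (g h : ℝ × ℝ → ℝ) (hgm : Measurable g) (hhm : Measurable h)
    (hg0 : ∀ z, 0 ≤ g z) (hh0 : ∀ z, 0 ≤ h z)
    (hgbd : ∃ M : ℝ, ∀ z, g z ≤ M) (hhbd : ∃ M : ℝ, ∀ z, h z ≤ M)
    (hgC : ∀ z ∉ C, g z = 0) (hhC : ∀ z ∉ C, h z = 0)
    (hgint : Integrable g) (hhint : Integrable h)
    -- (i)
    (hR0 : ∀ z ∈ R, g z = 0 ∧ h z = 0)
    -- (ii)
    (heq : (∫ z, g z) = ∫ z, h z)
    -- (iii)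
    (hline₁ : ∀ z ∈ R,
      (∫ τ in {τ : ℝ | 0 ≤ τ ∧ ((z.1 + τ, z.2) : ℝ × ℝ) ∈ C},
        (g (z.1 + τ, z.2) - h (z.1 + τ, z.2))) ≤ 0)
    (hline₂ : ∀ z ∈ R,
      (∫ τ in {τ : ℝ | 0 ≤ τ ∧ ((z.1, z.2 + τ) : ℝ × ℝ) ∈ C},
        (g (z.1, z.2 + τ) - h (z.1, z.2 + τ))) ≤ 0)
    -- (iv)
    (hfactor : ∃ (α β : ℝ → ℝ) (η : ℝ × ℝ → ℝ),
      (∀ t, 0 ≤ α t) ∧ (∀ t, 0 ≤ β t) ∧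
      (∀ z ∈ C, ∀ w ∈ C, z.1 ≤ w.1 → z.2 ≤ w.2 → η z ≤ η w) ∧
      ∀ z ∈ C \ R, g z - h z = α z.1 * β z.2 * η z) :
    ∀ f : ℝ × ℝ → ℝ, Measurable f → (∃ M : ℝ, ∀ z, |f z| ≤ M) →
      (∀ z ∈ C, ∀ w ∈ C, z.1 ≤ w.1 → z.2 ≤ w.2 → f z ≤ f w) →
      (∫ z, f z * h z) ≤ ∫ z, f z * g z := by
  have hbox : C = (Real.toEReal ⁻¹' Ico ↑p₁ q₁) ×ˢ (Real.toEReal ⁻¹' Ico ↑p₂ q₂) := by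
    ext z
    simp [hC, and_assoc]
  subst hbox
  obtain ⟨α, β, η, hα, hβ, hη, hmul⟩ := hfactor
  intro f hf hfM hmono
  have hord (p q : EReal) : (Real.toEReal ⁻¹' Ico p q).OrdConnected :=
    ordConnected_Ico.preimage_mono EReal.coe_strictMono.monotone
  exact plane_fosd_sufficient_general (hord _ _) (hord _ _) hRC
    (fun a ha b hb hab ↦ hRdec a ha b hb hab.1 hab.2) hgint hhint
    (fun z hz ↦ (hR0 z hz).1.trans (hR0 z hz).2.symm)
    (fun z hz ↦ (hgC z hz).trans (hhC z hz).symm) heq hline₁ hline₂ (fun x _ ↦ hα x)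
    (fun y _ ↦ hβ y) (fun z hz w hw hzw ↦ hη z hz w hw hzw.1 hzw.2) hmul hf hfM
    fun z hz w hw hzw ↦ hmono z hz w hw hzw.1 hzw.2
end
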